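/- If 1 − |α| < |λ| < 1 + |α|, then for every θ ∈ ℝ there exist E₁, E₂ ∈ σ(H_{α,θ,b}) with L(E₁) > 0 and L(E₂) = 0; that is, zero Lyapunov exponent and positive Lyapunov exponent coexist in the spectrum. -/

import Mathlib

open scoped Real

/-- The quasi-periodic potential `v(x) = 2λcos(2πx)/(1 - αcos(2πx))`. -/
noncomputable def potV (α lam : ℝ) (x : ℝ) : ℝ :=
  2 * lam * Real.cos (2 * Real.pi * x) / (1 - α * Real.cos (2 * Real.pi * x))

/-- One-step transfer matrix `A(x,z) = [[z - V x, -1],[1,0]]`. -/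
noncomputable def tMat (V : ℝ → ℝ) (x : ℝ) (z : ℂ) : Matrix (Fin 2) (Fin 2) ℂ :=
  !![z - (V x : ℝ), -1; 1, 0]

/-- The `n`-step transfer matrix `A_n(x,z) = A(x+(n-1)b,z) ⋯ A(x+b,z) A(x,z)`. -/
noncomputable def tProd (V : ℝ → ℝ) (b : ℝ) (n : ℕ) (x : ℝ) (z : ℂ) :
    Matrix (Fin 2) (Fin 2) ℂ :=
  (((List.range n).reverse).map (fun j => tMat V (x + (j : ℝ) * b) z)).prod

/-- The operator norm of a 2×2 complex matrix, acting on the Euclidean space `ℂ²`. -/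
noncomputable def opNorm2 (M : Matrix (Fin 2) (Fin 2) ℂ) : ℝ :=
  ‖Matrix.toEuclideanCLM (𝕜 := ℂ) M‖

/-- The Lyapunov exponent `L(z) = lim_n (1/n)∫₀¹ log‖A_n(x,z)‖ dx`; the limit exists and
equals `inf_{n ≥ 1} (1/n)∫₀¹ log‖A_n(x,z)‖ dx` by subadditivity, so we take that as the
definition. -/
noncomputable def lyap (V : ℝ → ℝ) (b : ℝ) (z : ℂ) : ℝ :=
  ⨅ n : ℕ+, ((n : ℝ))⁻¹ * ∫ x in (0:ℝ)..(1:ℝ), Real.log (opNorm2 (tProd V b n x z))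

/-- `IsSchrodingerOp V b θ H` says that `H` is the bounded operator on `ℓ²(ℤ)` given by
`(Hu)ₙ = u_{n+1} + u_{n-1} + V(nb+θ)uₙ`. -/
def IsSchrodingerOp (V : ℝ → ℝ) (b θ : ℝ)
    (H : lp (fun _ : ℤ => ℂ) 2 →L[ℂ] lp (fun _ : ℤ => ℂ) 2) : Prop :=
  ∀ u : lp (fun _ : ℤ => ℂ) 2, ∀ n : ℤ,
    (H u : ∀ _ : ℤ, ℂ) n = (u : ∀ _ : ℤ, ℂ) (n + 1) + (u : ∀ _ : ℤ, ℂ) (n - 1)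
      + (V ((n : ℝ) * b + θ) : ℂ) * (u : ∀ _ : ℤ, ℂ) n

/-!
Multiplied by `e^{2πix} (1 - α cos(2πx))`, the transfer matrix is a quadratic polynomial in
`z = e^{2πix}`, so its `n`-step product is a polynomial `P(z)` of degree `2n` whose size on the
unit circle is `κⁿ ‖A_n‖` up to `e^{o(n)}`, where `log κ = ∫₀¹ log (1 - α cos(2πx)) dx`. The
constant coefficient of one step has trace `-(αE + 2λ) / 2` and determinant `α² / 4`.

If `|αE + 2λ| > 2`, that matrix has an eigenvalue of modulus larger than `κ`, and the maximum
principle, comparing `P(0)` with `P` on the unit circle, gives `L(E) > 0`.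

If `|αE + 2λ| < 2`, both eigenvalues have modulus at most `κ`, so `|P| ≤ (R²κ)ⁿ e^{o(n)}` on a large
circle `|z| = R`. Suppose moreover that `E` has a polynomially bounded generalized eigenfunction
over a non-resonant phase `x`, and that `L = L(E) > 0`. Expressing `u 0 = 1` through the values of
the eigenfunction `u` just outside a box of length `n` around the origin shows that the `(0, 0)`
entry of `A_n` is at most `e^{n((1 - δ)L + o(1))}` at the base point of the box and, by reflection
symmetry, at a second phase. Letting the box slide gives nearly `2n` phases, and Lagrange
interpolation of `P` at the corresponding points of the unit circle, with the growth on `|z| = R`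
controlling the remainder, extends a bound `e^{n(L - γ)}` to every phase. Since `L` is an infimum of
averages of `n⁻¹ log ‖A_n‖`, this is impossible; hence `L = 0`.

Energies with polynomially bounded generalized eigenfunctions are obtained from eigenvectors of
finite truncations and belong to the spectrum. The choice of the phase places them on either side of
`|αE + 2λ| = 2`, because `αv + 2λ = 2λ / (1 - α cos(2πx))` takes values on both sides.
-/

/-! ### Transfer matrices and the Lyapunov exponent -/

section Norm

variable (M N : Matrix (Fin 2) (Fin 2) ℂ)

theorem opNorm2_nonneg : 0 ≤ opNorm2 M := norm_nonneg _

theorem opNorm2_one : opNorm2 1 = 1 := by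
  rw [opNorm2, map_one, norm_one]

theorem opNorm2_mul_le : opNorm2 (M * N) ≤ opNorm2 M * opNorm2 N := by
  simpa only [opNorm2, map_mul] using norm_mul_le _ _

theorem sum_norm_sq_mulVec_le (w : Fin 2 → ℂ) :
    ‖(M.mulVec w) 0‖ ^ 2 + ‖(M.mulVec w) 1‖ ^ 2 ≤
      opNorm2 M ^ 2 * (‖w 0‖ ^ 2 + ‖w 1‖ ^ 2) := by
  have h := (Matrix.toEuclideanCLM (𝕜 := ℂ) M).le_opNorm (WithLp.toLp 2 w)
  rw [Matrix.toEuclideanCLM_toLp] at h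
  have hsq := pow_le_pow_left₀ (norm_nonneg _) h 2
  rw [mul_pow, EuclideanSpace.norm_sq_eq, EuclideanSpace.norm_sq_eq] at hsq
  simpa [opNorm2] using hsq

theorem sum_norm_sq_col_le (j : Fin 2) : ‖M 0 j‖ ^ 2 + ‖M 1 j‖ ^ 2 ≤ opNorm2 M ^ 2 := by
  have h := sum_norm_sq_mulVec_le M (Pi.single j 1)
  rw [Matrix.mulVec_single_one] at h
  fin_cases j <;> simpa using h

theorem norm_apply_le_opNorm2 (i j : Fin 2) : ‖M i j‖ ≤ opNorm2 M := by
  refine le_of_sq_le_sq (le_trans ?_ (sum_norm_sq_col_le M j)) (opNorm2_nonneg M)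
  fin_cases i <;> simp

theorem opNorm2_le_sum_norm : opNorm2 M ≤ ∑ i, ∑ j, ‖M i j‖ := by
  refine ContinuousLinearMap.opNorm_le_bound _ (by positivity) fun v ↦ ?_
  have hsum : ‖Matrix.toEuclideanCLM (𝕜 := ℂ) M v‖ ≤ ∑ i, ‖M.mulVec v.ofLp i‖ := by
    rw [EuclideanSpace.norm_eq, Real.sqrt_le_left (by positivity)]
    exact Finset.sum_sq_le_sq_sum_of_nonneg fun i _ ↦ norm_nonneg _
  refine hsum.trans ?_
  simp_rw [Finset.sum_mul]
  gcongr with i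
  rw [Matrix.mulVec, dotProduct]
  refine (norm_sum_le _ _).trans ?_
  gcongr with j
  rw [norm_mul]
  gcongr
  exact PiLp.norm_apply_le (p := 2) (β := fun _ : Fin 2 ↦ ℂ) v j

variable {M} in
theorem one_le_opNorm2_of_det_eq_one (h : M.det = 1) : 1 ≤ opNorm2 M := by
  have hdet : 1 ≤ ‖M 0 0‖ * ‖M 1 1‖ + ‖M 0 1‖ * ‖M 1 0‖ := calc
    (1 : ℝ) = ‖M 0 0 * M 1 1 - M 0 1 * M 1 0‖ := by rw [← Matrix.det_fin_two, h, norm_one]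
    _ ≤ _ := by simpa only [norm_mul] using norm_sub_le (M 0 0 * M 1 1) (M 0 1 * M 1 0)
  rw [← one_le_sq_iff₀ (opNorm2_nonneg M)]
  nlinarith [sum_norm_sq_col_le M 0, sum_norm_sq_col_le M 1, sq_nonneg (‖M 0 0‖ - ‖M 1 1‖),
    sq_nonneg (‖M 0 1‖ - ‖M 1 0‖)]

theorem continuous_opNorm2 : Continuous opNorm2 :=
  (LinearMap.continuous_of_finiteDimensional
    (Matrix.toEuclideanCLM (n := Fin 2) (𝕜 := ℂ)).toAlgEquiv.toLinearMap).norm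

end Norm

section TransferMatrix

variable (V : ℝ → ℝ) (b : ℝ) (n : ℕ) (x : ℝ) (z : ℂ)

theorem tProd_zero : tProd V b 0 x z = 1 := by
  simp [tProd]

theorem tProd_one : tProd V b 1 x z = tMat V x z := by
  simp [tProd]

theorem tProd_succ : tProd V b (n + 1) x z = tMat V (x + n * b) z * tProd V b n x z := by
  simp [tProd, List.range_succ]

theorem tProd_add (m : ℕ) :
    tProd V b (m + n) x z = tProd V b m (x + n * b) z * tProd V b n x z := by
  induction m with
  | zero => simp [tProd_zero]
  | succ m ih =>
    rw [add_right_comm, tProd_succ, ih, tProd_succ, Matrix.mul_assoc]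
    congr 2
    push_cast
    ring

theorem tProd_succ' : tProd V b (n + 1) x z = tProd V b n (x + b) z * tMat V x z := by
  simpa [tProd_one] using tProd_add V b 1 x z n

theorem det_tProd : (tProd V b n x z).det = 1 := by
  induction n with
  | zero => simp [tProd_zero]
  | succ n ih => rw [tProd_succ, Matrix.det_mul, ih]; simp [tMat, Matrix.det_fin_two]

theorem one_le_opNorm2_tProd : 1 ≤ opNorm2 (tProd V b n x z) :=
  one_le_opNorm2_of_det_eq_one (det_tProd V b n x z)

theorem opNorm2_tProd_pos : 0 < opNorm2 (tProd V b n x z) :=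
  one_pos.trans_le (one_le_opNorm2_tProd V b n x z)

variable {V}

theorem continuous_tProd (hV : Continuous V) : Continuous fun x ↦ tProd V b n x z := by
  induction n with
  | zero => simpa only [tProd_zero] using continuous_const
  | succ n ih =>
    simp only [tProd_succ]
    refine Continuous.matrix_mul (continuous_matrix fun i j ↦ ?_) ih
    fin_cases i <;> fin_cases j <;> simp only [tMat] <;> dsimp <;> fun_prop

theorem continuous_log_opNorm2_tProd (hV : Continuous V) :
    Continuous fun x ↦ Real.log (opNorm2 (tProd V b n x z)) :=
  (continuous_opNorm2.comp (continuous_tProd b n z hV)).log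
    fun x ↦ (opNorm2_tProd_pos V b n x z).ne'

theorem tProd_periodic (hV : V.Periodic 1) : (fun x ↦ tProd V b n x z).Periodic 1 := by
  intro x
  induction n with
  | zero => simp only [tProd_zero]
  | succ n ih =>
    have hshift : V (x + 1 + n * b) = V (x + n * b) := by rw [add_right_comm, hV]
    simp only [tProd_succ, ih, tMat, hshift]

variable (V)

theorem integral_log_opNorm2_tProd_nonneg :
    0 ≤ ∫ x in (0 : ℝ)..1, Real.log (opNorm2 (tProd V b n x z)) :=
  intervalIntegral.integral_nonneg zero_le_one
    fun x _ ↦ Real.log_nonneg (one_le_opNorm2_tProd V b n x z)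

theorem lyap_nonneg : 0 ≤ lyap V b z :=
  Real.iInf_nonneg fun n ↦
    mul_nonneg (by positivity) (integral_log_opNorm2_tProd_nonneg V b n z)

theorem mul_lyap_le :
    n * lyap V b z ≤ ∫ x in (0 : ℝ)..1, Real.log (opNorm2 (tProd V b n x z)) := by
  rcases n.eq_zero_or_pos with rfl | hn
  · simpa using integral_log_opNorm2_tProd_nonneg V b 0 z
  have hbdd : BddBelow (Set.range fun n : ℕ+ ↦ (n : ℝ)⁻¹ *
      ∫ x in (0 : ℝ)..1, Real.log (opNorm2 (tProd V b n x z))) :=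
    ⟨0, Set.forall_mem_range.2 fun n ↦
      mul_nonneg (by positivity) (integral_log_opNorm2_tProd_nonneg V b n z)⟩
  exact (le_inv_mul_iff₀ (by positivity)).1 (ciInf_le hbdd ⟨n, hn⟩)

variable {V}

theorem exists_exp_mul_lyap_le_opNorm2_tProd (hV : Continuous V) :
    ∃ x, Real.exp (n * lyap V b z) ≤ opNorm2 (tProd V b n x z) := by
  have hcont := continuous_log_opNorm2_tProd b n z hV
  obtain ⟨x, -, hmax⟩ := isCompact_Icc.exists_isMaxOn (Set.nonempty_Icc.2 (zero_le_one' ℝ))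
    hcont.continuousOn
  refine ⟨x, (Real.le_log_iff_exp_le (opNorm2_tProd_pos V b n x z)).1 ?_⟩
  refine (mul_lyap_le V b n z).trans ?_
  have hint := intervalIntegral.integral_mono_on (μ := MeasureTheory.volume) zero_le_one
    (hcont.intervalIntegrable 0 1) (continuous_const.intervalIntegrable 0 1) fun y hy ↦ hmax hy
  simpa using hint

theorem exists_forall_abs_le_of_periodic {f : ℝ → ℝ} (hf : Continuous f)
    (hper : f.Periodic 1) : ∃ C, ∀ x, |f x| ≤ C := by
  obtain ⟨C, hC⟩ := isCompact_Icc.exists_bound_of_continuousOn (s := Set.Icc (0 : ℝ) 1)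
    hf.continuousOn
  refine ⟨C, fun x ↦ ?_⟩
  obtain ⟨y, hy, hxy⟩ := hper.exists_mem_Ico₀ one_pos x
  simpa only [hxy, Real.norm_eq_abs] using hC y (Set.Ico_subset_Icc_self hy)

end TransferMatrix

/-! ### Uniform equidistribution of irrational rotations -/

section Equidistribution

open Filter Topology MeasureTheory AddCircle

/-- The Koopman operator `g ↦ g(· + b)` of the rotation by `b` on continuous functions; its
Birkhoff averages in the Banach space `C(ℝ/ℤ)` encode orbit averages uniformly in the phase. -/
noncomputable def rotationKoopman (b : ℝ) :
    C(AddCircle (1 : ℝ), ℂ) →L[ℂ] C(AddCircle (1 : ℝ), ℂ) :=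
  ContinuousMap.compCLM ℂ ℂ (ContinuousMap.addRight (b : AddCircle (1 : ℝ)))

theorem rotationKoopman_iterate_apply (b : ℝ) (g : C(AddCircle (1 : ℝ), ℂ)) (n : ℕ) (x : ℝ) :
    ((rotationKoopman b)^[n] g) x = g ((x + n * b : ℝ) : AddCircle (1 : ℝ)) := by
  induction n generalizing g with
  | zero => simp
  | succ n ih =>
    rw [Function.iterate_succ_apply, ih]
    simp only [rotationKoopman, ContinuousMap.compCLM_apply, ContinuousMap.comp_apply,
      ContinuousMap.coe_addRight, ← AddCircle.coe_add]
    congr 2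
    push_cast
    ring

theorem lipschitzWith_rotationKoopman (b : ℝ) : LipschitzWith 1 (rotationKoopman b) :=
  LipschitzWith.of_dist_le_mul fun f g ↦ by
    rw [NNReal.coe_one, one_mul, ContinuousMap.dist_le dist_nonneg]
    intro x
    exact ContinuousMap.dist_apply_le_dist (f := f) (g := g) (x + (b : AddCircle (1 : ℝ)))

theorem rotationKoopman_fourier (b : ℝ) (k : ℤ) :
    rotationKoopman b (fourier k) = fourier k (b : AddCircle (1 : ℝ)) • fourier k := by
  ext x
  rw [rotationKoopman, ContinuousMap.compCLM_apply, ContinuousMap.comp_apply,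
    ContinuousMap.coe_addRight, ContinuousMap.smul_apply, smul_eq_mul, mul_comm]
  simp only [fourier_apply, smul_add, toCircle_add, Circle.coe_mul]

theorem fourier_apply_coe_ne_one {b : ℝ} (hb : Irrational b) {k : ℤ} (hk : k ≠ 0) :
    fourier k (b : AddCircle (1 : ℝ)) ≠ 1 := by
  intro h
  rw [fourier_coe_apply, Complex.exp_eq_one_iff] at h
  obtain ⟨m, hm⟩ := h
  have hkb : (k * b : ℂ) = m := by
    apply mul_left_cancel₀ Complex.two_pi_I_ne_zero
    linear_combination (norm := (push_cast; ring)) hm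
  exact (Int.not_irrational m) ((by exact_mod_cast hkb : (k * b : ℝ) = m) ▸ hb.intCast_mul hk)

theorem tendsto_birkhoffAverage_fourier {b : ℝ} (hb : Irrational b) {k : ℤ} (hk : k ≠ 0) :
    Tendsto (birkhoffAverage ℂ (rotationKoopman b) _root_.id · (fourier k)) atTop (𝓝 0) := by
  set w := fourier k (b : AddCircle (1 : ℝ)) with hw_def
  have hw : w ≠ 1 := fourier_apply_coe_ne_one hb hk
  have hw_norm : ‖w‖ = 1 := by rw [hw_def, fourier_apply, Circle.norm_coe]
  have hiter (j : ℕ) : (rotationKoopman b)^[j] (fourier k) = w ^ j • fourier k := by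
    induction j with
    | zero => simp
    | succ j ih =>
      rw [Function.iterate_succ_apply', ih, map_smul, rotationKoopman_fourier, smul_smul, pow_succ]
  have hgeom (n : ℕ) : ‖birkhoffAverage ℂ (rotationKoopman b) _root_.id n (fourier k)‖ ≤
      2 / ‖w - 1‖ / n := by
    simp only [birkhoffAverage, birkhoffSum, hiter, _root_.id, ← Finset.sum_smul]
    rw [geom_sum_eq hw, smul_smul, norm_smul, fourier_norm, mul_one, norm_mul, norm_inv, norm_div,
      Complex.norm_natCast, inv_mul_eq_div]
    gcongr
    refine (norm_sub_le _ _).trans_eq ?_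
    rw [norm_pow, hw_norm, one_pow, norm_one, one_add_one_eq_two]
  exact squeeze_zero_norm hgeom (tendsto_const_nhds.div_atTop tendsto_natCast_atTop_atTop)

theorem integrable_haarAddCircle (g : C(AddCircle (1 : ℝ), ℂ)) : Integrable g haarAddCircle :=
  g.continuous.integrable_of_hasCompactSupport (HasCompactSupport.of_compactSpace g)

theorem continuous_integral_haarAddCircle :
    Continuous fun g : C(AddCircle (1 : ℝ), ℂ) ↦ ∫ t, g t ∂haarAddCircle := by
  refine LipschitzWith.continuous (K := 1) (LipschitzWith.of_dist_le_mul fun f g ↦ ?_)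
  rw [dist_eq_norm, ← integral_sub (integrable_haarAddCircle f) (integrable_haarAddCircle g)]
  refine (norm_integral_le_of_norm_le_const (.of_forall fun t ↦ ?_)).trans_eq
    (by simp : dist f g * haarAddCircle.real Set.univ = _)
  simpa only [dist_eq_norm] using ContinuousMap.dist_apply_le_dist (f := f) (g := g) t

theorem integral_fourier_eq_zero {b : ℝ} (hb : Irrational b) {k : ℤ} (hk : k ≠ 0) :
    ∫ t : AddCircle (1 : ℝ), fourier k t ∂haarAddCircle = 0 := by
  have hinv := integral_add_right_eq_self (μ := haarAddCircle)
    (fun t : AddCircle (1 : ℝ) ↦ (fourier k t : ℂ)) (b : AddCircle (1 : ℝ))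
  simp only [fourier_apply, smul_add, toCircle_add, Circle.coe_mul, integral_mul_const] at hinv ⊢
  exact eq_zero_of_mul_eq_self_right (fourier_apply_coe_ne_one hb hk) hinv

theorem tendsto_birkhoffAverage_rotationKoopman {b : ℝ} (hb : Irrational b)
    (g : C(AddCircle (1 : ℝ), ℂ)) :
    Tendsto (birkhoffAverage ℂ (rotationKoopman b) _root_.id · g) atTop
      (𝓝 (ContinuousMap.const _ (∫ t, g t ∂haarAddCircle))) := by
  have hclosed := isClosed_setOfPred_tendsto_birkhoffAverage ℂ (lipschitzWith_rotationKoopman b)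
    uniformContinuous_id (ContinuousMap.continuous_const'.comp continuous_integral_haarAddCircle)
  have hdense : g ∈ closure (Submodule.span ℂ (Set.range (@fourier 1)) : Set _) := by
    rw [← Submodule.topologicalClosure_coe, span_fourier_closure_eq_top]
    trivial
  refine closure_minimal (fun f hf ↦ ?_) hclosed hdense
  change Tendsto _ _ _
  induction hf using Submodule.span_induction with
  | mem f hf =>
    obtain ⟨k, rfl⟩ := hf
    rcases eq_or_ne k 0 with rfl | hk
    · have hfix : Function.IsFixedPt (rotationKoopman b) (fourier 0) := by
        rw [Function.IsFixedPt, rotationKoopman_fourier, fourier_zero, one_smul]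
      have hconst : ContinuousMap.const (AddCircle (1 : ℝ))
          (∫ t : AddCircle (1 : ℝ), fourier 0 t ∂haarAddCircle) = fourier 0 := by
        ext
        simp
      rw [Function.comp_apply, hconst]
      exact hfix.tendsto_birkhoffAverage ℂ _root_.id
    · simpa only [Function.comp_apply, integral_fourier_eq_zero hb hk] using!
        tendsto_birkhoffAverage_fourier hb hk
  | zero => simp [birkhoffAverage, birkhoffSum]
  | add f₁ f₂ _ _ h₁ h₂ =>
    have hint : ∫ t, (f₁ + f₂) t ∂haarAddCircle = _ :=
      integral_add (integrable_haarAddCircle f₁) (integrable_haarAddCircle f₂)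
    rw [Function.comp_apply, hint]
    simpa [birkhoffAverage, birkhoffSum, Finset.sum_add_distrib] using! h₁.add h₂
  | smul c f _ h =>
    have hint : ∫ t, (c • f) t ∂haarAddCircle = c • ∫ t, f t ∂haarAddCircle := integral_smul c _
    have hiter (j : ℕ) : (rotationKoopman b)^[j] (c • f) = c • (rotationKoopman b)^[j] f :=
      (Function.Semiconj.iterate_right (f := (c • ·))
        (fun f ↦ (map_smul (rotationKoopman b) c f).symm) j f).symm
    rw [Function.comp_apply, hint]
    convert! h.const_smul c using 1
    ext1 n
    simp only [birkhoffAverage, birkhoffSum, _root_.id, hiter, ← Finset.smul_sum, smul_comm c]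

theorem exists_forall_abs_sum_sub_le {b : ℝ} (hb : Irrational b) {f : ℝ → ℝ} (hf : Continuous f)
    (hper : f.Periodic 1) {η : ℝ} (hη : 0 < η) :
    ∃ n₀ : ℕ, ∀ n ≥ n₀, ∀ x : ℝ,
      |∑ j ∈ Finset.range n, f (x + j * b) - n * ∫ y in (0 : ℝ)..1, f y| ≤ n * η := by
  have hper' : (fun x ↦ (f x : ℂ)).Periodic 1 := fun x ↦ congrArg _ (hper x)
  have hlift : Continuous hper'.lift :=
    (QuotientAddGroup.isQuotientMap_mk (AddSubgroup.zmultiples (1 : ℝ))).continuous_iff.2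
      (Complex.continuous_ofReal.comp hf)
  set g : C(AddCircle (1 : ℝ), ℂ) := ⟨hper'.lift, hlift⟩
  have hg (x : ℝ) : g x = f x := hper'.lift_coe x
  have hint : ∫ t, g t ∂haarAddCircle = ((∫ y in (0 : ℝ)..1, f y : ℝ) : ℂ) := by
    rw [integral_haarAddCircle, inv_one, one_smul, ← AddCircle.intervalIntegral_preimage 1 0,
      zero_add, ← intervalIntegral.integral_ofReal]
    simp only [hg]
  obtain ⟨n₀, hn₀⟩ := Metric.tendsto_atTop.1 (tendsto_birkhoffAverage_rotationKoopman hb g) η hη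
  refine ⟨n₀, fun n hn x ↦ ?_⟩
  rcases n.eq_zero_or_pos with rfl | hpos
  · simp
  have hdist := (ContinuousMap.dist_apply_le_dist (x : AddCircle (1 : ℝ))).trans (hn₀ n hn).le
  rw [dist_eq_norm, ContinuousMap.const_apply, hint, birkhoffAverage, ContinuousMap.smul_apply,
    birkhoffSum, ContinuousMap.sum_apply] at hdist
  simp only [_root_.id, rotationKoopman_iterate_apply, hg] at hdist
  norm_cast at hdist
  rw [smul_eq_mul, ← Complex.ofReal_natCast, ← Complex.ofReal_inv, ← Complex.ofReal_mul,
    ← Complex.ofReal_sub, Complex.norm_real, Real.norm_eq_abs] at hdist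
  have hn_pos : (0 : ℝ) < n := Nat.cast_pos.2 hpos
  calc |∑ j ∈ Finset.range n, f (x + j * b) - n * ∫ y in (0 : ℝ)..1, f y|
      = n * |(n : ℝ)⁻¹ * ∑ j ∈ Finset.range n, f (x + j * b) - ∫ y in (0 : ℝ)..1, f y| := by
        rw [← abs_of_pos hn_pos, ← abs_mul, abs_of_pos hn_pos, mul_sub,
          mul_inv_cancel_left₀ hn_pos.ne']
    _ ≤ n * η := by gcongr

end Equidistribution

/-! ### Uniform upper bounds for transfer matrices -/

section UniformUpperBound

variable {V : ℝ → ℝ} (b : ℝ) (z : ℂ)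

theorem exists_opNorm2_tProd_le_pow (hV : Continuous V) (hper : V.Periodic 1) :
    ∃ C, 1 ≤ C ∧ ∀ n x, opNorm2 (tProd V b n x z) ≤ C ^ n := by
  obtain ⟨C, hC⟩ := exists_forall_abs_le_of_periodic
    (continuous_opNorm2.comp (continuous_tProd b 1 z hV))
    ((tProd_periodic b 1 z hper).comp opNorm2)
  replace hC (x : ℝ) : opNorm2 (tMat V x z) ≤ C := by
    simpa only [tProd_one, Function.comp_apply] using (le_abs_self _).trans (hC x)
  have hC1 : 1 ≤ C := (tProd_one V b 0 z ▸ one_le_opNorm2_tProd V b 1 0 z).trans (hC 0)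
  refine ⟨C, hC1, fun n x ↦ ?_⟩
  induction n with
  | zero => rw [tProd_zero, opNorm2_one, pow_zero]
  | succ n ih =>
    rw [tProd_succ, pow_succ']
    exact (opNorm2_mul_le _ _).trans
      (mul_le_mul (hC _) ih (opNorm2_nonneg _) (zero_le_one.trans hC1))

variable (V) in
theorem log_opNorm2_tProd_mul_le (m k : ℕ) (x : ℝ) :
    Real.log (opNorm2 (tProd V b (m * k) x z)) ≤
      ∑ i ∈ Finset.range k, Real.log (opNorm2 (tProd V b m (x + i * (m * b)) z)) := by
  induction k with
  | zero => simp [tProd_zero, opNorm2_one]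
  | succ k ih =>
    have hphase : x + ((m * k : ℕ) : ℝ) * b = x + k * (m * b) := by push_cast; ring
    rw [Finset.sum_range_succ, Nat.mul_succ, Nat.add_comm]
    calc Real.log (opNorm2 (tProd V b (m + m * k) x z))
        ≤ Real.log (opNorm2 (tProd V b m (x + k * (m * b)) z) *
            opNorm2 (tProd V b (m * k) x z)) := by
          refine Real.log_le_log (opNorm2_tProd_pos V b _ x z) ?_
          rw [tProd_add, hphase]
          exact opNorm2_mul_le _ _
      _ = Real.log (opNorm2 (tProd V b m (x + k * (m * b)) z)) +
            Real.log (opNorm2 (tProd V b (m * k) x z)) :=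
          Real.log_mul (opNorm2_tProd_pos V b m _ z).ne' (opNorm2_tProd_pos V b _ x z).ne'
      _ ≤ _ := by linarith

variable (V) in
theorem exists_integral_log_opNorm2_tProd_lt {η : ℝ} (hη : 0 < η) :
    ∃ m : ℕ, 0 < m ∧
      ∫ x in (0 : ℝ)..1, Real.log (opNorm2 (tProd V b m x z)) < m * (lyap V b z + η) := by
  obtain ⟨m, hm⟩ := exists_lt_of_ciInf_lt (lt_add_of_pos_right (lyap V b z) hη)
  exact ⟨m, m.pos, (inv_mul_lt_iff₀ (Nat.cast_pos.2 m.pos)).1 hm⟩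

theorem exists_opNorm2_tProd_mul_le_exp (hV : Continuous V) (hper : V.Periodic 1)
    (hb : Irrational b) {η : ℝ} (hη : 0 < η) :
    ∃ m : ℕ, 0 < m ∧ ∃ k₀ : ℕ, ∀ k ≥ k₀, ∀ x,
      opNorm2 (tProd V b (m * k) x z) ≤ Real.exp ((m * k : ℕ) * (lyap V b z + η)) := by
  obtain ⟨m, hm_pos, hm⟩ := exists_integral_log_opNorm2_tProd_lt V b z (half_pos hη)
  have hm_pos' : (0 : ℝ) < m := Nat.cast_pos.2 hm_pos
  obtain ⟨k₀, hk₀⟩ := exists_forall_abs_sum_sub_le (hb.natCast_mul hm_pos.ne')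
    (continuous_log_opNorm2_tProd b m z hV)
    ((tProd_periodic b m z hper).comp fun M ↦ Real.log (opNorm2 M)) (mul_pos hm_pos' (half_pos hη))
  refine ⟨m, hm_pos, k₀, fun k hk x ↦ ?_⟩
  rw [← Real.log_le_iff_le_exp (opNorm2_tProd_pos V b _ x z)]
  calc Real.log (opNorm2 (tProd V b (m * k) x z))
      ≤ ∑ i ∈ Finset.range k, Real.log (opNorm2 (tProd V b m (x + i * (m * b)) z)) :=
        log_opNorm2_tProd_mul_le V b z m k x
    _ ≤ k * (∫ y in (0 : ℝ)..1, Real.log (opNorm2 (tProd V b m y z))) + k * (m * (η / 2)) :=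
        sub_le_iff_le_add'.1 (abs_le.1 (hk₀ k hk x)).2
    _ ≤ k * (m * (lyap V b z + η / 2)) + k * (m * (η / 2)) := by gcongr
    _ = (m * k : ℕ) * (lyap V b z + η) := by push_cast; ring

theorem exists_opNorm2_tProd_le_mul_exp (hV : Continuous V) (hper : V.Periodic 1)
    (hb : Irrational b) {η : ℝ} (hη : 0 < η) :
    ∃ C > 0, ∀ n x, opNorm2 (tProd V b n x z) ≤ C * Real.exp (n * (lyap V b z + η)) := by
  obtain ⟨M, hM1, hM⟩ := exists_opNorm2_tProd_le_pow b z hV hper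
  obtain ⟨m, hm_pos, k₀, hk₀⟩ := exists_opNorm2_tProd_mul_le_exp b z hV hper hb hη
  have hrate : 0 ≤ lyap V b z + η := add_nonneg (lyap_nonneg V b z) hη.le
  refine ⟨M ^ (m * k₀ + m), by positivity, fun n x ↦ ?_⟩
  have hdiv := Nat.div_add_mod n m
  have hmod : n % m < m := Nat.mod_lt n hm_pos
  rcases le_total k₀ (n / m) with hk | hk
  · calc opNorm2 (tProd V b n x z)
        = opNorm2 (tProd V b (n % m) (x + (m * (n / m) : ℕ) * b) z *
            tProd V b (m * (n / m)) x z) := by rw [← tProd_add, Nat.add_comm, hdiv]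
      _ ≤ M ^ (n % m) * Real.exp ((m * (n / m) : ℕ) * (lyap V b z + η)) :=
        (opNorm2_mul_le _ _).trans
          (mul_le_mul (hM _ _) (hk₀ _ hk x) (opNorm2_nonneg _) (by positivity))
      _ ≤ M ^ (m * k₀ + m) * Real.exp (n * (lyap V b z + η)) := by
        gcongr <;> lia
  · have hn : n ≤ m * k₀ + m := by
      have := Nat.mul_le_mul_left m hk
      lia
    calc opNorm2 (tProd V b n x z) ≤ M ^ n := hM n x
      _ ≤ M ^ (m * k₀ + m) * 1 := by rw [mul_one]; gcongr
      _ ≤ _ := by gcongr; exact Real.one_le_exp (by positivity)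

end UniformUpperBound

/-! ### The potential and its denominator -/

open scoped FourierTransform

theorem coe_fourierChar_add (x y : ℝ) : (𝐞 (x + y) : ℂ) = 𝐞 x * 𝐞 y := by
  rw [AddChar.map_add_eq_mul, Circle.coe_mul]

theorem periodic_coe_fourierChar : Function.Periodic (fun x : ℝ ↦ (𝐞 x : ℂ)) 1 := fun x ↦ by
  have hone : (𝐞 (1 : ℝ) : ℂ) = 1 := by
    rw [Real.fourierChar_apply]
    push_cast
    rw [mul_one, Complex.exp_two_pi_mul_I]
  simp only [coe_fourierChar_add, hone, mul_one]

theorem coe_fourierChar_eq_cos_add_sin (x : ℝ) :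
    (𝐞 x : ℂ) = Real.cos (2 * π * x) + Real.sin (2 * π * x) * Complex.I := by
  rw [Real.fourierChar_apply, Complex.exp_mul_I, Complex.ofReal_cos, Complex.ofReal_sin]

theorem coe_fourierChar_mul_cos (x : ℝ) :
    (𝐞 x : ℂ) * Real.cos (2 * π * x) = ((𝐞 x : ℂ) ^ 2 + 1) / 2 := by
  have hcs : ((Real.cos (2 * π * x) : ℝ) : ℂ) ^ 2 + ((Real.sin (2 * π * x) : ℝ) : ℂ) ^ 2 = 1 := by
    exact_mod_cast Real.cos_sq_add_sin_sq (2 * π * x)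
  rw [coe_fourierChar_eq_cos_add_sin]
  linear_combination (1 / 2) * hcs - (1 / 2) * (Real.sin (2 * π * x) : ℂ) ^ 2 * Complex.I_sq

theorem exists_coe_fourierChar_eq {z : ℂ} (hz : ‖z‖ = 1) : ∃ x : ℝ, (𝐞 x : ℂ) = z := by
  refine ⟨z.arg / (2 * π), ?_⟩
  rw [Real.fourierChar_apply, mul_div_cancel₀ _ (by positivity)]
  simpa [hz] using Complex.norm_mul_exp_arg_mul_I z

theorem periodic_cos_two_pi_mul : Function.Periodic (fun x : ℝ ↦ Real.cos (2 * π * x)) 1 :=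
  fun x ↦ by simp only [mul_add, mul_one, Real.cos_add_two_pi]

/-- The denominator `1 - α cos(2πx)` of the potential `potV α lam`. -/
noncomputable def potDen (α x : ℝ) : ℝ := 1 - α * Real.cos (2 * π * x)

/-- The geometric mean of the denominator over a period,
`exp ∫₀¹ log (1 - α cos(2πx)) dx = (1 + √(1 - α²)) / 2`. -/
noncomputable def potDenMean (α : ℝ) : ℝ := (1 + √(1 - α ^ 2)) / 2

section Denominator

variable {α : ℝ}

theorem abs_mul_cos_le (α x : ℝ) : |α * Real.cos (2 * π * x)| ≤ |α| := by
  rw [abs_mul]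
  exact mul_le_of_le_one_right (abs_nonneg _) (Real.abs_cos_le_one _)

theorem potDen_pos (hα : |α| < 1) (x : ℝ) : 0 < potDen α x :=
  sub_pos.2 ((le_abs_self _).trans_lt ((abs_mul_cos_le α x).trans_lt hα))

theorem continuous_potDen (α : ℝ) : Continuous (potDen α) := by
  unfold potDen
  fun_prop

theorem periodic_potV (α lam : ℝ) : Function.Periodic (potV α lam) 1 := fun x ↦ by
  have hcos := periodic_cos_two_pi_mul x
  simp only [potV] at hcos ⊢
  rw [hcos]

theorem continuous_potV (hα : |α| < 1) (lam : ℝ) : Continuous (potV α lam) :=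
  Continuous.div (by fun_prop) (continuous_potDen α) fun x ↦ (potDen_pos hα x).ne'

theorem potV_neg (α lam x : ℝ) : potV α lam (-x) = potV α lam x := by
  simp only [potV, mul_neg, Real.cos_neg]

theorem potDen_mul_potV (hα : |α| < 1) (lam x : ℝ) :
    potDen α x * potV α lam x = 2 * lam * Real.cos (2 * π * x) :=
  mul_div_cancel₀ _ (potDen_pos hα x).ne'

theorem mul_potV_add (hα : |α| < 1) (lam x : ℝ) :
    α * potV α lam x + 2 * lam = 2 * lam / potDen α x := by
  rw [eq_div_iff (potDen_pos hα x).ne', add_mul, mul_assoc, mul_comm (potV α lam x),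
    potDen_mul_potV hα, potDen]
  ring

theorem sq_lt_one_of_abs_lt_one (hα : |α| < 1) : α ^ 2 < 1 := (sq_lt_one_iff_abs_lt_one α).2 hα

theorem potDenMean_sq_sub (hα : |α| < 1) : potDenMean α ^ 2 - potDenMean α + α ^ 2 / 4 = 0 := by
  have hsq := Real.sq_sqrt (sub_nonneg.2 (sq_lt_one_of_abs_lt_one hα).le)
  unfold potDenMean
  linear_combination hsq / 4

theorem half_lt_potDenMean (hα : |α| < 1) : 1 / 2 < potDenMean α := by
  have hsqrt := Real.sqrt_pos.2 (sub_pos.2 (sq_lt_one_of_abs_lt_one hα))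
  unfold potDenMean
  linarith

theorem potDenMean_pos (α : ℝ) : 0 < potDenMean α := by
  unfold potDenMean
  positivity

theorem norm_div_two_mul_potDenMean_lt_one (hα : |α| < 1) :
    ‖((α / (2 * potDenMean α) : ℝ) : ℂ)‖ < 1 := by
  have hmean := half_lt_potDenMean hα
  have hpos : 0 < 2 * potDenMean α := by linarith
  rw [Complex.norm_real, Real.norm_eq_abs, abs_div, abs_of_pos hpos, div_lt_one hpos]
  linarith

theorem potDen_eq_mul_norm_sq (hα : |α| < 1) (x : ℝ) :
    potDen α x = potDenMean α * ‖(𝐞 x : ℂ) - ((α / (2 * potDenMean α) : ℝ) : ℂ)‖ ^ 2 := by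
  have hmean := potDenMean_pos α
  have hquad := potDenMean_sq_sub hα
  have hcs := Real.cos_sq_add_sin_sq (2 * π * x)
  rw [coe_fourierChar_eq_cos_add_sin, ← Complex.normSq_eq_norm_sq, Complex.normSq_apply]
  simp only [Complex.sub_re, Complex.sub_im, Complex.add_re, Complex.add_im, Complex.mul_re,
    Complex.mul_im, Complex.ofReal_re, Complex.ofReal_im, Complex.I_re, Complex.I_im, potDen]
  have hlin : potDenMean α * (α / (2 * potDenMean α)) = α / 2 := by field_simp
  have hconst : potDenMean α * (α / (2 * potDenMean α)) ^ 2 = 1 - potDenMean α := by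
    field_simp
    linarith
  linear_combination (2 * Real.cos (2 * π * x)) * hlin - hconst - potDenMean α * hcs

end Denominator

section LogDistance

variable {β : ℂ} {b η : ℝ}

theorem norm_coe_fourierChar_sub_pos (hβ : ‖β‖ < 1) (x : ℝ) : 0 < ‖(𝐞 x : ℂ) - β‖ := by
  have := norm_sub_norm_le (𝐞 x : ℂ) β
  rw [Circle.norm_coe] at this
  linarith

theorem integral_log_norm_fourierChar_sub (hβ : ‖β‖ < 1) :
    ∫ y in (0 : ℝ)..1, Real.log ‖(𝐞 y : ℂ) - β‖ = 0 := by
  have hmean := circleAverage_log_norm_sub_const₀ hβ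
  have hscale := intervalIntegral.integral_comp_mul_left (a := 0) (b := 1)
    (fun θ ↦ Real.log ‖circleMap 0 1 θ - β‖) (c := 2 * π) (by positivity)
  rw [Real.circleAverage_def] at hmean
  rw [mul_zero, mul_one, hmean] at hscale
  simpa [circleMap, Real.fourierChar_apply] using hscale

theorem exists_forall_abs_sum_log_norm_sub_le (hb : Irrational b) (hβ : ‖β‖ < 1) (hη : 0 < η) :
    ∃ n₀ : ℕ, ∀ n ≥ n₀, ∀ x : ℝ,
      |∑ j ∈ Finset.range n, Real.log ‖(𝐞 (x + j * b) : ℂ) - β‖| ≤ n * η := by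
  have hcont : Continuous fun y : ℝ ↦ Real.log ‖(𝐞 y : ℂ) - β‖ := by
    refine Continuous.log ?_ fun y ↦ (norm_coe_fourierChar_sub_pos hβ y).ne'
    have := Real.continuous_fourierChar
    fun_prop
  simpa only [integral_log_norm_fourierChar_sub hβ, mul_zero, sub_zero] using
    exists_forall_abs_sum_sub_le hb hcont
      (periodic_coe_fourierChar.comp fun w : ℂ ↦ Real.log ‖w - β‖) hη

theorem exists_forall_prod_potDen_mem_Icc {α : ℝ} (hα : |α| < 1) (hb : Irrational b) (hη : 0 < η) :
    ∃ n₀ : ℕ, ∀ n ≥ n₀, ∀ x : ℝ, ∏ j ∈ Finset.range n, potDen α (x + j * b) ∈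
      Set.Icc (Real.exp (n * (Real.log (potDenMean α) - η)))
        (Real.exp (n * (Real.log (potDenMean α) + η))) := by
  have hβ := norm_div_two_mul_potDenMean_lt_one hα
  obtain ⟨n₀, hn₀⟩ := exists_forall_abs_sum_log_norm_sub_le hb hβ (half_pos hη)
  refine ⟨n₀, fun n hn x ↦ ?_⟩
  have hpos : 0 < ∏ j ∈ Finset.range n, potDen α (x + j * b) :=
    Finset.prod_pos fun j _ ↦ potDen_pos hα _
  have hlog : Real.log (∏ j ∈ Finset.range n, potDen α (x + j * b)) =
      n * Real.log (potDenMean α) + 2 * ∑ j ∈ Finset.range n,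
        Real.log ‖(𝐞 (x + j * b) : ℂ) - ((α / (2 * potDenMean α) : ℝ) : ℂ)‖ := by
    have hterm (y : ℝ) : Real.log (potDen α y) = Real.log (potDenMean α) +
        2 * Real.log ‖(𝐞 y : ℂ) - ((α / (2 * potDenMean α) : ℝ) : ℂ)‖ := by
      rw [potDen_eq_mul_norm_sq hα, Real.log_mul (potDenMean_pos α).ne'
        (pow_pos (norm_coe_fourierChar_sub_pos hβ _) 2).ne', Real.log_pow]
      norm_cast
    rw [Real.log_prod fun j _ ↦ (potDen_pos hα _).ne']
    simp only [hterm, Finset.sum_add_distrib, ← Finset.mul_sum, Finset.sum_const,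
      Finset.card_range, nsmul_eq_mul]
  have hsum := abs_le.1 (hn₀ n hn x)
  rw [Set.mem_Icc, ← Real.le_log_iff_exp_le hpos, ← Real.log_le_iff_le_exp hpos, hlog]
  constructor <;> linarith

end LogDistance

/-! ### The polynomial cocycle -/

/-- The matrix `[[Ez - (τ/2)(z² + 1), -(z - (α/2)(z² + 1))], [z - (α/2)(z² + 1), 0]]`, which on the
unit circle `z = e^{2πix}`, with `τ = αE + 2λ`, is the transfer matrix of `potV α lam` multiplied by
`z (1 - α cos(2πx))`. -/
noncomputable def polyTMat (α E τ : ℝ) (z : ℂ) : Matrix (Fin 2) (Fin 2) ℂ :=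
  !![E * z - τ / 2 * (z ^ 2 + 1), -(z - α / 2 * (z ^ 2 + 1)); z - α / 2 * (z ^ 2 + 1), 0]

/-- The `n`-step product of the matrices `polyTMat` along the rotation `z ↦ e^{2πib} z`. -/
noncomputable def polyTProd (α E τ b : ℝ) : ℕ → ℂ → Matrix (Fin 2) (Fin 2) ℂ
  | 0, _ => 1
  | n + 1, z => polyTMat α E τ (𝐞 (n * b) * z) * polyTProd α E τ b n z

section PolynomialCocycle

variable {α lam E τ b : ℝ}

theorem polyTMat_coe_fourierChar (hα : |α| < 1) (E lam x : ℝ) :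
    polyTMat α E (α * E + 2 * lam) (𝐞 x) =
      ((𝐞 x : ℂ) * potDen α x) • tMat (potV α lam) x E := by
  have hcos := coe_fourierChar_mul_cos x
  have hden : (𝐞 x : ℂ) * potDen α x = 𝐞 x - α / 2 * ((𝐞 x : ℂ) ^ 2 + 1) := by
    rw [potDen]
    push_cast at hcos ⊢
    linear_combination (-(α : ℂ)) * hcos
  have hpot : (potDen α x : ℂ) * potV α lam x = 2 * lam * (Real.cos (2 * π * x) : ℂ) := by
    exact_mod_cast potDen_mul_potV hα lam x
  ext i j
  fin_cases i <;> fin_cases j <;> simp [polyTMat, tMat, hden]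
  linear_combination (𝐞 x : ℂ) * hpot + 2 * lam * hcos - potV α lam x * hden

theorem polyTProd_coe_fourierChar (hα : |α| < 1) (E lam b x : ℝ) (n : ℕ) :
    polyTProd α E (α * E + 2 * lam) b n (𝐞 x) =
      (∏ j ∈ Finset.range n, ((𝐞 (x + j * b) : ℂ) * potDen α (x + j * b))) •
        tProd (potV α lam) b n x E := by
  induction n with
  | zero => simp [polyTProd, tProd_zero]
  | succ n ih =>
    rw [polyTProd, ih, tProd_succ, Finset.prod_range_succ, ← coe_fourierChar_add,
      add_comm (n * b) x, polyTMat_coe_fourierChar hα, Matrix.smul_mul, Matrix.mul_smul, smul_smul,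
      mul_comm]

theorem norm_polyTProd_coe_fourierChar_apply (hα : |α| < 1) (E lam b x : ℝ) (n : ℕ)
    (i j : Fin 2) : ‖polyTProd α E (α * E + 2 * lam) b n (𝐞 x) i j‖ =
      (∏ j ∈ Finset.range n, potDen α (x + j * b)) * ‖tProd (potV α lam) b n x E i j‖ := by
  rw [polyTProd_coe_fourierChar hα, Matrix.smul_apply, norm_smul, norm_prod]
  congr 1
  refine Finset.prod_congr rfl fun k _ ↦ ?_
  rw [norm_mul, Circle.norm_coe, one_mul, Complex.norm_of_nonneg (potDen_pos hα _).le]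

theorem exists_polynomial_eval_eq_polyTProd (α E τ b : ℝ) (n : ℕ) :
    ∃ P : Matrix (Fin 2) (Fin 2) (Polynomial ℂ),
      ∀ z i j, (P i j).eval z = polyTProd α E τ b n z i j := by
  induction n with
  | zero => exact ⟨1, fun z i j ↦ by simp [polyTProd, Matrix.one_apply, apply_ite]⟩
  | succ n ih =>
    obtain ⟨P, hP⟩ := ih
    let c (w : ℂ) : Polynomial ℂ := Polynomial.C w
    let Y : Polynomial ℂ := c (𝐞 (n * b)) * Polynomial.X
    refine ⟨!![c E * Y - c (τ / 2) * (Y ^ 2 + 1), -(Y - c (α / 2) * (Y ^ 2 + 1));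
      Y - c (α / 2) * (Y ^ 2 + 1), 0] * P, fun z i j ↦ ?_⟩
    fin_cases i <;> simp [polyTProd, polyTMat, Matrix.mul_apply, ← hP, c, Y]

theorem norm_eval_le_of_forall_norm_eq {p : Polynomial ℂ} {r C : ℝ} (hr : 0 < r)
    (hC : ∀ w : ℂ, ‖w‖ = r → ‖p.eval w‖ ≤ C) {z : ℂ} (hz : ‖z‖ ≤ r) : ‖p.eval z‖ ≤ C := by
  refine Complex.norm_le_of_forall_mem_frontier_norm_le (f := fun w ↦ p.eval w)
    (Metric.isBounded_ball (x := 0) (r := r)) p.differentiable.diffContOnCl (fun w hw ↦ hC w ?_) ?_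
  · rwa [frontier_ball _ hr.ne', mem_sphere_zero_iff_norm] at hw
  · rwa [closure_ball _ hr.ne', mem_closedBall_zero_iff]

end PolynomialCocycle

/-! ### Positivity of the Lyapunov exponent for `|αE + 2λ| > 2` -/

section Positivity

open Filter

variable {α lam E τ b : ℝ}

theorem exists_potDenMean_lt_root (hα : |α| < 1) {T : ℝ} (hT : 2 < T) :
    ∃ m, potDenMean α < m ∧ m ^ 2 - T / 2 * m + α ^ 2 / 4 = 0 := by
  have hα2 := sq_lt_one_of_abs_lt_one hα
  refine ⟨(T + √(T ^ 2 - 4 * α ^ 2)) / 4, ?_, ?_⟩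
  · have hscale : √(4 - 4 * α ^ 2) = 2 * √(1 - α ^ 2) := by
      rw [show 4 - 4 * α ^ 2 = 2 ^ 2 * (1 - α ^ 2) by ring, Real.sqrt_mul (by norm_num),
        Real.sqrt_sq (by norm_num)]
    have hmono : √(4 - 4 * α ^ 2) ≤ √(T ^ 2 - 4 * α ^ 2) := Real.sqrt_le_sqrt (by nlinarith)
    unfold potDenMean
    linarith
  · have hsq := Real.sq_sqrt (show 0 ≤ T ^ 2 - 4 * α ^ 2 by nlinarith)
    linear_combination hsq / 16

theorem exists_potDenMean_lt_abs_root (hα : |α| < 1) (hτ : 2 < |τ|) :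
    ∃ μ : ℝ, potDenMean α < |μ| ∧ μ ^ 2 + τ / 2 * μ + α ^ 2 / 4 = 0 := by
  obtain ⟨m, hm, hroot⟩ := exists_potDenMean_lt_root hα hτ
  have hm' : potDenMean α < |m| := hm.trans_le (le_abs_self m)
  rcases abs_choice τ with hsign | hsign <;> rw [hsign] at hroot
  · exact ⟨-m, by rwa [abs_neg], by linear_combination hroot⟩
  · exact ⟨m, hm', by linear_combination hroot⟩

theorem polyTMat_zero_mulVec (E : ℝ) {μ : ℂ} (hμ : μ ^ 2 + τ / 2 * μ + α ^ 2 / 4 = 0) :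
    (polyTMat α E τ 0).mulVec ![-2 * μ, α] = μ • ![-2 * μ, (α : ℂ)] := by
  ext i
  fin_cases i <;> simp [polyTMat, Matrix.mulVec, dotProduct]
  · linear_combination 2 * hμ
  · ring

theorem polyTProd_zero_mulVec (E b : ℝ) {μ : ℂ} (hμ : μ ^ 2 + τ / 2 * μ + α ^ 2 / 4 = 0) (n : ℕ) :
    (polyTProd α E τ b n 0).mulVec ![-2 * μ, α] = μ ^ n • ![-2 * μ, (α : ℂ)] := by
  induction n with
  | zero => simp [polyTProd]
  | succ n ih =>
    rw [polyTProd, mul_zero, ← Matrix.mulVec_mulVec, ih, Matrix.mulVec_smul,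
      polyTMat_zero_mulVec E hμ, smul_smul, pow_succ]

theorem norm_polyTProd_zero_apply_le (hα : |α| < 1) {B : ℝ} {n : ℕ} {i j : Fin 2}
    (hB : ∀ x : ℝ, (∏ j ∈ Finset.range n, potDen α (x + j * b)) *
      opNorm2 (tProd (potV α lam) b n x E) ≤ B) :
    ‖polyTProd α E (α * E + 2 * lam) b n 0 i j‖ ≤ B := by
  obtain ⟨P, hP⟩ := exists_polynomial_eval_eq_polyTProd α E (α * E + 2 * lam) b n
  rw [← hP]
  refine norm_eval_le_of_forall_norm_eq one_pos (fun w hw ↦ ?_) (norm_zero.trans_le zero_le_one)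
  obtain ⟨x, rfl⟩ := exists_coe_fourierChar_eq hw
  rw [hP, norm_polyTProd_coe_fourierChar_apply hα]
  refine le_trans ?_ (hB x)
  gcongr
  · exact Finset.prod_nonneg fun j _ ↦ (potDen_pos hα _).le
  · exact norm_apply_le_opNorm2 _ _ _

theorem abs_root_pow_le (hα : |α| < 1) (hα0 : α ≠ 0) {μ B : ℝ}
    (hμ : μ ^ 2 + (α * E + 2 * lam) / 2 * μ + α ^ 2 / 4 = 0) {n : ℕ}
    (hB : ∀ x : ℝ, (∏ j ∈ Finset.range n, potDen α (x + j * b)) *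
      opNorm2 (tProd (potV α lam) b n x E) ≤ B) :
    |μ| ^ n ≤ (2 * |μ| / |α| + 1) * B := by
  have hα_pos : 0 < |α| := abs_pos.2 hα0
  have hμ' : (μ : ℂ) ^ 2 + (α * E + 2 * lam : ℝ) / 2 * μ + α ^ 2 / 4 = 0 := by exact_mod_cast hμ
  have heig := congr_fun (polyTProd_zero_mulVec E b hμ' n) 1
  simp only [Matrix.mulVec, dotProduct, Fin.sum_univ_two, Matrix.cons_val_zero,
    Matrix.cons_val_one, Pi.smul_apply, smul_eq_mul] at heig
  have hle : |μ| ^ n * |α| ≤ B * (2 * |μ|) + B * |α| := by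
    calc |μ| ^ n * |α| = ‖(μ : ℂ) ^ n * α‖ := by simp
      _ ≤ _ := by
        rw [← heig]
        refine (norm_add_le _ _).trans (add_le_add ?_ ?_) <;> rw [norm_mul]
        · rw [show ‖(-2 * μ : ℂ)‖ = 2 * |μ| by simp]
          gcongr
          exact norm_polyTProd_zero_apply_le hα hB
        · rw [Complex.norm_real, Real.norm_eq_abs]
          gcongr
          exact norm_polyTProd_zero_apply_le hα hB
  refine le_of_mul_le_mul_right (hle.trans_eq ?_) hα_pos
  field_simp

theorem lyap_potV_pos (hα : |α| < 1) (hα0 : α ≠ 0) (hb : Irrational b)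
    (hτ : 2 < |α * E + 2 * lam|) : 0 < lyap (potV α lam) b E := by
  obtain ⟨μ, hμ_gt, hμ⟩ := exists_potDenMean_lt_abs_root hα hτ
  have hκ := potDenMean_pos α
  have hμ_pos := hκ.trans hμ_gt
  set δ := (Real.log |μ| - Real.log (potDenMean α)) / 4
  have hδ : 0 < δ := div_pos (sub_pos.2 (Real.log_lt_log hκ hμ_gt)) four_pos
  refine (lyap_nonneg _ _ _).lt_of_ne' fun hzero ↦ ?_
  obtain ⟨C, -, hC⟩ := exists_opNorm2_tProd_le_mul_exp b E (continuous_potV hα lam)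
    (periodic_potV α lam) hb hδ
  obtain ⟨n₀, hn₀⟩ := exists_forall_prod_potDen_mem_Icc hα hb hδ
  have hbound : ∀ n ≥ n₀, Real.exp (n * (2 * δ)) ≤ (2 * |μ| / |α| + 1) * C := by
    intro n hn
    have hpow := abs_root_pow_le hα hα0 hμ (b := b) (n := n)
      (B := Real.exp (n * (Real.log (potDenMean α) + δ)) * (C * Real.exp (n * (0 + δ)))) fun x ↦
        mul_le_mul (hn₀ n hn x).2 (by simpa only [hzero] using hC n x) (opNorm2_nonneg _)
          (Real.exp_nonneg _)
    have hsplit : |μ| ^ n = Real.exp (n * (2 * δ)) *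
        (Real.exp (n * (Real.log (potDenMean α) + δ)) * Real.exp (n * (0 + δ))) := by
      rw [← Real.exp_add, ← Real.exp_add, ← mul_add, ← mul_add,
        show 2 * δ + (Real.log (potDenMean α) + δ + (0 + δ)) = Real.log |μ| by ring,
        Real.exp_nat_mul, Real.exp_log hμ_pos]
    rw [hsplit] at hpow
    refine le_of_mul_le_mul_right (hpow.trans_eq ?_)
      (mul_pos (Real.exp_pos _) (Real.exp_pos (n * (0 + δ))))
    ring
  have htop : Tendsto (fun n : ℕ ↦ Real.exp (n * (2 * δ))) atTop atTop :=
    Real.tendsto_exp_atTop.comp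
      (tendsto_natCast_atTop_atTop.atTop_mul_const (mul_pos two_pos hδ))
  obtain ⟨n, hn, hlt⟩ := ((eventually_ge_atTop n₀).and (htop.eventually_gt_atTop _)).exists
  exact (hbound n hn).not_gt hlt

end Positivity

/-! ### Growth of the polynomial cocycle on large circles for `|αE + 2λ| < 2` -/

section Growth

attribute [local instance] Matrix.linftyOpNormedRing Matrix.linftyOpNormedAlgebra

variable {α τ : ℝ}

theorem norm_lt_potDenMean_of_root (hα : |α| < 1) (hτ : |τ| < 2) {m : ℂ}
    (hm : m ^ 2 + τ / 2 * m + α ^ 2 / 4 = 0) : ‖m‖ < potDenMean α := by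
  have hquad := potDenMean_sq_sub hα
  have hhalf := half_lt_potDenMean hα
  have hre : m.re ^ 2 - m.im ^ 2 + τ / 2 * m.re + α ^ 2 / 4 = 0 := by
    simpa [pow_two, ← Complex.ofReal_pow] using congr_arg Complex.re hm
  have him : m.im * (2 * m.re + τ / 2) = 0 := by
    have him := congr_arg Complex.im hm
    simp [pow_two] at him
    linear_combination him
  rcases mul_eq_zero.1 him with hreal | hnonreal
  · have hm_eq : m = m.re := Complex.ext rfl (by simpa using hreal)
    rw [hm_eq, Complex.norm_real, Real.norm_eq_abs]
    by_contra! hge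
    have hfactor := mul_nonneg (sub_nonneg.2 hge)
      (show 0 ≤ |m.re| - (1 - potDenMean α) by linarith)
    have habs : -(τ / 2 * m.re) < |m.re| := by
      calc -(τ / 2 * m.re) ≤ |τ / 2 * m.re| := neg_le_abs _
        _ = |τ| / 2 * |m.re| := by rw [abs_mul, abs_div, abs_two]
        _ < 1 * |m.re| := by gcongr <;> linarith
        _ = |m.re| := one_mul _
    rw [hreal] at hre
    nlinarith [sq_abs m.re]
  · refine lt_of_pow_lt_pow_left₀ 2 (potDenMean_pos α).le ?_
    rw [← Complex.normSq_eq_norm_sq, Complex.normSq_apply]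
    rw [eq_neg_of_add_eq_zero_right hnonreal] at hre
    nlinarith

theorem norm_add_inv_smul_add_inv_sq_smul_le {F : Type*} [SeminormedAddCommGroup F]
    [NormedSpace ℂ F] {ζ : ℂ} (hζ : 1 ≤ ‖ζ‖) (x y : F) :
    ‖x + ζ⁻¹ • y + ζ⁻¹ ^ 2 • x‖ ≤ ‖x‖ + (‖y‖ + ‖x‖) / ‖ζ‖ := by
  have hsq : ‖ζ‖⁻¹ ^ 2 ≤ ‖ζ‖⁻¹ :=
    pow_le_of_le_one (by positivity) (inv_le_one_of_one_le₀ hζ) two_ne_zero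
  calc _ ≤ ‖x‖ + ‖ζ‖⁻¹ * ‖y‖ + ‖ζ‖⁻¹ ^ 2 * ‖x‖ := by
        rw [← norm_inv, ← norm_pow, ← norm_smul, ← norm_smul]
        exact norm_add₃_le
    _ ≤ ‖x‖ + ‖ζ‖⁻¹ * ‖y‖ + ‖ζ‖⁻¹ * ‖x‖ := by gcongr
    _ = _ := by ring

theorem polyTMat_eq_sq_smul (α E τ : ℝ) {ζ : ℂ} (hζ : ζ ≠ 0) :
    polyTMat α E τ ζ = ζ ^ 2 • (polyTMat α E τ 0 + ζ⁻¹ • !![(E : ℂ), -1; 1, 0] +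
      ζ⁻¹ ^ 2 • polyTMat α E τ 0) := by
  ext i j
  fin_cases i <;> fin_cases j <;> simp [polyTMat] <;> field_simp <;> ring

theorem linftyOpNorm_le {M : Matrix (Fin 2) (Fin 2) ℂ} {c : ℝ}
    (hM : ∀ i, ‖M i 0‖ + ‖M i 1‖ ≤ c) : ‖M‖ ≤ c := by
  have hc : 0 ≤ c := le_trans (by positivity) (hM 0)
  lift c to NNReal using hc
  rw [Matrix.linfty_opNorm_def, NNReal.coe_le_coe, Finset.sup_le_iff]
  intro i _
  rw [Fin.sum_univ_two]
  exact_mod_cast hM i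

theorem exists_norm_conj_polyTMat_zero_le (hα : |α| < 1) (hα0 : α ≠ 0) (E : ℝ) (hτ : |τ| < 2) :
    ∃ T : Matrix (Fin 2) (Fin 2) ℂ, IsUnit T.det ∧
      ‖T⁻¹ * polyTMat α E τ 0 * T‖ ≤ potDenMean α := by
  obtain ⟨s, hs⟩ := IsAlgClosed.exists_eq_mul_self ((τ : ℂ) ^ 2 / 16 - α ^ 2 / 4)
  have hroot₁ : (-τ / 4 + s) ^ 2 + τ / 2 * (-τ / 4 + s) + (α : ℂ) ^ 2 / 4 = 0 := by
    linear_combination -hs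
  have hroot₂ : (-τ / 4 - s) ^ 2 + τ / 2 * (-τ / 4 - s) + (α : ℂ) ^ 2 / 4 = 0 := by
    linear_combination -hs
  have hlt₁ := norm_lt_potDenMean_of_root hα hτ hroot₁
  set t : ℝ := potDenMean α - ‖-τ / 4 + s‖
  have ht : 0 < t := sub_pos.2 hlt₁
  have hdet : IsUnit (!![-2 * (-τ / 4 + s), (t : ℂ); α, 0]).det := by
    rw [Matrix.det_fin_two_of, isUnit_iff_ne_zero]
    simp [hα0, ht.ne']
  have htri : polyTMat α E τ 0 * !![-2 * (-τ / 4 + s), (t : ℂ); α, 0] =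
      !![-2 * (-τ / 4 + s), (t : ℂ); α, 0] * !![-τ / 4 + s, -(t : ℂ) / 2; 0, -τ / 4 - s] := by
    ext i j
    fin_cases i <;> fin_cases j <;> simp [polyTMat, Matrix.mul_apply]
    · linear_combination 2 * hroot₁
    all_goals ring
  refine ⟨_, hdet, ?_⟩
  rw [mul_assoc, htri, Matrix.nonsing_inv_mul_cancel_left _ _ hdet]
  refine linftyOpNorm_le fun i ↦ ?_
  fin_cases i
  · have hnorm : ‖-(t : ℂ) / 2‖ = t / 2 := by simp [abs_of_pos ht]
    simp only [Fin.zero_eta, Matrix.of_apply, Matrix.cons_val', Matrix.cons_val_zero,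
      Matrix.cons_val_one, hnorm]
    linarith
  · simpa using (norm_lt_potDenMean_of_root hα hτ hroot₂).le

theorem exists_norm_conj_polyTMat_le (hα : |α| < 1) (hα0 : α ≠ 0) (E : ℝ) (hτ : |τ| < 2) {η : ℝ}
    (hη : 0 < η) : ∃ T : Matrix (Fin 2) (Fin 2) ℂ, IsUnit T.det ∧ ∃ R₀ > 1, ∀ ζ : ℂ, R₀ ≤ ‖ζ‖ →
      ‖T⁻¹ * polyTMat α E τ ζ * T‖ ≤ ‖ζ‖ ^ 2 * potDenMean α * (1 + η) := by
  obtain ⟨T, hT, hconj⟩ := exists_norm_conj_polyTMat_zero_le hα hα0 E hτ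
  have hκ := potDenMean_pos α
  set K := ‖T⁻¹ * !![(E : ℂ), -1; 1, 0] * T‖
  refine ⟨T, hT, 2 + (K + potDenMean α) / (potDenMean α * η),
    by linarith [show 0 ≤ (K + potDenMean α) / (potDenMean α * η) by positivity],
    fun ζ hζ ↦ ?_⟩
  have hquot : (K + potDenMean α) / (potDenMean α * η) ≤ ‖ζ‖ := by linarith
  have hone : 1 ≤ ‖ζ‖ :=
    le_trans (by linarith [show 0 ≤ (K + potDenMean α) / (potDenMean α * η) by positivity]) hζ
  have hζ_pos : 0 < ‖ζ‖ := one_pos.trans_le hone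
  have hsum : T⁻¹ * polyTMat α E τ ζ * T = ζ ^ 2 • (T⁻¹ * polyTMat α E τ 0 * T +
      ζ⁻¹ • (T⁻¹ * !![(E : ℂ), -1; 1, 0] * T) + ζ⁻¹ ^ 2 • (T⁻¹ * polyTMat α E τ 0 * T)) := by
    rw [polyTMat_eq_sq_smul α E τ (norm_pos_iff.1 hζ_pos)]
    simp only [Matrix.mul_smul, Matrix.smul_mul, Matrix.mul_add, Matrix.add_mul]
  rw [hsum, norm_smul, norm_pow, mul_assoc (‖ζ‖ ^ 2)]
  gcongr
  refine (norm_add_inv_smul_add_inv_sq_smul_le hone _ _).trans ?_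
  calc _ ≤ potDenMean α + (K + potDenMean α) / ‖ζ‖ := by gcongr
    _ ≤ potDenMean α + potDenMean α * η := by
        gcongr
        exact div_le_of_le_mul₀ hζ_pos.le (by positivity)
          (by rwa [div_le_iff₀' (by positivity)] at hquot)
    _ = _ := by ring

theorem norm_apply_le_linftyOpNorm (M : Matrix (Fin 2) (Fin 2) ℂ) (i j : Fin 2) :
    ‖M i j‖ ≤ ‖M‖ := by
  rw [Matrix.linfty_opNorm_def, ← coe_nnnorm, NNReal.coe_le_coe]
  exact (Finset.single_le_sum (f := fun k ↦ ‖M i k‖₊) (fun _ _ ↦ zero_le) (Finset.mem_univ j)).trans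
    (Finset.le_sup (f := fun k ↦ ∑ l, ‖M k l‖₊) (Finset.mem_univ i))

theorem exists_norm_polyTProd_le (hα : |α| < 1) (hα0 : α ≠ 0) (E b : ℝ) (hτ : |τ| < 2) {η : ℝ}
    (hη : 0 < η) : ∃ R₀ > 1, ∃ C > 0, ∀ n i j, ∀ z : ℂ, R₀ ≤ ‖z‖ →
      ‖polyTProd α E τ b n z i j‖ ≤ C * (‖z‖ ^ 2 * potDenMean α * (1 + η)) ^ n := by
  obtain ⟨T, hT, R₀, hR₀, hstep⟩ := exists_norm_conj_polyTMat_le hα hα0 E hτ hη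
  have hκ := potDenMean_pos α
  refine ⟨R₀, hR₀, ‖T‖ * ‖T⁻¹‖ + 1, by positivity, fun n i j z hz ↦ ?_⟩
  have hconj : ‖T⁻¹ * polyTProd α E τ b n z‖ ≤
      ‖T⁻¹‖ * (‖z‖ ^ 2 * potDenMean α * (1 + η)) ^ n := by
    induction n with
    | zero => simp [polyTProd]
    | succ n ih =>
      have hζ : ‖(𝐞 (n * b) : ℂ) * z‖ = ‖z‖ := by rw [norm_mul, Circle.norm_coe, one_mul]
      calc ‖T⁻¹ * polyTProd α E τ b (n + 1) z‖
          = ‖T⁻¹ * polyTMat α E τ (𝐞 (n * b) * z) * T * (T⁻¹ * polyTProd α E τ b n z)‖ := by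
            rw [mul_assoc, Matrix.mul_nonsing_inv_cancel_left _ _ hT, mul_assoc, polyTProd]
        _ ≤ ‖z‖ ^ 2 * potDenMean α * (1 + η) *
            (‖T⁻¹‖ * (‖z‖ ^ 2 * potDenMean α * (1 + η)) ^ n) := by
            refine (norm_mul_le _ _).trans (mul_le_mul ?_ ih (norm_nonneg _) (by positivity))
            simpa only [hζ] using hstep (𝐞 (n * b) * z) (hζ.symm ▸ hz)
        _ = _ := by ring
  calc ‖polyTProd α E τ b n z i j‖ ≤ ‖polyTProd α E τ b n z‖ := norm_apply_le_linftyOpNorm _ i j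
    _ = ‖T * (T⁻¹ * polyTProd α E τ b n z)‖ := by rw [Matrix.mul_nonsing_inv_cancel_left _ _ hT]
    _ ≤ ‖T‖ * (‖T⁻¹‖ * (‖z‖ ^ 2 * potDenMean α * (1 + η)) ^ n) :=
      (norm_mul_le _ _).trans (by gcongr)
    _ ≤ _ := by
      rw [← mul_assoc]
      gcongr
      linarith

end Growth

/-! ### Generalized eigenfunctions of discrete Schrödinger operators -/

/-- `u` is a generalized eigenfunction at energy `E` of the discrete Schrödinger operator with
potential `W`, normalised at the origin and of at most quadratic growth. -/
structure IsGeneralizedEigenfunction (W : ℤ → ℝ) (E : ℝ) (κ : ℕ) (u : ℤ → ℝ) : Prop where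
  apply_zero : u 0 = 1
  eigen_eq : ∀ n, u (n + 1) + u (n - 1) + W n * u n = E * u n
  abs_apply_le : ∀ n : ℤ, |u n| ≤ (κ + |(n : ℝ)|) ^ 2

/-- The restriction of the discrete Schrödinger operator with potential `W` to `[-M, M]`, with
Dirichlet boundary conditions. -/
def boxMatrix (W : ℤ → ℝ) (M : ℕ) :
    Matrix (Finset.Icc (-(M : ℤ)) M) (Finset.Icc (-(M : ℤ)) M) ℝ := fun i j ↦
  (if (j : ℤ) = i then W i else 0) + (if (j : ℤ) = (i : ℤ) + 1 then 1 else 0)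
    + (if (j : ℤ) = (i : ℤ) - 1 then 1 else 0)

section Box

variable (W : ℤ → ℝ) (M : ℕ)

theorem isHermitian_boxMatrix : (boxMatrix W M).IsHermitian := by
  ext i j
  have hdiag : (if (i : ℤ) = j then W j else 0) = if (j : ℤ) = i then W i else 0 := by
    by_cases h : (i : ℤ) = j
    · simp [h]
    · rw [if_neg h, if_neg (Ne.symm h)]
  simp only [Matrix.conjTranspose_apply, star_trivial, boxMatrix, hdiag, eq_sub_iff_add_eq,
    eq_comm (b := (j : ℤ) + 1), eq_comm (b := (i : ℤ) + 1)]
  ring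

theorem sum_ite_mul_eq_mul_extend {s : Finset ℤ} (f : s → ℝ) (m : ℤ) (w : ℝ) :
    ∑ j : s, (if (j : ℤ) = m then w else 0) * f j = w * Function.extend Subtype.val f 0 m := by
  by_cases hm : m ∈ s
  · rw [Subtype.val_injective.extend_apply f 0 ⟨m, hm⟩]
    exact (Finset.sum_eq_single_of_mem ⟨m, hm⟩ (Finset.mem_univ _) fun j _ hj ↦ by
      rw [if_neg (Subtype.coe_injective.ne hj), zero_mul]).trans (by rw [if_pos rfl])
  · rw [Function.extend_apply' _ _ _ (by simpa using hm), Pi.zero_apply, mul_zero]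
    exact Finset.sum_eq_zero fun j _ ↦ by rw [if_neg (ne_of_mem_of_not_mem j.2 hm), zero_mul]

/-- The `j`-th eigenvalue of `boxMatrix W M`. -/
noncomputable def boxEigenvalue (j : Finset.Icc (-(M : ℤ)) M) : ℝ :=
  (isHermitian_boxMatrix W M).eigenvalues j

/-- The `j`-th element of an orthonormal eigenbasis of `boxMatrix W M`, extended by zero to `ℤ`. -/
noncomputable def boxEigenfunction (j : Finset.Icc (-(M : ℤ)) M) : ℤ → ℝ :=
  Function.extend Subtype.val ((isHermitian_boxMatrix W M).eigenvectorBasis j) 0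

variable {M} {n : ℤ}

theorem boxEigenfunction_coe (j i : Finset.Icc (-(M : ℤ)) M) :
    boxEigenfunction W M j i = (isHermitian_boxMatrix W M).eigenvectorBasis j i :=
  Subtype.val_injective.extend_apply _ _ _

theorem boxEigenfunction_of_notMem (hn : n ∉ Finset.Icc (-(M : ℤ)) M)
    (j : Finset.Icc (-(M : ℤ)) M) : boxEigenfunction W M j n = 0 :=
  Function.extend_apply' _ _ _ (by rintro ⟨a, rfl⟩; exact hn a.2)

theorem boxEigenfunction_eigen_eq (hn : n ∈ Finset.Icc (-(M : ℤ)) M)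
    (j : Finset.Icc (-(M : ℤ)) M) :
    boxEigenfunction W M j (n + 1) + boxEigenfunction W M j (n - 1) + W n * boxEigenfunction W M j n
      = boxEigenvalue W M j * boxEigenfunction W M j n := by
  have heig := congrFun ((isHermitian_boxMatrix W M).mulVec_eigenvectorBasis j) ⟨n, hn⟩
  simp only [Matrix.mulVec, dotProduct, boxMatrix, add_mul, Finset.sum_add_distrib,
    sum_ite_mul_eq_mul_extend, one_mul, Pi.smul_apply, smul_eq_mul] at heig
  rw [← boxEigenfunction_coe] at heig
  change W n * boxEigenfunction W M j n + boxEigenfunction W M j (n + 1)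
    + boxEigenfunction W M j (n - 1) = boxEigenvalue W M j * boxEigenfunction W M j n at heig
  linarith

theorem sum_boxEigenfunction_mul {m : ℤ} (hn : n ∈ Finset.Icc (-(M : ℤ)) M)
    (hm : m ∈ Finset.Icc (-(M : ℤ)) M) :
    ∑ j, boxEigenfunction W M j n * boxEigenfunction W M j m = if n = m then 1 else 0 := by
  have hparseval := (isHermitian_boxMatrix W M).eigenvectorBasis.sum_inner_mul_inner
    (EuclideanSpace.single ⟨n, hn⟩ (1 : ℝ)) (EuclideanSpace.single ⟨m, hm⟩ (1 : ℝ))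
  simp only [EuclideanSpace.inner_single_left, EuclideanSpace.inner_single_right, map_one, one_mul,
    conj_trivial, ← boxEigenfunction_coe] at hparseval
  simpa [Pi.single_apply, eq_comm] using hparseval

theorem sum_boxEigenfunction_sq_le_one (n : ℤ) : ∑ j, boxEigenfunction W M j n ^ 2 ≤ 1 := by
  by_cases hn : n ∈ Finset.Icc (-(M : ℤ)) M
  · simp only [sq, sum_boxEigenfunction_mul W hn hn, if_true, le_refl]
  · simp [boxEigenfunction_of_notMem W hn]

theorem sum_boxEigenvalue_sub_mul_sq (hM : 1 ≤ M) (p e₀ : ℝ) :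
    ∑ j, (p * boxEigenvalue W M j - e₀) * boxEigenfunction W M j 0 ^ 2 = p * W 0 - e₀ := by
  have hzero : (0 : ℤ) ∈ Finset.Icc (-(M : ℤ)) M := by simp
  have hexpand (j) : (p * boxEigenvalue W M j - e₀) * boxEigenfunction W M j 0 ^ 2 =
      p * (boxEigenfunction W M j 0 * boxEigenfunction W M j 1
        + boxEigenfunction W M j 0 * boxEigenfunction W M j (-1))
      + (p * W 0 - e₀) * (boxEigenfunction W M j 0 * boxEigenfunction W M j 0) := by
    have heig := boxEigenfunction_eigen_eq W hzero j
    rw [zero_add, zero_sub] at heig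
    linear_combination (-p * boxEigenfunction W M j 0) * heig
  simp_rw [hexpand]
  rw [Finset.sum_add_distrib, ← Finset.mul_sum, ← Finset.mul_sum, Finset.sum_add_distrib,
    sum_boxEigenfunction_mul W hzero hzero,
    sum_boxEigenfunction_mul W hzero (Finset.mem_Icc.2 (by omega)),
    sum_boxEigenfunction_mul W hzero (Finset.mem_Icc.2 (by omega))]
  norm_num

theorem exists_dist_boxEigenvalue_le (j : Finset.Icc (-(M : ℤ)) M) :
    ∃ n, dist (boxEigenvalue W M j) (W n) ≤ 2 := by
  have hroot : Module.End.HasEigenvalue (Matrix.toLin' (boxMatrix W M)) (boxEigenvalue W M j) := by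
    rw [Module.End.hasEigenvalue_iff_mem_spectrum, Matrix.spectrum_toLin']
    exact (isHermitian_boxMatrix W M).eigenvalues_mem_spectrum_real j
  obtain ⟨k, hk⟩ := eigenvalue_mem_ball hroot
  have hk_self : boxMatrix W M k k = W k := by
    rw [boxMatrix, if_pos rfl, if_neg (by omega), if_neg (by omega), add_zero, add_zero]
  have hcount (m : ℤ) :
      ∑ i : Finset.Icc (-(M : ℤ)) M, (if (i : ℤ) = m then 1 else 0 : ℝ) ≤ 1 := by
    rw [Finset.sum_boole]
    refine Nat.cast_le_one.2 (Finset.card_le_one.2 fun i hi i' hi' ↦ Subtype.ext ?_)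
    rw [(Finset.mem_filter.1 hi).2, (Finset.mem_filter.1 hi').2]
  refine ⟨k, ((Metric.mem_closedBall.1 (hk_self ▸ hk)).trans ?_).trans_eq one_add_one_eq_two⟩
  calc ∑ i ∈ Finset.univ.erase k, ‖boxMatrix W M k i‖
      = ∑ i ∈ Finset.univ.erase k, ((if (i : ℤ) = (k : ℤ) + 1 then 1 else 0 : ℝ)
          + (if (i : ℤ) = (k : ℤ) - 1 then 1 else 0 : ℝ)) := by
        refine Finset.sum_congr rfl fun i hi ↦ ?_
        rw [boxMatrix, if_neg (Subtype.coe_injective.ne (Finset.ne_of_mem_erase hi)), zero_add,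
          Real.norm_of_nonneg (by positivity)]
    _ ≤ ∑ i : Finset.Icc (-(M : ℤ)) M, ((if (i : ℤ) = (k : ℤ) + 1 then 1 else 0 : ℝ)
          + (if (i : ℤ) = (k : ℤ) - 1 then 1 else 0 : ℝ)) :=
        Finset.sum_le_sum_of_subset_of_nonneg (Finset.subset_univ _) fun i _ _ ↦ by positivity
    _ ≤ 1 + 1 := Finset.sum_add_distrib.trans_le (add_le_add (hcount _) (hcount _))

theorem boxEigenvalue_mem_cthickening (j : Finset.Icc (-(M : ℤ)) M) :
    boxEigenvalue W M j ∈ Metric.cthickening 2 (Set.range W) :=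
  let ⟨n, hn⟩ := exists_dist_boxEigenvalue_le W j
  Metric.mem_cthickening_of_dist_le _ _ _ _ (Set.mem_range_self n) hn

theorem exists_nonneg_and_lt_of_mul_sum_lt {ι : Type*} [Fintype ι] {f g S : ι → ℝ} {A : ℝ}
    (hA : 0 ≤ A) (hf : ∀ j, f j ≤ A) (hg : ∀ j, 0 ≤ g j) (hS : ∀ j, 0 ≤ S j)
    (hlt : A * ∑ j, S j < ∑ j, f j * g j) : ∃ j, 0 ≤ f j ∧ S j < g j := by
  by_contra! hle
  refine hlt.not_ge ?_
  rw [Finset.mul_sum]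
  refine Finset.sum_le_sum fun j _ ↦ ?_
  obtain hj | hj := le_or_gt 0 (f j)
  · exact mul_le_mul (hf j) (hle j hj) (hg j) hA
  · exact (mul_nonpos_of_nonpos_of_nonneg hj.le (hg j)).trans (mul_nonneg hA (hS j))

variable (M) in
theorem sum_sum_boxEigenfunction_sq_div_le (k K : ℕ) :
    ∑ j, ∑ N ∈ Finset.Ioo k K, ∑ n ∈ Finset.Icc (-(N : ℤ)) N,
      boxEigenfunction W M j n ^ 2 / (N : ℝ) ^ 4 ≤ 6 / (k + 1) := by
  rw [Finset.sum_comm]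
  calc ∑ N ∈ Finset.Ioo k K, ∑ j, ∑ n ∈ Finset.Icc (-(N : ℤ)) N,
        boxEigenfunction W M j n ^ 2 / (N : ℝ) ^ 4
      ≤ ∑ N ∈ Finset.Ioo k K, 3 * ((N : ℝ) ^ 2)⁻¹ := by
        refine Finset.sum_le_sum fun N hN ↦ ?_
        have hN_pos : (1 : ℝ) ≤ N := by
          exact_mod_cast (Nat.zero_le k).trans_lt (Finset.mem_Ioo.1 hN).1
        have hcard : (((N : ℤ) + 1 - -(N : ℤ)).toNat : ℝ) = 2 * N + 1 := by
          exact_mod_cast show ((N : ℤ) + 1 - -(N : ℤ)).toNat = 2 * N + 1 by omega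
        calc ∑ j, ∑ n ∈ Finset.Icc (-(N : ℤ)) N, boxEigenfunction W M j n ^ 2 / (N : ℝ) ^ 4
            ≤ ∑ n ∈ Finset.Icc (-(N : ℤ)) N, 1 / (N : ℝ) ^ 4 := by
              rw [Finset.sum_comm]
              refine Finset.sum_le_sum fun n _ ↦ ?_
              rw [← Finset.sum_div]
              gcongr
              exact sum_boxEigenfunction_sq_le_one W n
          _ = (2 * N + 1) * (1 / (N : ℝ) ^ 4) := by
              rw [Finset.sum_const, nsmul_eq_mul, Int.card_Icc, hcard]
          _ ≤ (3 * N ^ 2) * (1 / (N : ℝ) ^ 4) := by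
              gcongr
              nlinarith
          _ = 3 * ((N : ℝ) ^ 2)⁻¹ := by field_simp
    _ ≤ 3 * (2 / (k + 1)) := by
        rw [← Finset.mul_sum]
        gcongr
        exact sum_Ioo_inv_sq_le k K
    _ = 6 / (k + 1) := by ring

theorem div_pow_four_le_sum_sum (f : ℤ → ℝ) {k K : ℕ} (hn : k + 1 + n.natAbs < K) :
    f n ^ 2 / ((k + 1 + n.natAbs : ℕ) : ℝ) ^ 4 ≤
      ∑ N ∈ Finset.Ioo k K, ∑ n ∈ Finset.Icc (-(N : ℤ)) N, f n ^ 2 / (N : ℝ) ^ 4 :=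
  (Finset.single_le_sum (f := fun m : ℤ ↦ f m ^ 2 / ((k + 1 + n.natAbs : ℕ) : ℝ) ^ 4)
    (fun m _ ↦ by positivity) (Finset.mem_Icc.2 (by omega))).trans
  (Finset.single_le_sum (f := fun N : ℕ ↦ ∑ n ∈ Finset.Icc (-(N : ℤ)) N, f n ^ 2 / (N : ℝ) ^ 4)
    (fun N _ ↦ Finset.sum_nonneg fun m _ ↦ by positivity) (Finset.mem_Ioo.2 (by omega)))

-- The weights `N⁻⁴` over `|n| ≤ N` have total mass at most `6 / (k + 1)`, so on average over the
-- eigenfunctions the weighted mass beyond `k` is small compared with the mass at the origin.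
theorem exists_box_generalizedEigenfunction (hM : 1 ≤ M) {p e₀ A : ℝ} {k : ℕ}
    (hA : ∀ E ∈ Metric.cthickening 2 (Set.range W), p * E - e₀ ≤ A) (he₀ : e₀ < p * W 0)
    (hk : A * (6 / (k + 1)) < p * W 0 - e₀) :
    ∃ E ∈ Metric.cthickening 2 (Set.range W), e₀ ≤ p * E ∧ ∃ u : ℤ → ℝ, u 0 = 1 ∧
      (∀ n ∈ Finset.Icc (-(M : ℤ)) M, u (n + 1) + u (n - 1) + W n * u n = E * u n) ∧
      ∀ n : ℤ, |u n| ≤ ((k + 1 : ℕ) + |(n : ℝ)|) ^ 2 := by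
  set S := fun j ↦ ∑ N ∈ Finset.Ioo k (k + M + 2), ∑ n ∈ Finset.Icc (-(N : ℤ)) N,
    boxEigenfunction W M j n ^ 2 / (N : ℝ) ^ 4
  have hA_pos : 0 < A := (sub_pos.2 he₀).trans_le
    (hA _ (Metric.self_subset_cthickening _ (Set.mem_range_self 0)))
  obtain ⟨j, hj, hSj⟩ := exists_nonneg_and_lt_of_mul_sum_lt (S := S) hA_pos.le
    (fun j ↦ hA _ (boxEigenvalue_mem_cthickening W j))
    (fun j ↦ sq_nonneg (boxEigenfunction W M j 0)) (fun j ↦ by positivity) (by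
      rw [sum_boxEigenvalue_sub_mul_sq W hM]
      exact (mul_le_mul_of_nonneg_left (sum_sum_boxEigenfunction_sq_div_le W M k _)
        hA_pos.le).trans_lt hk)
  have hj0 : 0 < |boxEigenfunction W M j 0| :=
    abs_pos.2 (sq_pos_iff.1 (hSj.trans_le' (by positivity)))
  refine ⟨_, boxEigenvalue_mem_cthickening W j, sub_nonneg.1 hj,
    fun n ↦ boxEigenfunction W M j n / boxEigenfunction W M j 0, div_self (abs_pos.1 hj0),
    fun n hn ↦ ?_, fun n ↦ ?_⟩ <;> beta_reduce
  · rw [← add_div, mul_div_assoc', ← add_div, boxEigenfunction_eigen_eq W hn, mul_div_assoc]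
  by_cases hn : n ∈ Finset.Icc (-(M : ℤ)) M
  swap
  · rw [boxEigenfunction_of_notMem W hn, zero_div, abs_zero]
    positivity
  rw [Finset.mem_Icc] at hn
  have hcast : ((k + 1 + n.natAbs : ℕ) : ℝ) = (k + 1 : ℕ) + |(n : ℝ)| := by
    rw [Nat.cast_add, Nat.cast_natAbs, Int.cast_abs]
  rw [abs_div, div_le_iff₀ hj0]
  refine abs_le_of_sq_le_sq ?_ (by positivity)
  rw [mul_pow, sq_abs, ← pow_mul, ← hcast, mul_comm, ← div_le_iff₀ (by positivity)]
  exact (div_pow_four_le_sum_sum _ (by omega)).trans hSj.le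

end Box

theorem exists_generalizedEigenfunction {W : ℤ → ℝ} (hW : Bornology.IsBounded (Set.range W))
    {p e₀ : ℝ} (he₀ : e₀ < p * W 0) :
    ∃ E ∈ Metric.cthickening 2 (Set.range W), e₀ ≤ p * E ∧
      ∃ κ u, IsGeneralizedEigenfunction W E κ u := by
  have hcompact : IsCompact (Metric.cthickening 2 (Set.range W)) :=
    Metric.isCompact_of_isClosed_isBounded Metric.isClosed_cthickening hW.cthickening
  obtain ⟨A, hA⟩ : ∃ A, ∀ E ∈ Metric.cthickening 2 (Set.range W), p * E - e₀ ≤ A :=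
    (hcompact.bddAbove_image (f := fun E ↦ p * E - e₀) (by fun_prop)).imp
      fun A hA E hE ↦ hA (Set.mem_image_of_mem _ hE)
  obtain ⟨k, hk⟩ := exists_nat_gt (A * 6 / (p * W 0 - e₀))
  replace hk : A * (6 / (k + 1)) < p * W 0 - e₀ := by
    rw [div_lt_iff₀' (sub_pos.2 he₀)] at hk
    rw [mul_div_assoc', div_lt_iff₀ (by positivity)]
    linarith
  set g : ℤ → ℝ := fun n ↦ ((k + 1 : ℕ) + |(n : ℝ)|) ^ 2
  let Q (M : ℕ) : Set (ℝ × (ℤ → ℝ)) := {q | (e₀ ≤ p * q.1 ∧ q.2 0 = 1 ∧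
      ∀ n ∈ Finset.Icc (-(M : ℤ)) M, q.2 (n + 1) + q.2 (n - 1) + W n * q.2 n = q.1 * q.2 n)} ∩
    (Metric.cthickening 2 (Set.range W) ×ˢ Set.pi Set.univ fun n ↦ Set.Icc (-g n) (g n))
  have hbox : IsCompact (Metric.cthickening 2 (Set.range W) ×ˢ
      Set.pi Set.univ fun n ↦ Set.Icc (-g n) (g n)) :=
    hcompact.prod (isCompact_univ_pi fun n ↦ isCompact_Icc)
  have hclosed (M) : IsClosed (Q M) := by
    refine .inter (.and (isClosed_le (by fun_prop) (by fun_prop)) (.and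
      (isClosed_eq (by fun_prop) (by fun_prop)) ?_)) hbox.isClosed
    simp only [Set.ofPred_forall]
    exact isClosed_biInter fun n _ ↦ isClosed_eq (by fun_prop) (by fun_prop)
  have hnonempty (M) : (Q M).Nonempty := by
    obtain ⟨E, hE, hpE, u, hu0, hu, hu_le⟩ :=
      exists_box_generalizedEigenfunction W (Nat.le_add_left 1 M) hA he₀ hk
    refine ⟨(E, u), ⟨hpE, hu0, fun n hn ↦ hu n ?_⟩, hE, fun n _ ↦ abs_le.1 (hu_le n)⟩
    rw [Finset.mem_Icc] at hn ⊢
    omega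
  obtain ⟨q, hq⟩ := IsCompact.nonempty_iInter_of_sequence_nonempty_isCompact_isClosed Q
    (fun M q hq ↦ ⟨⟨hq.1.1, hq.1.2.1, fun n hn ↦ hq.1.2.2 n (by
      rw [Finset.mem_Icc] at hn ⊢; omega)⟩, hq.2⟩) hnonempty
    (hbox.of_isClosed_subset (hclosed 0) Set.inter_subset_right) hclosed
  rw [Set.mem_iInter] at hq
  refine ⟨q.1, (hq 0).2.1, (hq 0).1.1, k + 1, q.2, (hq 0).1.2.1, fun n ↦ ?_, fun n ↦ ?_⟩
  · exact (hq n.natAbs).1.2.2 n (Finset.mem_Icc.2 (by omega))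
  · exact abs_le.2 ((hq 0).2.2 n (Set.mem_univ n))

/-! ### Generalized eigenvalues belong to the spectrum -/

theorem exists_forall_dist_lt_of_periodic {V : ℝ → ℝ} (hV : Continuous V)
    (hper : V.Periodic 1) {ε : ℝ} (hε : 0 < ε) : ∃ δ > 0, ∀ x y, |x - y| < δ → |V x - V y| < ε := by
  have hunif := (isCompact_Icc (a := (-1 : ℝ)) (b := 2)).uniformContinuousOn_of_continuous
    hV.continuousOn
  obtain ⟨δ, hδ, hclose⟩ := Metric.uniformContinuousOn_iff.mp hunif ε hε
  refine ⟨min δ 1, by positivity, fun x y hxy ↦ ?_⟩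
  have hfract := Int.fract_lt_one x
  have hfract_nonneg := Int.fract_nonneg x
  obtain ⟨hlo, hhi⟩ := abs_lt.mp (hxy.trans_le (min_le_right _ _))
  have hVx : V (Int.fract x) = V x := by simpa using hper.sub_int_mul_eq (x := x) ⌊x⌋
  have hVy : V (Int.fract x - (x - y)) = V y := by
    have := hper.sub_int_mul_eq (x := y) ⌊x⌋
    rw [mul_one] at this
    rw [← this, Int.fract]
    congr 1
    ring
  have := hclose (Int.fract x) ⟨by linarith, by linarith⟩ (Int.fract x - (x - y))
    ⟨by linarith, by linarith⟩ (by
      rw [Real.dist_eq, sub_sub_cancel]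
      exact hxy.trans_le (min_le_left _ _))
  rwa [Real.dist_eq, hVx, hVy] at this

theorem exists_abs_int_mul_add_int_sub_lt {b : ℝ} (hb : Irrational b) (t : ℝ) {δ : ℝ}
    (hδ : 0 < δ) : ∃ m l : ℤ, |m * b + l - t| < δ := by
  have hdense : Dense ((AddSubgroup.closure {b, 1} : AddSubgroup ℝ) : Set ℝ) := by
    rwa [dense_addSubgroupClosure_pair_iff, div_one]
  obtain ⟨y, hy, hdist⟩ := hdense.exists_dist_lt t hδ
  obtain ⟨m, l, rfl⟩ := AddSubgroup.mem_closure_pair.mp hy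
  exact ⟨m, l, by simpa [abs_sub_comm, Real.dist_eq] using hdist⟩

theorem exists_forall_abs_translate_sub_lt {V : ℝ → ℝ} (hV : Continuous V) (hper : V.Periodic 1)
    {b : ℝ} (hb : Irrational b) (x θ : ℝ) {ε : ℝ} (hε : 0 < ε) :
    ∃ m : ℤ, ∀ n : ℤ, |V ((n + m : ℤ) * b + θ) - V (x + n * b)| < ε := by
  obtain ⟨δ, hδ, hclose⟩ := exists_forall_dist_lt_of_periodic hV hper hε
  obtain ⟨m, l, hml⟩ := exists_abs_int_mul_add_int_sub_lt hb (x - θ) hδ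
  refine ⟨m, fun n ↦ ?_⟩
  have hshift : V ((n + m : ℤ) * b + θ + l) = V ((n + m : ℤ) * b + θ) := by
    simpa using hper.int_mul l ((n + m : ℤ) * b + θ)
  rw [← hshift]
  have harg : (n + m : ℤ) * b + θ + l - (x + n * b) = m * b + l - (x - θ) := by
    push_cast
    ring
  exact hclose _ _ (harg ▸ hml)

theorem exists_lp_apply_eq {f : ℤ → ℂ} {s : Finset ℤ} (hf : ∀ n ∉ s, f n = 0) (m : ℤ) :
    ∃ φ : lp (fun _ : ℤ ↦ ℂ) 2, ∀ k, φ k = f (k - m) := by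
  have hmem : Memℓp (fun k ↦ f (k - m)) 2 := by
    refine memℓp_gen (summable_of_hasFiniteSupport ((s.finite_toSet.image (· + m)).subset ?_))
    intro k hk
    refine ⟨k - m, ?_, sub_add_cancel k m⟩
    by_contra h
    simp [hf _ h] at hk
  exact ⟨⟨_, hmem⟩, fun k ↦ rfl⟩

theorem norm_sq_eq_sum_of_apply_eq {f : ℤ → ℂ} {s : Finset ℤ} (hf : ∀ n ∉ s, f n = 0) {m : ℤ}
    {φ : lp (fun _ : ℤ ↦ ℂ) 2} (hφ : ∀ k, φ k = f (k - m)) : ‖φ‖ ^ 2 = ∑ n ∈ s, ‖f n‖ ^ 2 := by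
  have hnorm := lp.norm_rpow_eq_tsum (p := 2) (by simp) φ
  simp only [ENNReal.toReal_ofNat, Real.rpow_ofNat, hφ] at hnorm
  rw [hnorm]
  refine ((Equiv.subRight m).tsum_eq fun n ↦ ‖f n‖ ^ 2).trans ?_
  exact tsum_eq_sum fun n hn ↦ by simp [hf n hn]

theorem exists_mul_norm_le_of_notMem_spectrum {𝕜 F : Type*} [NontriviallyNormedField 𝕜]
    [NormedAddCommGroup F] [NormedSpace 𝕜 F] {A : F →L[𝕜] F} {z : 𝕜} (hz : z ∉ spectrum 𝕜 A) :
    ∃ c > 0, ∀ φ, c * ‖φ‖ ≤ ‖A φ - z • φ‖ := by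
  obtain ⟨U, hU⟩ := spectrum.notMem_iff.mp hz
  obtain ⟨c, hc, hle⟩ := (antilipschitzWith_iff_exists_mul_le_norm
    (f := (ContinuousLinearEquiv.unitsEquiv 𝕜 F U))).mp ⟨_, ContinuousLinearEquiv.antilipschitz _⟩
  refine ⟨c, hc, fun φ ↦ (hle φ).trans_eq ?_⟩
  rw [ContinuousLinearEquiv.unitsEquiv_apply, hU, Algebra.algebraMap_eq_smul_one, norm_sub_rev]
  simp

/-- The squared `ℓ²` norm of `u` on the box `[-s, s]`. -/
noncomputable def boxMass (u : ℤ → ℝ) (s : ℕ) : ℝ :=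
  ∑ n ∈ Finset.Icc (-(s : ℤ)) s, u n ^ 2

section BoxMass

variable {W u : ℤ → ℝ} {E : ℝ} {κ : ℕ}

theorem sum_Icc_neg_succ (f : ℤ → ℝ) (s : ℕ) :
    ∑ n ∈ Finset.Icc (-((s + 1 : ℕ) : ℤ)) (s + 1 : ℕ), f n =
      ∑ n ∈ Finset.Icc (-(s : ℤ)) s, f n + f (s + 1) + f (-(s + 1)) := by
  rw [Nat.cast_succ, Finset.Icc_succ_succ, Finset.sum_union (by
    simp only [Finset.disjoint_insert_right, Finset.disjoint_singleton_right, Finset.mem_Icc]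
    omega), Finset.sum_pair (by omega)]
  ring

theorem boxMass_mono (u : ℤ → ℝ) : Monotone (boxMass u) :=
  monotone_nat_of_le_succ fun s ↦ by
    rw [boxMass, boxMass, sum_Icc_neg_succ]
    linarith [sq_nonneg (u (s + 1)), sq_nonneg (u (-(s + 1)))]

/-- The sequence `u` cut off to zero outside the box `[-r, r]`. -/
noncomputable def boxTruncation (u : ℤ → ℝ) (r : ℕ) : ℤ → ℝ :=
  (Finset.Icc (-(r : ℤ)) r : Set ℤ).indicator u

theorem boxTruncation_of_mem {r : ℕ} {n : ℤ} (hn : n ∈ Finset.Icc (-(r : ℤ)) r) :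
    boxTruncation u r n = u n :=
  Set.indicator_of_mem (Finset.mem_coe.mpr hn) u

theorem boxTruncation_of_notMem {r : ℕ} {n : ℤ} (hn : n ∉ Finset.Icc (-(r : ℤ)) r) :
    boxTruncation u r n = 0 :=
  Set.indicator_of_notMem (mt Finset.mem_coe.mp hn) u

/-- Cutting a solution off at distance `s + 1` spoils the eigenvalue equation only at the sites
`±(s + 1)` and `±(s + 2)`. -/
theorem sum_truncation_defect_sq
    (hu : ∀ n, u (n + 1) + u (n - 1) + W n * u n = E * u n) (s : ℕ) {t : ℤ → ℝ}
    (ht : t = boxTruncation u (s + 1)) :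
    ∑ n ∈ Finset.Icc (-((s + 2 : ℕ) : ℤ)) (s + 2 : ℕ),
      (t (n + 1) + t (n - 1) + (W n - E) * t n) ^ 2 = boxMass u (s + 2) - boxMass u s := by
  have t_eq : ∀ n, -((s : ℤ) + 1) ≤ n → n ≤ s + 1 → t n = u n := fun n h₁ h₂ ↦ by
    rw [ht, boxTruncation_of_mem (by rw [Finset.mem_Icc]; push_cast; omega)]
  have t_zero : ∀ n, n < -((s : ℤ) + 1) ∨ s + 1 < n → t n = 0 := fun n h ↦ by
    rw [ht, boxTruncation_of_notMem (by rw [Finset.mem_Icc]; push_cast; omega)]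
  have inner :
      ∑ n ∈ Finset.Icc (-(s : ℤ)) s, (t (n + 1) + t (n - 1) + (W n - E) * t n) ^ 2 = 0 := by
    refine Finset.sum_eq_zero fun n hn ↦ ?_
    rw [Finset.mem_Icc] at hn
    rw [t_eq _ (by omega) (by omega), t_eq _ (by omega) (by omega), t_eq _ (by omega) (by omega),
      sq_eq_zero_iff]
    linarith [hu n]
  have right := hu (s + 1)
  have left := hu (-(s + 1))
  have hneg : -((s : ℤ) + 1 + 1) = -(s + 1) - 1 := by ring
  rw [boxMass, boxMass, sum_Icc_neg_succ, sum_Icc_neg_succ, inner,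
    sum_Icc_neg_succ, sum_Icc_neg_succ]
  simp only [Nat.cast_succ, hneg, add_sub_cancel_right, sub_add_cancel]
  rw [t_zero (s + 1 + 1 + 1) (by omega), t_zero (s + 1 + 1) (by omega),
    t_eq (s + 1) (by omega) le_rfl, t_eq s (by omega) (by omega), t_eq (-(s + 1) + 1) (by omega)
    (by omega), t_eq (-(s + 1)) le_rfl (by omega), t_zero (-(s + 1) - 1) (by omega),
    t_zero (-(s + 1) - 1 - 1) (by omega)]
  have right' : 0 + u s + (W (s + 1) - E) * u (s + 1) = -u (s + 1 + 1) := by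
    rw [add_sub_cancel_right] at right
    linarith
  have left' : u (-(s + 1) + 1) + 0 + (W (-(s + 1)) - E) * u (-(s + 1)) = -u (-(s + 1) - 1) := by
    linarith
  rw [right', left']
  ring

theorem IsGeneralizedEigenfunction.boxMass_zero (hu : IsGeneralizedEigenfunction W E κ u) :
    boxMass u 0 = 1 := by
  simp [boxMass, hu.apply_zero]

theorem IsGeneralizedEigenfunction.boxMass_le
    (hu : IsGeneralizedEigenfunction W E κ u) (s : ℕ) :
    boxMass u s ≤ (2 * s + 1) * (κ + s) ^ 4 := by
  have hle : ∀ n ∈ Finset.Icc (-(s : ℤ)) s, u n ^ 2 ≤ (κ + s : ℝ) ^ 4 := fun n hn ↦ by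
    obtain ⟨hlo, hhi⟩ := Finset.mem_Icc.mp hn
    have hn' : |(n : ℝ)| ≤ s := abs_le.mpr ⟨mod_cast hlo, mod_cast hhi⟩
    calc u n ^ 2 = |u n| ^ 2 := (sq_abs _).symm
      _ ≤ ((κ + |(n : ℝ)|) ^ 2) ^ 2 := by gcongr; exact hu.abs_apply_le n
      _ ≤ ((κ + s) ^ 2) ^ 2 := by gcongr
      _ = (κ + s : ℝ) ^ 4 := by ring
  have hcard : (Finset.Icc (-(s : ℤ)) s).card = 2 * s + 1 := by rw [Int.card_Icc]; omega
  calc boxMass u s ≤ (Finset.Icc (-(s : ℤ)) s).card • (κ + s : ℝ) ^ 4 :=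
        Finset.sum_le_card_nsmul _ _ _ hle
    _ = (2 * s + 1) * (κ + s) ^ 4 := by rw [hcard, nsmul_eq_mul]; push_cast; ring

theorem IsGeneralizedEigenfunction.exists_boxMass_lt
    (hu : IsGeneralizedEigenfunction W E κ u) {r : ℝ} (hr : 1 < r) :
    ∃ j : ℕ, boxMass u (2 * j) < r ^ j := by
  have hlim := tendsto_pow_const_div_const_pow_of_one_lt 5 hr
  obtain ⟨j, hj, hj_one⟩ := ((hlim.eventually_lt_const
    (by positivity : 0 < 1 / (5 * ((κ : ℝ) + 2) ^ 4))).and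
      (Filter.eventually_ge_atTop 1)).exists
  have hj_one' : (1 : ℝ) ≤ j := mod_cast hj_one
  have hκ : (κ + 2 * j : ℝ) ≤ (κ + 2) * j := by nlinarith [(Nat.cast_nonneg κ : (0 : ℝ) ≤ κ)]
  rw [div_lt_div_iff₀ (by positivity) (by positivity)] at hj
  refine ⟨j, ?_⟩
  calc boxMass u (2 * j) ≤ (2 * (2 * j : ℕ) + 1) * (κ + (2 * j : ℕ)) ^ 4 := hu.boxMass_le _
    _ ≤ (5 * j) * ((κ + 2) * j) ^ 4 := by
      push_cast
      gcongr
      linarith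
    _ = j ^ 5 * (5 * ((κ : ℝ) + 2) ^ 4) := by ring
    _ < 1 * r ^ j := hj
    _ = r ^ j := one_mul _

end BoxMass

section Weyl

variable {V : ℝ → ℝ} {b θ : ℝ} {H : lp (fun _ : ℤ ↦ ℂ) 2 →L[ℂ] lp (fun _ : ℤ ↦ ℂ) 2}

theorem norm_sub_smul_sq_le (hH : IsSchrodingerOp V b θ H) {E ε : ℝ} {W t : ℤ → ℝ} {r : ℕ}
    (ht : ∀ n ∉ Finset.Icc (-(r : ℤ)) r, t n = 0) {m : ℤ} {φ : lp (fun _ : ℤ ↦ ℂ) 2}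
    (hφ : ∀ k, φ k = (t (k - m) : ℂ)) (hW : ∀ n : ℤ, |V ((n + m : ℤ) * b + θ) - W n| ≤ ε) :
    ‖H φ - (E : ℂ) • φ‖ ^ 2 ≤ 2 * (∑ n ∈ Finset.Icc (-((r + 1 : ℕ) : ℤ)) (r + 1 : ℕ),
      (t (n + 1) + t (n - 1) + (W n - E) * t n) ^ 2 + ε ^ 2 * ‖φ‖ ^ 2) := by
  obtain ⟨d, hd⟩ : ∃ d : ℤ → ℝ, ∀ n, d n = V ((n + m : ℤ) * b + θ) - W n := ⟨_, fun _ ↦ rfl⟩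
  obtain ⟨D, hD⟩ : ∃ D : ℤ → ℝ, ∀ n, D n = t (n + 1) + t (n - 1) + (W n - E) * t n :=
    ⟨_, fun _ ↦ rfl⟩
  have t_zero : ∀ n ∉ Finset.Icc (-((r + 1 : ℕ) : ℤ)) (r + 1 : ℕ), t n = 0 := fun n hn ↦
    ht n (by rw [Finset.mem_Icc] at hn ⊢; push_cast at hn; omega)
  have sum_zero : ∀ n ∉ Finset.Icc (-((r + 1 : ℕ) : ℤ)) (r + 1 : ℕ), D n + d n * t n = 0 := by
    intro n hn
    rw [hD, t_zero n hn, ht (n + 1), ht (n - 1)]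
    · ring
    all_goals rw [Finset.mem_Icc] at hn ⊢; push_cast at hn; omega
  have hHφ : ∀ k, (H φ - (E : ℂ) • φ) k = ((D (k - m) + d (k - m) * t (k - m) : ℝ) : ℂ) := by
    intro k
    have hH_apply := hH φ k
    rw [lp.coeFn_sub, lp.coeFn_smul, Pi.sub_apply, Pi.smul_apply, hH_apply, hφ, hφ, hφ, hD, hd,
      sub_add_cancel, add_sub_right_comm k 1 m, sub_right_comm k 1 m]
    push_cast
    rw [smul_eq_mul]
    ring
  rw [norm_sq_eq_sum_of_apply_eq (f := fun n ↦ ((D n + d n * t n : ℝ) : ℂ))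
      (fun n hn ↦ by rw [sum_zero n hn, Complex.ofReal_zero]) hHφ,
    norm_sq_eq_sum_of_apply_eq (f := fun n ↦ (t n : ℂ))
      (fun n hn ↦ by rw [t_zero n hn, Complex.ofReal_zero]) hφ,
    Finset.mul_sum, ← Finset.sum_add_distrib, Finset.mul_sum]
  refine Finset.sum_le_sum fun n _ ↦ ?_
  rw [← hD, Complex.norm_real, Complex.norm_real, Real.norm_eq_abs, Real.norm_eq_abs, sq_abs,
    sq_abs, ← mul_pow]
  have hdε : d n ^ 2 ≤ ε ^ 2 := by
    rw [hd]
    exact sq_le_sq.mpr ((hW n).trans (le_abs_self ε))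
  calc (D n + d n * t n) ^ 2 ≤ 2 * (D n ^ 2 + (d n * t n) ^ 2) := add_sq_le
    _ ≤ 2 * (D n ^ 2 + (ε * t n) ^ 2) := by
      rw [mul_pow, mul_pow]
      gcongr

theorem mul_boxMass_le_of_forall_mul_norm_le (hV : Continuous V) (hper : V.Periodic 1)
    (hb : Irrational b) (hH : IsSchrodingerOp V b θ H) {E x c : ℝ} {u : ℤ → ℝ}
    (hu : ∀ n : ℤ, u (n + 1) + u (n - 1) + V (x + n * b) * u n = E * u n) (hc : 0 < c)
    (hlow : ∀ φ, c * ‖φ‖ ≤ ‖H φ - (E : ℂ) • φ‖) (s : ℕ) :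
    c ^ 2 / 4 * boxMass u (s + 1) ≤ boxMass u (s + 2) - boxMass u s := by
  obtain ⟨m, hm⟩ := exists_forall_abs_translate_sub_lt hV hper hb x θ (half_pos hc)
  have truncation_zero : ∀ n ∉ Finset.Icc (-((s + 1 : ℕ) : ℤ)) (s + 1 : ℕ),
      (boxTruncation u (s + 1) n : ℂ) = 0 := fun n hn ↦ by
    rw [boxTruncation_of_notMem hn, Complex.ofReal_zero]
  obtain ⟨φ, hφ⟩ := exists_lp_apply_eq truncation_zero m
  have norm_φ : ‖φ‖ ^ 2 = boxMass u (s + 1) := by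
    rw [norm_sq_eq_sum_of_apply_eq truncation_zero hφ, boxMass]
    refine Finset.sum_congr rfl fun n hn ↦ ?_
    rw [Complex.norm_real, Real.norm_eq_abs, sq_abs, boxTruncation_of_mem hn]
  have upper := norm_sub_smul_sq_le hH (E := E) (fun n hn ↦ boxTruncation_of_notMem hn) hφ
    fun n ↦ (hm n).le
  have lower : c ^ 2 * ‖φ‖ ^ 2 ≤ ‖H φ - (E : ℂ) • φ‖ ^ 2 := by
    rw [← mul_pow]
    exact pow_le_pow_left₀ (by positivity) (hlow φ) 2
  rw [sum_truncation_defect_sq hu s rfl, norm_φ] at upper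
  rw [norm_φ] at lower
  linarith

/-- If `E` were in the resolvent set, the mass of `u` in boxes would grow exponentially. -/
theorem IsGeneralizedEigenfunction.mem_spectrum (hV : Continuous V) (hper : V.Periodic 1)
    (hb : Irrational b) (hH : IsSchrodingerOp V b θ H) {E x : ℝ} {κ : ℕ} {u : ℤ → ℝ}
    (hu : IsGeneralizedEigenfunction (fun n ↦ V (x + n * b)) E κ u) :
    (E : ℂ) ∈ spectrum ℂ H := by
  by_contra hE
  obtain ⟨c, hc, hlow⟩ := exists_mul_norm_le_of_notMem_spectrum hE
  have growth := mul_boxMass_le_of_forall_mul_norm_le hV hper hb hH hu.eigen_eq hc hlow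
  have lower : ∀ j, (1 + c ^ 2 / 4) ^ j ≤ boxMass u (2 * j) := fun j ↦ by
    induction j with
    | zero => rw [mul_zero, hu.boxMass_zero, pow_zero]
    | succ j ih =>
      have hmono := boxMass_mono u (Nat.le_succ (2 * j))
      calc (1 + c ^ 2 / 4) ^ (j + 1) = (1 + c ^ 2 / 4) * (1 + c ^ 2 / 4) ^ j := pow_succ' _ _
        _ ≤ (1 + c ^ 2 / 4) * boxMass u (2 * j) := by gcongr
        _ = boxMass u (2 * j) + c ^ 2 / 4 * boxMass u (2 * j) := by ring
        _ ≤ boxMass u (2 * j) + c ^ 2 / 4 * boxMass u (2 * j + 1) := by gcongr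
        _ ≤ boxMass u (2 * (j + 1)) := le_sub_iff_add_le'.mp (growth (2 * j))
  obtain ⟨j, hj⟩ := hu.exists_boxMass_lt (lt_add_of_pos_right 1 (by positivity : 0 < c ^ 2 / 4))
  exact (lower j).not_gt hj

end Weyl

/-! ### Small divisors -/

section SmallDivisors

open MeasureTheory Finset

theorem ae_exists_forall_mul_le_norm_sub {ι : Type*} [Countable ι] (a : ι → UnitAddCircle)
    {w : ι → ℝ} (hw : Summable w) (hw_nonneg : ∀ i, 0 ≤ w i) :
    ∀ᵐ y : UnitAddCircle, ∃ c > 0, ∀ i, c * w i ≤ ‖y - a i‖ := by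
  refine le_antisymm (ENNReal.le_of_forall_pos_le_add fun ε hε _ ↦ ?_) zero_le
  have hT : 0 ≤ ∑' i, w i := tsum_nonneg hw_nonneg
  obtain ⟨c, hc, hcT⟩ : ∃ c > 0, 2 * c * ∑' i, w i ≤ (ε : ℝ) := by
    refine ⟨ε / (2 * (∑' i, w i + 1)), by positivity, ?_⟩
    rw [mul_div_assoc', div_mul_eq_mul_div, div_le_iff₀ (by positivity)]
    nlinarith [ε.coe_nonneg]
  calc volume {y : UnitAddCircle | ¬∃ c > 0, ∀ i, c * w i ≤ ‖y - a i‖}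
      ≤ volume (⋃ i, Metric.closedBall (a i) (c * w i)) := by
        refine measure_mono fun y hy ↦ ?_
        simp only [Set.mem_ofPred_eq, not_exists, not_and, not_forall, not_le] at hy
        obtain ⟨i, hi⟩ := hy c hc
        exact Set.mem_iUnion.mpr ⟨i, by rw [mem_closedBall_iff_norm]; exact hi.le⟩
    _ ≤ ∑' i, ENNReal.ofReal (2 * c * w i) := by
        refine (measure_iUnion_le _).trans (ENNReal.tsum_le_tsum fun i ↦ ?_)
        rw [AddCircle.volume_closedBall]
        exact ENNReal.ofReal_le_ofReal ((min_le_right _ _).trans_eq (by ring))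
    _ = ENNReal.ofReal (2 * c * ∑' i, w i) := by
        rw [← tsum_mul_left, ENNReal.ofReal_tsum_of_nonneg
          (fun i ↦ mul_nonneg (by positivity) (hw_nonneg i)) (hw.mul_left _)]
    _ ≤ 0 + ε := by
        rw [zero_add, ← ENNReal.ofReal_coe_nnreal]
        exact ENNReal.ofReal_le_ofReal hcT

theorem summable_one_div_one_add_int_sq : Summable fun j : ℤ ↦ 1 / (1 + (j : ℝ) ^ 2) := by
  refine Summable.of_norm_bounded_eventually (Real.summable_one_div_int_pow.mpr one_lt_two) ?_
  filter_upwards [(Set.finite_singleton (0 : ℤ)).compl_mem_cofinite] with j hj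
  have hj : (0 : ℝ) < (j : ℝ) ^ 2 := by
    have : (j : ℝ) ≠ 0 := by exact_mod_cast hj
    positivity
  rw [Real.norm_of_nonneg (by positivity)]
  gcongr
  linarith

/-- The phase `x` is nonresonant for the frequency `b`, with constant `c`, when the points
`2 * x + j * b` approach the integers at most quadratically fast in `j`. The reflection
`x + n * b ↦ -(x + n * b)` of the circle then keeps the orbit of `x` away from itself. -/
def IsNonresonantPhase (b x c : ℝ) : Prop :=
  ∀ j : ℤ, c / (1 + (j : ℝ) ^ 2) ≤ ‖((2 * x + j * b : ℝ) : UnitAddCircle)‖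

theorem exists_isNonresonantPhase (b : ℝ) {s : Set ℝ} (hs : IsOpen s) (hne : s.Nonempty) :
    ∃ x ∈ s, ∃ c > 0, IsNonresonantPhase b x c := by
  have hopen : IsOpen ((fun x : ℝ ↦ ((2 * x : ℝ) : UnitAddCircle)) '' s) :=
    QuotientAddGroup.isOpenMap_coe.comp (Homeomorph.mulLeft₀ (2 : ℝ) two_ne_zero).isOpenMap s hs
  obtain ⟨-, ⟨x, hx, rfl⟩, c, hc, hxc⟩ := (Measure.dense_of_ae (ae_exists_forall_mul_le_norm_sub
    (fun j : ℤ ↦ ((-(j * b) : ℝ) : UnitAddCircle)) summable_one_div_one_add_int_sq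
    fun j ↦ by positivity)).inter_open_nonempty _ hopen (hne.image _)
  refine ⟨x, hx, c, hc, fun j ↦ ?_⟩
  have := hxc j
  rwa [mul_one_div, ← AddCircle.coe_sub, sub_neg_eq_add] at this

theorem four_mul_norm_le_norm_fourierChar_sub_one (y : ℝ) :
    4 * ‖(y : UnitAddCircle)‖ ≤ ‖(𝐞 y : ℂ) - 1‖ := by
  have hround : (𝐞 (y - round y) : ℂ) = 𝐞 y := by
    simpa using periodic_coe_fourierChar.sub_int_mul_eq (x := y) (round y)
  rw [UnitAddCircle.norm_eq, ← hround]
  have hhalf := abs_sub_round y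
  generalize y - round y = t at *
  have hsin := Real.mul_abs_le_abs_sin (x := π * t) (by
    rw [abs_mul, abs_of_pos Real.pi_pos]
    nlinarith [Real.pi_pos])
  rw [abs_mul, abs_of_pos Real.pi_pos] at hsin
  rw [Real.fourierChar_apply, mul_comm (Complex.ofReal _), Complex.norm_exp_I_mul_ofReal_sub_one,
    norm_mul, Real.norm_eq_abs, Real.norm_eq_abs, abs_two, mul_assoc,
    mul_div_cancel_left₀ _ two_ne_zero]
  have hcancel : 2 / π * (π * |t|) = 2 * |t| := by field_simp
  linarith

theorem norm_fourierChar_sub_fourierChar (x y : ℝ) :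
    ‖(𝐞 x : ℂ) - 𝐞 y‖ = ‖(𝐞 (x - y) : ℂ) - 1‖ := by
  have : (𝐞 x : ℂ) - 𝐞 y = 𝐞 y * (𝐞 (x - y) - 1) := by
    rw [mul_sub, ← coe_fourierChar_add]
    simp
  rw [this, norm_mul, Circle.norm_coe, one_mul]

/-- The number `q` is a good denominator for `b` when the multiples `j * b` with
`0 < |j| ≤ q / 2` stay as far from the integers as those of a fraction with denominator `q` do, up
to a factor of two. -/
def IsGoodDenominator (b : ℝ) (q : ℕ) : Prop :=
  ∀ j : ℤ, j ≠ 0 → 2 * |j| ≤ q → 1 / (2 * q) ≤ ‖((j * b : ℝ) : UnitAddCircle)‖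

theorem exists_rat_abs_sub_le_and_lt_den {b : ℝ} (hb : Irrational b) (M : ℕ) :
    ∃ r : ℚ, |b - r| ≤ 1 / (r.den : ℝ) ^ 2 ∧ M < r.den := by
  obtain ⟨ε, hfar, hε⟩ := (((hb.eventually_forall_le_dist_cast_rat_of_den_le M).filter_mono
    nhdsWithin_le_nhds).and (self_mem_nhdsWithin (s := Set.Ioi 0))).exists
  obtain ⟨n, hn⟩ := exists_nat_one_div_lt hε
  obtain ⟨r, hr, hden⟩ := Real.exists_rat_abs_sub_le_and_den_le b n.succ_pos
  have hden_pos : (1 : ℝ) ≤ r.den := by exact_mod_cast r.den_pos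
  refine ⟨r, hr.trans ?_, ?_⟩
  · have : (r.den : ℝ) ≤ n.succ := by exact_mod_cast hden
    gcongr
    nlinarith
  · by_contra! hle
    have hfar : ε ≤ |b - r| := hfar r hle
    have : 1 / ((n.succ + 1 : ℝ) * r.den) ≤ 1 / (n + 1) := by
      gcongr
      push_cast
      nlinarith [n.cast_nonneg (α := ℝ)]
    linarith

theorem one_div_den_le_norm_int_mul {r : ℚ} {j : ℤ} (hj : ¬(r.den : ℤ) ∣ j) :
    1 / (r.den : ℝ) ≤ ‖((j * r : ℝ) : UnitAddCircle)‖ := by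
  have horder : addOrderOf ((r : ℝ) : UnitAddCircle) = r.den := by
    simpa using AddCircle.addOrderOf_coe_rat (p := (1 : ℝ)) (q := r)
  have hcoe : ((j * r : ℝ) : UnitAddCircle) = j • ((r : ℝ) : UnitAddCircle) := by
    rw [← AddCircle.coe_zsmul, zsmul_eq_mul]
  have hfin : IsOfFinAddOrder ((r : ℝ) : UnitAddCircle) :=
    addOrderOf_pos_iff.mp (horder ▸ r.den_pos)
  rw [hcoe, div_le_iff₀' (by exact_mod_cast r.den_pos)]
  have hne : j • ((r : ℝ) : UnitAddCircle) ≠ 0 := by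
    rwa [Ne, ← addOrderOf_dvd_iff_zsmul_eq_zero, horder]
  refine (AddCircle.le_add_order_smul_norm_of_isOfFinAddOrder hfin.zsmul hne).trans ?_
  rw [nsmul_eq_mul]
  gcongr
  rw [← horder]
  exact Nat.le_of_dvd (addOrderOf_pos_iff.mpr hfin) (addOrderOf_dvd_of_mem_zmultiples
    (AddSubgroup.zsmul_mem_zmultiples _ j))

theorem exists_isGoodDenominator {b : ℝ} (hb : Irrational b) (M : ℕ) :
    ∃ q > M, IsGoodDenominator b q := by
  obtain ⟨r, hr, hM⟩ := exists_rat_abs_sub_le_and_lt_den hb M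
  refine ⟨r.den, hM, fun j hj hj_le ↦ ?_⟩
  have hrat := one_div_den_le_norm_int_mul (r := r) (j := j) fun hdvd ↦ by
    have := Int.le_of_dvd (abs_pos.mpr hj) ((dvd_abs _ _).mpr hdvd)
    have := r.den_pos
    omega
  have hclose : ‖((j * (b - r) : ℝ) : UnitAddCircle)‖ ≤ 1 / (2 * r.den) := by
    have hj_le : 2 * |(j : ℝ)| ≤ r.den := by exact_mod_cast hj_le
    calc ‖((j * (b - r) : ℝ) : UnitAddCircle)‖ ≤ |(j : ℝ)| * |b - r| := by
          rw [← abs_mul]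
          exact QuotientAddGroup.norm_mk_le_norm
      _ ≤ r.den / 2 * (1 / (r.den : ℝ) ^ 2) := by gcongr; linarith
      _ = 1 / (2 * r.den) := by field_simp
  have htri : ‖((j * r : ℝ) : UnitAddCircle)‖ ≤
      ‖((j * b : ℝ) : UnitAddCircle)‖ + ‖((j * (b - r) : ℝ) : UnitAddCircle)‖ := by
    rw [show (j * r : ℝ) = j * b - j * (b - r) by ring, AddCircle.coe_sub]
    exact norm_sub_le _ _
  have hhalf : 1 / (r.den : ℝ) = 1 / (2 * r.den) + 1 / (2 * r.den) := by
    field_simp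
    norm_num
  linarith

theorem log_one_add_le_two_mul_sqrt {x : ℝ} (hx : 0 ≤ x) : Real.log (1 + x) ≤ 2 * √x := by
  have hsqrt := Real.sqrt_nonneg x
  calc Real.log (1 + x) ≤ Real.log ((1 + √x) ^ 2) := by
        gcongr
        nlinarith [Real.sq_sqrt hx]
    _ = 2 * Real.log (1 + √x) := by rw [Real.log_pow, Nat.cast_ofNat]
    _ ≤ 2 * √x := by linarith [Real.log_le_sub_one_of_pos (by positivity : 0 < 1 + √x)]

theorem sum_range_one_div_sqrt_succ_le (N : ℕ) :
    ∑ n ∈ range N, 1 / √((n : ℝ) + 1) ≤ 2 * √N := by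
  induction N with
  | zero => simp
  | succ N ih =>
    have hpos : 0 < √((N : ℝ) + 1) := Real.sqrt_pos.mpr (by positivity)
    have hstep : 1 / √((N : ℝ) + 1) ≤ 2 * √((N : ℝ) + 1) - 2 * √N := by
      rw [div_le_iff₀ hpos]
      nlinarith [sq_nonneg (√((N : ℝ) + 1) - √N), Real.sq_sqrt (N.cast_nonneg (α := ℝ)),
        Real.sq_sqrt (by positivity : (0 : ℝ) ≤ N + 1)]
    rw [sum_range_succ, Nat.cast_succ]
    linarith

/-- A bound for `log (1 + ε / ‖𝐞 y - 1‖)` when `y` is at distance at least `max d (n / Q)` from the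
integers. The separated points of an orbit have distinct `n`, which makes these bounds summable. -/
noncomputable def separationWeight (ε d : ℝ) (Q n : ℕ) : ℝ :=
  if n = 0 then Real.log (1 + 1 / d) else √(ε * Q / n)

theorem separationWeight_nonneg (ε : ℝ) {d : ℝ} (hd : 0 < d) (Q n : ℕ) :
    0 ≤ separationWeight ε d Q n := by
  unfold separationWeight
  split_ifs
  · have : 0 < 1 / d := by positivity
    exact Real.log_nonneg (by linarith)
  · exact Real.sqrt_nonneg _

theorem log_one_add_div_le_separationWeight {ε d y : ℝ} (hε : ε ∈ Set.Ioc 0 1) (hd : 0 < d)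
    {Q n : ℕ} (hQ : 0 < Q) (hdy : d ≤ ‖(y : UnitAddCircle)‖)
    (hny : (n : ℝ) / Q ≤ ‖(y : UnitAddCircle)‖) :
    Real.log (1 + ε / ‖(𝐞 y : ℂ) - 1‖) ≤ separationWeight ε d Q n := by
  obtain ⟨hε, hε_le⟩ := hε
  have hlower := four_mul_norm_le_norm_fourierChar_sub_one y
  have hpos : 0 < ‖(𝐞 y : ℂ) - 1‖ := by linarith
  unfold separationWeight
  split_ifs with hn
  · have : d ≤ ‖(𝐞 y : ℂ) - 1‖ := by linarith
    gcongr
  · have : (0 : ℝ) < n := by exact_mod_cast Nat.pos_of_ne_zero hn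
    have : (0 : ℝ) < Q := by exact_mod_cast hQ
    calc Real.log (1 + ε / ‖(𝐞 y : ℂ) - 1‖) ≤ Real.log (1 + ε / (4 * (n / Q))) := by
          gcongr
          linarith
      _ ≤ 2 * √(ε / (4 * (n / Q))) := log_one_add_le_two_mul_sqrt (by positivity)
      _ = √(ε * Q / n) := by
          rw [show ε * Q / n = 2 ^ 2 * (ε / (4 * (n / Q))) by field_simp; norm_num,
            Real.sqrt_mul (by positivity), Real.sqrt_sq zero_le_two]

theorem sum_separationWeight_le {ε d : ℝ} (hε : 0 ≤ ε) {Q : ℕ} (hQ : 0 < Q) :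
    ∑ n ∈ range Q, separationWeight ε d Q n ≤ Real.log (1 + 1 / d) + 2 * √ε * Q := by
  obtain ⟨N, rfl⟩ := Nat.exists_eq_succ_of_ne_zero hQ.ne'
  have hterm : ∀ n : ℕ, separationWeight ε d (N + 1) (n + 1) =
      √(ε * (N + 1 : ℕ)) * (1 / √((n : ℝ) + 1)) := fun n ↦ by
    rw [separationWeight, if_neg n.succ_ne_zero, Real.sqrt_div (by positivity), Nat.cast_succ n,
      mul_one_div]
  rw [Nat.succ_eq_add_one, sum_range_succ', sum_congr rfl fun n _ ↦ hterm n, ← mul_sum, add_comm,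
    separationWeight, if_pos rfl]
  refine add_le_add_right ?_ _
  calc √(ε * (N + 1 : ℕ)) * ∑ n ∈ range N, 1 / √((n : ℝ) + 1)
      ≤ √(ε * (N + 1 : ℕ)) * (2 * √(N + 1 : ℕ)) := by
        gcongr
        exact (sum_range_one_div_sqrt_succ_le N).trans (by gcongr; exact N.le_succ)
    _ = 2 * √ε * (N + 1 : ℕ) := by
        rw [Real.sqrt_mul hε]
        linear_combination 2 * √ε * Real.mul_self_sqrt (N + 1).cast_nonneg

theorem injOn_floor_mul_fract {ι : Type*} {A : Set ι} {y : ι → ℝ} {Q : ℕ} (hQ : 0 < Q)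
    (hsep : A.Pairwise fun i j ↦ 1 / (Q : ℝ) ≤ ‖((y i - y j : ℝ) : UnitAddCircle)‖) :
    Set.InjOn (fun i ↦ ⌊Q * Int.fract (y i)⌋₊) A := by
  intro i hi j hj hij
  by_contra hne
  have hQ : (0 : ℝ) < Q := by exact_mod_cast hQ
  have hclose : |Q * Int.fract (y i) - Q * Int.fract (y j)| < 1 := by
    have hfloor (t : ℝ) : (⌊Q * Int.fract t⌋₊ : ℤ) = ⌊Q * Int.fract t⌋ :=
      Int.natCast_floor_eq_floor (mul_nonneg hQ.le (Int.fract_nonneg t))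
    apply Int.abs_sub_lt_one_of_floor_eq_floor
    rw [← hfloor, ← hfloor]
    exact_mod_cast hij
  have hcoe : ((y i - y j : ℝ) : UnitAddCircle) = (Int.fract (y i) - Int.fract (y j) : ℝ) := by
    rw [AddCircle.coe_sub, AddCircle.coe_sub, AddCircle.coe_fract, AddCircle.coe_fract]
  have hfar : 1 / (Q : ℝ) ≤ |Int.fract (y i) - Int.fract (y j)| :=
    (hsep hi hj hne).trans (hcoe ▸ QuotientAddGroup.norm_mk_le_norm)
  rw [← mul_sub, abs_mul, abs_of_pos hQ] at hclose
  rw [div_le_iff₀' hQ] at hfar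
  linarith

theorem sum_log_one_add_div_le {ι : Type*} (A : Finset ι) (y : ι → ℝ) {ε d : ℝ}
    (hε : ε ∈ Set.Ioc 0 1) (hd : 0 < d) {Q : ℕ} (hQ : 0 < Q)
    (hsep : (A : Set ι).Pairwise fun i j ↦
      1 / (Q : ℝ) ≤ ‖((y i - y j : ℝ) : UnitAddCircle)‖)
    (hdist : ∀ i ∈ A, d ≤ ‖(y i : UnitAddCircle)‖) :
    ∑ i ∈ A, Real.log (1 + ε / ‖(𝐞 (y i) : ℂ) - 1‖) ≤
      2 * Real.log (1 + 1 / d) + 4 * √ε * Q := by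
  have hQ_pos : (0 : ℝ) < Q := by exact_mod_cast hQ
  set q : ι → ℕ := fun i ↦ ⌊Q * Int.fract (y i)⌋₊
  have hq_lt (i : ι) : q i < Q := by
    rw [Nat.floor_lt (mul_nonneg hQ_pos.le (Int.fract_nonneg _))]
    exact mul_lt_of_lt_one_right hQ_pos (Int.fract_lt_one _)
  have hterm : ∀ i ∈ A, Real.log (1 + ε / ‖(𝐞 (y i) : ℂ) - 1‖) ≤
      separationWeight ε d Q (q i) + separationWeight ε d Q (Q - 1 - q i) := by
    intro i hi
    have hnorm : ‖(y i : UnitAddCircle)‖ = min (Int.fract (y i)) (1 - Int.fract (y i)) := by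
      rw [UnitAddCircle.norm_eq, abs_sub_round_eq_min]
    have hbound (n : ℕ) := log_one_add_div_le_separationWeight (n := n) hε hd hQ (hdist i hi)
    have hlo := separationWeight_nonneg ε hd Q (q i)
    have hhi := separationWeight_nonneg ε hd Q (Q - 1 - q i)
    rcases min_cases (Int.fract (y i)) (1 - Int.fract (y i)) with ⟨hmin, -⟩ | ⟨hmin, -⟩
    · refine (hbound (q i) ?_).trans (le_add_of_nonneg_right hhi)
      rw [hnorm, hmin, div_le_iff₀' hQ_pos]
      exact Nat.floor_le (mul_nonneg hQ_pos.le (Int.fract_nonneg _))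
    · refine (hbound (Q - 1 - q i) ?_).trans (le_add_of_nonneg_left hlo)
      have := Nat.lt_floor_add_one (Q * Int.fract (y i))
      rw [hnorm, hmin, div_le_iff₀' hQ_pos, Nat.cast_sub (Nat.le_sub_one_of_lt (hq_lt i)),
        Nat.cast_pred hQ]
      linarith
  calc ∑ i ∈ A, Real.log (1 + ε / ‖(𝐞 (y i) : ℂ) - 1‖)
      ≤ ∑ i ∈ A, (separationWeight ε d Q (q i) + separationWeight ε d Q (Q - 1 - q i)) :=
        sum_le_sum hterm
    _ = ∑ n ∈ A.image q, (separationWeight ε d Q n + separationWeight ε d Q (Q - 1 - n)) :=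
        (sum_image (f := fun n ↦ separationWeight ε d Q n + separationWeight ε d Q (Q - 1 - n))
          (injOn_floor_mul_fract hQ hsep)).symm
    _ ≤ ∑ n ∈ range Q, (separationWeight ε d Q n + separationWeight ε d Q (Q - 1 - n)) := by
        refine sum_le_sum_of_subset_of_nonneg
          (image_subset_iff.mpr fun i _ ↦ mem_range.mpr (hq_lt i)) fun n _ _ ↦ ?_
        exact add_nonneg (separationWeight_nonneg ε hd Q _) (separationWeight_nonneg ε hd Q _)
    _ = 2 * ∑ n ∈ range Q, separationWeight ε d Q n := by
        rw [sum_add_distrib, sum_range_reflect, two_mul]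
    _ ≤ 2 * Real.log (1 + 1 / d) + 4 * √ε * Q := by
        linarith [sum_separationWeight_le (d := d) hε.1.le hQ]

theorem log_norm_sub_sub_le_log_norm_sub_one {w : ℂ} (hw : w ≠ 1) {ε β : ℝ} (hwβ : w ≠ β)
    (hε : 0 < ε) (hβ : |1 - β| ≤ ε) :
    Real.log ‖w - β‖ - Real.log (1 + ε / ‖w - 1‖) ≤ Real.log ‖w - 1‖ := by
  have hpos : 0 < ‖w - 1‖ := norm_pos_iff.mpr (sub_ne_zero.mpr hw)
  have htri : ‖w - β‖ ≤ ‖w - 1‖ * (1 + ε / ‖w - 1‖) := by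
    calc ‖w - β‖ ≤ ‖w - 1‖ + ‖((1 - β : ℝ) : ℂ)‖ := by
          push_cast
          exact norm_sub_le_norm_sub_add_norm_sub w 1 β
      _ ≤ ‖w - 1‖ + ε := by
          gcongr
          rwa [Complex.norm_real]
      _ = ‖w - 1‖ * (1 + ε / ‖w - 1‖) := by field_simp
  have := Real.log_le_log (norm_pos_iff.mpr (sub_ne_zero.mpr hwβ)) htri
  rw [Real.log_mul hpos.ne' (by positivity)] at this
  linarith

theorem exists_forall_neg_le_sum_erase_log_norm_sub {b : ℝ} (hb : Irrational b) {β : ℂ}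
    (hβ : ‖β‖ < 1) {η : ℝ} (hη : 0 < η) : ∃ n₀ : ℕ, ∀ n ≥ n₀, ∀ (x : ℝ) (i₀ : ℕ),
      -(n * η) ≤ ∑ i ∈ (range n).erase i₀, Real.log ‖(𝐞 (x + i * b) : ℂ) - β‖ := by
  obtain ⟨n₀, hn₀⟩ := exists_forall_abs_sum_log_norm_sub_le hb hβ (half_pos hη)
  obtain ⟨n₁, hn₁⟩ := exists_nat_ge (2 / η * Real.log 2)
  refine ⟨max n₀ n₁, fun n hn x i₀ ↦ ?_⟩
  have hequi := (abs_le.mp (hn₀ n ((le_max_left _ _).trans hn) x)).1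
  have hlog_two : Real.log 2 ≤ n * (η / 2) := by
    have : (n₁ : ℝ) ≤ n := by exact_mod_cast (le_max_right _ _).trans hn
    rw [div_mul_eq_mul_div, div_le_iff₀ hη] at hn₁
    nlinarith
  by_cases hi₀ : i₀ ∈ range n
  · rw [← add_sum_erase _ _ hi₀] at hequi
    have : Real.log ‖(𝐞 (x + i₀ * b) : ℂ) - β‖ ≤ Real.log 2 := by
      refine Real.log_le_log (norm_coe_fourierChar_sub_pos hβ _) ((norm_sub_le _ _).trans ?_)
      rw [Circle.norm_coe]
      linarith
    linarith
  · rw [erase_eq_of_notMem hi₀]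
    linarith [Real.log_nonneg one_le_two]

/-- The logarithm of `‖𝐞 y - 1‖` is unbounded below, so equidistribution is applied to
`‖𝐞 y - β‖` with `β < 1` close to `1`; the separation of the orbit controls the error. -/
theorem exists_forall_le_prod_norm_fourierChar_sub_one {b : ℝ} (hb : Irrational b) {σ : ℝ}
    (hσ : 0 < σ) : ∃ m₀ : ℕ, ∀ m ≥ m₀, ∀ (t d : ℝ) (q i₀ : ℕ), 0 < d → 0 < q → q ≤ 8 * m →
      2 * m ≤ q → IsGoodDenominator b q →
      (∀ i ∈ (range m).erase i₀, d ≤ ‖((t + i * b : ℝ) : UnitAddCircle)‖) →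
      Real.exp (-(σ * m)) / (1 + 1 / d) ^ 2 ≤
        ∏ i ∈ (range m).erase i₀, ‖(𝐞 (t + i * b) : ℂ) - 1‖ := by
  obtain ⟨ε, hε, hεσ⟩ : ∃ ε ∈ Set.Ioc (0 : ℝ) 1, √ε ≤ σ / 128 :=
    ⟨min 1 ((σ / 128) ^ 2), ⟨by positivity, min_le_left _ _⟩,
      (Real.sqrt_le_left (by positivity)).mpr (min_le_right _ _)⟩
  have hβ : ‖((1 - ε : ℝ) : ℂ)‖ < 1 := by
    rw [Complex.norm_real, Real.norm_of_nonneg (by linarith [hε.2])]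
    linarith [hε.1]
  have hβε : |1 - (1 - ε)| ≤ ε := by rw [sub_sub_cancel, abs_of_pos hε.1]
  obtain ⟨m₀, hm₀⟩ := exists_forall_neg_le_sum_erase_log_norm_sub hb hβ (half_pos hσ)
  refine ⟨m₀, fun m hm t d q i₀ hd hq hqm hmq hgood hdist ↦ ?_⟩
  have hne_one : ∀ i ∈ (range m).erase i₀, (𝐞 (t + i * b) : ℂ) ≠ 1 := fun i hi ↦ by
    have := four_mul_norm_le_norm_fourierChar_sub_one (t + i * b)
    have := hdist i hi
    exact sub_ne_zero.mp (norm_pos_iff.mp (by linarith))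
  have hne (y : ℝ) : (𝐞 y : ℂ) ≠ ((1 - ε : ℝ) : ℂ) :=
    sub_ne_zero.mp (norm_pos_iff.mp (norm_coe_fourierChar_sub_pos hβ y))
  have hsum := sum_log_one_add_div_le ((range m).erase i₀) (fun i : ℕ ↦ t + i * b) hε hd
    (Nat.mul_pos two_pos hq) (fun i hi j hj hij ↦ by
      have hi := mem_range.mp (mem_of_mem_erase hi)
      have hj := mem_range.mp (mem_of_mem_erase hj)
      have := hgood (i - j) (by lia) (by grind)
      push_cast at this ⊢
      rwa [show t + i * b - (t + j * b) = (i - j) * b by ring]) hdist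
  have hterm := sum_le_sum fun i hi ↦
    log_norm_sub_sub_le_log_norm_sub_one (hne_one i hi) (hne _) hε.1 hβε
  rw [sum_sub_distrib] at hterm
  have herror : 4 * √ε * (2 * q : ℕ) ≤ m * (σ / 2) := by
    have hqm : (q : ℝ) ≤ 8 * m := by exact_mod_cast hqm
    calc 4 * √ε * (2 * q : ℕ) ≤ 4 * (σ / 128) * (2 * (8 * m)) := by push_cast; gcongr
      _ = m * (σ / 2) := by ring
  rw [← Real.log_le_log_iff (by positivity)
    (prod_pos fun i hi ↦ norm_pos_iff.mpr (sub_ne_zero.mpr (hne_one i hi))),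
    Real.log_div (Real.exp_ne_zero _) (by positivity), Real.log_exp, Real.log_pow,
    Real.log_prod fun i hi ↦ norm_ne_zero_iff.mpr (sub_ne_zero.mpr (hne_one i hi))]
  have := hm₀ m hm t i₀
  push_cast
  linarith

end SmallDivisors

/-! ### Restrictions to finite boxes -/

section Boxes

open Filter Matrix

theorem tProd_reflect {V : ℝ → ℝ} (hV : ∀ x, V (-x) = V x) (b : ℝ) (n : ℕ) (y : ℝ) (z : ℂ) :
    tProd V b n (-y - (n - 1) * b) z =
      !![1, 0; 0, -1] * (tProd V b n y z)ᵀ * !![1, 0; 0, -1] := by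
  have hJ : (!![1, 0; 0, -1] : Matrix (Fin 2) (Fin 2) ℂ) * !![1, 0; 0, -1] = 1 := by
    simp [Matrix.one_fin_two]
  induction n generalizing y with
  | zero => rw [tProd_zero, tProd_zero, transpose_one, mul_one, hJ]
  | succ n ih =>
    have hstep : tMat V (-y) z = !![1, 0; 0, -1] * (tMat V y z)ᵀ * !![1, 0; 0, -1] := by
      ext i j
      fin_cases i <;> fin_cases j <;> simp [tMat, hV, Matrix.vecMul, dotProduct, Matrix.mul_apply]
    have hphase : -y - ((n + 1 : ℕ) - 1) * b = -(y + b) - (n - 1) * b := by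
      push_cast
      ring
    rw [hphase, tProd_succ, show -(y + b) - (n - 1) * b + n * b = -y by ring, ih, hstep,
      tProd_succ', transpose_mul]
    simp only [Matrix.mul_assoc]
    rw [← Matrix.mul_assoc !![1, 0; 0, -1] !![1, 0; 0, -1], hJ, Matrix.one_mul]

theorem tProd_reflect_apply_zero_zero {V : ℝ → ℝ} (hV : ∀ x, V (-x) = V x) (b : ℝ) (n : ℕ)
    (y : ℝ) (z : ℂ) : tProd V b n (-y - (n - 1) * b) z 0 0 = tProd V b n y z 0 0 := by
  simp [tProd_reflect hV, Matrix.mul_apply, Fin.sum_univ_two, Matrix.vecMul, dotProduct]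

theorem tProd_mulVec_eq {V : ℝ → ℝ} {b x E : ℝ} {u : ℤ → ℝ}
    (hu : ∀ n : ℤ, u (n + 1) + u (n - 1) + V (x + n * b) * u n = E * u n) (a : ℤ) (n : ℕ) :
    tProd V b n (x + a * b) E *ᵥ ![(u a : ℂ), u (a - 1)] = ![(u (a + n) : ℂ), u (a + n - 1)] := by
  induction n with
  | zero => simp [tProd_zero]
  | succ n ih =>
    have heq : (u (a + n + 1) : ℂ) + u (a + n - 1) + V (x + (a + n) * b) * u (a + n) =
        E * u (a + n) := by exact_mod_cast hu (a + n)
    rw [tProd_succ, ← mulVec_mulVec, ih, show x + a * b + n * b = x + (a + n) * b by ring,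
      show a + ((n + 1 : ℕ) : ℤ) = a + n + 1 by push_cast; ring, add_sub_cancel_right]
    ext i
    fin_cases i
    · simp [tMat]
      linear_combination -heq
    · simp [tMat]

theorem exists_forall_mul_succ_pow_le_exp (C : ℝ) (k : ℕ) {η : ℝ} (hη : 0 < η) :
    ∃ n₀ : ℕ, ∀ n : ℕ, n₀ ≤ n → C * ((n : ℝ) + 1) ^ k ≤ Real.exp (η * n) := by
  have htendsto : Tendsto (fun n : ℕ ↦ (n : ℝ) + 1) atTop atTop :=
    tendsto_atTop_add_const_right _ _ tendsto_natCast_atTop_atTop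
  have hlittle := ((isLittleO_pow_exp_pos_mul_atTop k hη).comp_tendsto htendsto).const_mul_left C
  obtain ⟨n₀, hn₀⟩ := eventually_atTop.mp (hlittle.bound (Real.exp_pos (-η)))
  refine ⟨n₀, fun n hn ↦ (le_abs_self _).trans ((hn₀ n hn).trans_eq ?_)⟩
  rw [Function.comp_apply, Real.norm_of_nonneg (Real.exp_pos _).le, ← Real.exp_add]
  congr 1
  ring

namespace IsGeneralizedEigenfunction

variable {V : ℝ → ℝ} {b x E : ℝ} {κ : ℕ} {u : ℤ → ℝ}

/-- The two sides of the box `[-k, l)` are glued at the origin, where `u 0 = 1`. -/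
theorem tProd_apply_zero_zero (hu : IsGeneralizedEigenfunction (fun n ↦ V (x + n * b)) E κ u)
    (k l : ℕ) : tProd V b (l + k) (x - k * b) E 0 0 =
      tProd V b k (x - k * b) E 0 0 * u l - tProd V b l x E 0 1 * u (-k - 1) := by
  have hleft := tProd_mulVec_eq hu.eigen_eq (-k) k
  have hright := congrFun (tProd_mulVec_eq hu.eigen_eq 0 l) 0
  have hdet := det_tProd V b k (x - k * b) E
  have hphase : x + ((-(k : ℤ) : ℤ) : ℝ) * b = x - k * b := by push_cast; ring
  have hleft_zero := congrFun hleft 0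
  have hleft_one := congrFun hleft 1
  rw [tProd_add, sub_add_cancel]
  simp only [hphase, Int.cast_zero, zero_mul, add_zero, zero_add, zero_sub, neg_add_cancel,
    hu.apply_zero, Matrix.mulVec, dotProduct, Fin.sum_univ_two, cons_val_zero, cons_val_one,
    Complex.ofReal_one, mul_one] at hleft_zero hleft_one hright
  rw [Matrix.det_fin_two] at hdet
  rw [Matrix.mul_apply, Fin.sum_univ_two, ← hright]
  linear_combination tProd V b l x E 0 1 *
    (tProd V b k (x - k * b) E 0 0 * hleft_one - tProd V b k (x - k * b) E 1 0 * hleft_zero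
      - u (-k - 1) * hdet)

theorem exists_forall_norm_tProd_apply_le
    (hu : IsGeneralizedEigenfunction (fun n ↦ V (x + n * b)) E κ u) (hV : Continuous V)
    (hper : V.Periodic 1) (hb : Irrational b) {η : ℝ} (hη : 0 < η) :
    ∃ n₀ : ℕ, ∀ n ≥ n₀, ∀ k ≤ n, ∀ M : ℝ, (k : ℝ) ≤ M → (n : ℝ) - k ≤ M →
      ‖tProd V b n (x - k * b) E 0 0‖ ≤ Real.exp (M * lyap V b E + η * n) := by
  obtain ⟨C, hC, hupper⟩ :=
    exists_opNorm2_tProd_le_mul_exp b E hV hper hb (half_pos hη)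
  obtain ⟨n₀, hn₀⟩ :=
    exists_forall_mul_succ_pow_le_exp (2 * C * ((κ : ℝ) + 1) ^ 2) 2 (half_pos hη)
  refine ⟨n₀, fun n hn k hkn M hkM hM ↦ ?_⟩
  obtain ⟨l, rfl⟩ := Nat.exists_eq_add_of_le' hkn
  have hpoly := hn₀ _ hn
  push_cast at hM hpoly ⊢
  have hl := lyap_nonneg V b E
  have hentry (m : ℕ) (y : ℝ) (i j : Fin 2) (hmM : (m : ℝ) ≤ M) (hm : m ≤ l + k) :
      ‖tProd V b m y E i j‖ ≤ C * Real.exp (M * lyap V b E + η / 2 * (l + k)) := by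
    have hm : (m : ℝ) ≤ l + k := by exact_mod_cast hm
    refine (norm_apply_le_opNorm2 _ _ _).trans ((hupper _ _).trans ?_)
    rw [mul_add, mul_comm (m : ℝ) (η / 2)]
    gcongr
  have hu_le (m : ℤ) (hm : -(l + k + 1) ≤ m ∧ m ≤ l + k + 1) :
      ‖(u m : ℂ)‖ ≤ (((κ : ℝ) + 1) * (l + k + 1)) ^ 2 := by
    have hm : |(m : ℝ)| ≤ l + k + 1 := abs_le.mpr (by exact_mod_cast hm)
    rw [Complex.norm_real]
    refine (hu.abs_apply_le m).trans ?_
    gcongr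
    have : (0 : ℝ) ≤ κ * (l + k) := by positivity
    linarith
  rw [hu.tProd_apply_zero_zero k l]
  refine (norm_sub_le _ _).trans ?_
  rw [norm_mul, norm_mul]
  calc _ ≤ C * Real.exp (M * lyap V b E + η / 2 * (l + k)) * (((κ : ℝ) + 1) * (l + k + 1)) ^ 2 +
        C * Real.exp (M * lyap V b E + η / 2 * (l + k)) * (((κ : ℝ) + 1) * (l + k + 1)) ^ 2 := by
        gcongr
        · exact hentry k _ 0 0 hkM (by lia)
        · exact hu_le _ (by lia)
        · exact hentry l _ 0 1 (by linarith) (by lia)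
        · exact hu_le _ (by lia)
    _ = 2 * C * ((κ : ℝ) + 1) ^ 2 * (l + k + 1) ^ 2 *
          Real.exp (M * lyap V b E + η / 2 * (l + k)) := by ring
    _ ≤ Real.exp (η / 2 * (l + k)) * Real.exp (M * lyap V b E + η / 2 * (l + k)) := by gcongr
    _ = Real.exp (M * lyap V b E + η * (l + k)) := by
        rw [← Real.exp_add]
        congr 1
        ring

end IsGeneralizedEigenfunction

end Boxes

/-! ### Interpolation at unimodular nodes -/

section Interpolation

open Finset Polynomial

theorem nodal_dvd_sub_interpolate {ι K : Type*} [DecidableEq ι] [Field K] {s : Finset ι}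
    {v : ι → K} (hv : Set.InjOn v s) (F : K[X]) :
    Lagrange.nodal s v ∣ F - Lagrange.interpolate s v fun i ↦ F.eval (v i) := by
  refine Finset.prod_dvd_of_coprime (fun i hi j hj hij ↦ ?_) fun i hi ↦ ?_
  · exact isCoprime_X_sub_C_of_isUnit_sub (sub_ne_zero.mpr fun h ↦ hij (hv hi hj h)).isUnit
  · rw [dvd_iff_isRoot, IsRoot, eval_sub, Lagrange.eval_interpolate_at_node _ hv hi, sub_self]

variable {ι : Type*} {s : Finset ι} {v : ι → ℂ}

theorem norm_sub_one_le_norm_sub {z w : ℂ} (hw : ‖w‖ = 1) : ‖z‖ - 1 ≤ ‖z - w‖ :=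
  hw ▸ norm_sub_norm_le z w

theorem norm_eval_interpolate_le [DecidableEq ι] (hv_norm : ∀ i ∈ s, ‖v i‖ = 1) (y : ι → ℂ) {z : ℂ}
    (hz : 1 < ‖z‖) : ‖(Lagrange.interpolate s v y).eval z‖ ≤
      ‖(Lagrange.nodal s v).eval z‖ *
        ((∑ i ∈ s, ‖Lagrange.nodalWeight s v i‖ * ‖y i‖) / (‖z‖ - 1)) := by
  have hne : ∀ i ∈ s, z ≠ v i := by
    rintro i hi rfl
    exact hz.ne' (hv_norm i hi)
  rw [Lagrange.eval_interpolate_not_at_node _ hne, norm_mul, Finset.sum_div]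
  gcongr
  refine norm_sum_le_of_le _ fun i hi ↦ ?_
  rw [norm_mul, norm_mul, norm_inv, mul_right_comm, ← div_eq_mul_inv]
  have := norm_sub_one_le_norm_sub (z := z) (hv_norm i hi)
  gcongr

theorem norm_eval_le_of_eq_nodal_mul_add_interpolate [DecidableEq ι] {F Q : ℂ[X]} {y : ι → ℂ}
    (hF : F = Lagrange.nodal s v * Q + Lagrange.interpolate s v y)
    (hv_norm : ∀ i ∈ s, ‖v i‖ = 1) {T R A : ℝ} (hR : 1 < R)
    (hT : ∑ i ∈ s, ‖Lagrange.nodalWeight s v i‖ * ‖y i‖ ≤ T)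
    (hA : ∀ z : ℂ, ‖z‖ = R → ‖F.eval z‖ ≤ A * (R - 1) ^ #s) {z : ℂ} (hz : ‖z‖ ≤ R) :
    ‖Q.eval z‖ ≤ A + T / (R - 1) := by
  have hR' : 0 < R - 1 := sub_pos.mpr hR
  refine norm_eval_le_of_forall_norm_eq (by linarith) (fun w hw ↦ ?_) hz
  have hnodal : (R - 1) ^ #s ≤ ‖(Lagrange.nodal s v).eval w‖ := by
    rw [Lagrange.eval_nodal, norm_prod, ← prod_const]
    exact prod_le_prod (fun _ _ ↦ hR'.le) fun i hi ↦ hw ▸ norm_sub_one_le_norm_sub (hv_norm i hi)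
  have hA_nonneg : 0 ≤ A :=
    nonneg_of_mul_nonneg_left ((norm_nonneg _).trans (hA w hw)) (pow_pos hR' _)
  have heval : (Lagrange.nodal s v).eval w * Q.eval w =
      F.eval w - (Lagrange.interpolate s v y).eval w := by
    rw [hF, eval_add, eval_mul, add_sub_cancel_right]
  refine le_of_mul_le_mul_left ?_ ((pow_pos hR' _).trans_le hnodal)
  calc ‖(Lagrange.nodal s v).eval w‖ * ‖Q.eval w‖
      = ‖F.eval w - (Lagrange.interpolate s v y).eval w‖ := by rw [← norm_mul, heval]
    _ ≤ ‖F.eval w‖ + ‖(Lagrange.interpolate s v y).eval w‖ := norm_sub_le _ _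
    _ ≤ A * ‖(Lagrange.nodal s v).eval w‖ + ‖(Lagrange.nodal s v).eval w‖ * (T / (R - 1)) := by
        gcongr
        · exact (hA w hw).trans (by gcongr)
        · refine (norm_eval_interpolate_le hv_norm y (hw ▸ hR)).trans ?_
          rw [hw]
          gcongr
    _ = ‖(Lagrange.nodal s v).eval w‖ * (A + T / (R - 1)) := by ring

/-- Division by the nodal polynomial makes the growth of `F` on a large circle count only through
its excess over the degree `#s`. -/
theorem norm_eval_le_of_sum_norm_nodalWeight_le [DecidableEq ι] (hv : Set.InjOn v s)
    (hv_norm : ∀ i ∈ s, ‖v i‖ = 1) {F : ℂ[X]} {T R r A B : ℝ} (hr : 1 < r) (hrR : r ≤ R)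
    (hT : ∑ i ∈ s, ‖Lagrange.nodalWeight s v i‖ * ‖F.eval (v i)‖ ≤ T)
    (hA : ∀ z : ℂ, ‖z‖ = R → ‖F.eval z‖ ≤ A * (R - 1) ^ #s)
    (hB : ∀ z : ℂ, ‖z‖ = r → ∏ i ∈ s, ‖z - v i‖ ≤ B) {z : ℂ} (hz : ‖z‖ ≤ r) :
    ‖F.eval z‖ ≤ B * (A + T / (R - 1) + T / (r - 1)) := by
  obtain ⟨Q, hQ⟩ := nodal_dvd_sub_interpolate hv F
  have hF := eq_add_of_sub_eq hQ
  refine norm_eval_le_of_forall_norm_eq (by linarith) (fun w hw ↦ ?_) hz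
  have hT_nonneg : 0 ≤ T := (sum_nonneg fun i _ ↦ by positivity).trans hT
  have hquot := norm_eval_le_of_eq_nodal_mul_add_interpolate hF hv_norm (hr.trans_le hrR) hT hA
    (hw.trans_le hrR)
  have hinterp := norm_eval_interpolate_le hv_norm (fun i ↦ F.eval (v i)) (hw ▸ hr)
  have hr' : 0 < r - 1 := sub_pos.mpr hr
  have hB := hB w hw
  rw [← norm_prod, ← Lagrange.eval_nodal] at hB
  rw [hw] at hinterp
  calc ‖F.eval w‖
      = ‖(Lagrange.nodal s v).eval w * Q.eval w +
          (Lagrange.interpolate s v fun i ↦ F.eval (v i)).eval w‖ := by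
        rw [← eval_mul, ← eval_add, ← hF]
    _ ≤ ‖(Lagrange.nodal s v).eval w‖ * (A + T / (R - 1)) +
          ‖(Lagrange.nodal s v).eval w‖ * (T / (r - 1)) := by
        refine (norm_add_le _ _).trans (add_le_add ?_ (hinterp.trans (by gcongr)))
        rw [norm_mul]
        gcongr
    _ = ‖(Lagrange.nodal s v).eval w‖ * (A + T / (R - 1) + T / (r - 1)) := by ring
    _ ≤ B * (A + T / (R - 1) + T / (r - 1)) := by
        have := (norm_nonneg _).trans hquot
        gcongr

theorem norm_nodalWeight [DecidableEq ι] (s : Finset ι) (v : ι → ℂ) (i : ι) :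
    ‖Lagrange.nodalWeight s v i‖ = (∏ j ∈ s.erase i, ‖v i - v j‖)⁻¹ := by
  simp only [Lagrange.nodalWeight, norm_prod, norm_inv, prod_inv_distrib]

theorem injOn_of_forall_prod_erase_norm_sub_pos [DecidableEq ι]
    (h : ∀ i ∈ s, 0 < ∏ j ∈ s.erase i, ‖v i - v j‖) : Set.InjOn v s := by
  intro i hi j hj hij
  by_contra hne
  have hzero : ‖v i - v j‖ = 0 := by rw [hij, sub_self, norm_zero]
  exact (h i hi).ne' (prod_eq_zero (mem_erase.mpr ⟨Ne.symm hne, hj⟩) hzero)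

end Interpolation

/-! ### Interpolation phases -/

section InterpolationPhases

open Finset

/-- The phases at which the entry of the polynomial cocycle over a box of length `n` is
interpolated: the base points `x - (k + i)b` of boxes `[-(k + i), n - (k + i))` and their images
under the reflection `y ↦ -y - (n - 1)b`, which preserves that entry. -/
noncomputable def interpolationPhase (x b : ℝ) (n k : ℕ) : Bool × ℕ → ℝ
  | (true, i) => x - (k + i : ℕ) * b
  | (false, i) => -(x - (k + i : ℕ) * b) - (n - 1) * b

theorem prod_erase_univ_product_bool {ι M : Type*} [DecidableEq ι] [CommMonoid M] (s : Finset ι)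
    (c : Bool) (i : ι) (g : Bool × ι → M) :
    ∏ p ∈ (univ ×ˢ s).erase (c, i), g p =
      (∏ j ∈ s.erase i, g (c, j)) * ∏ j ∈ s, g (!c, j) := by
  have hunion : (univ ×ˢ s).erase (c, i) = {c} ×ˢ s.erase i ∪ {!c} ×ˢ s := by
    ext ⟨d, j⟩
    cases c <;> cases d <;> simp
  rw [hunion, prod_union (disjoint_product.mpr (Or.inl (by simp))), prod_product, prod_product,
    prod_singleton, prod_singleton]

theorem norm_fourierChar_interpolationPhase_sub_same (x b : ℝ) (n k : ℕ) (c : Bool) (i j : ℕ) :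
    ‖(𝐞 (interpolationPhase x b n k (c, i)) : ℂ) - 𝐞 (interpolationPhase x b n k (c, j))‖ =
      ‖(𝐞 (-(i * b) + j * b) : ℂ) - 1‖ := by
  cases c
  on_goal 1 => rw [norm_sub_rev]
  all_goals
    rw [norm_fourierChar_sub_fourierChar]
    congr 4
    simp only [interpolationPhase]
    push_cast
    ring

theorem norm_fourierChar_interpolationPhase_sub_not (x b : ℝ) (n k : ℕ) (c : Bool) (i j : ℕ) :
    ‖(𝐞 (interpolationPhase x b n k (c, i)) : ℂ) - 𝐞 (interpolationPhase x b n k (!c, j))‖ =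
      ‖(𝐞 ((-2 * x + (2 * k + i - n + 1) * b) + j * b) : ℂ) - 1‖ := by
  cases c
  on_goal 2 => rw [norm_sub_rev]
  all_goals
    rw [norm_fourierChar_sub_fourierChar]
    congr 4
    simp only [interpolationPhase, Bool.not_false, Bool.not_true]
    push_cast
    ring

theorem exists_forall_le_prod_erase_norm_interpolationPhase_sub {b : ℝ} (hb : Irrational b) {σ : ℝ}
    (hσ : 0 < σ) : ∃ m₀ : ℕ, ∀ m ≥ m₀, ∀ (x c : ℝ) (q n k : ℕ), 0 < c →
      IsNonresonantPhase b x c → 0 < q → q ≤ 8 * m → 2 * m ≤ q → IsGoodDenominator b q →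
      k + m ≤ n → ∀ p ∈ univ ×ˢ range m,
      Real.exp (-(2 * σ * m)) / ((1 + 2 * q) ^ 2 * (1 + (1 + n ^ 2) / c) ^ 2) ≤
        ∏ p' ∈ (univ ×ˢ range m).erase p,
          ‖(𝐞 (interpolationPhase x b n k p) : ℂ) - 𝐞 (interpolationPhase x b n k p')‖ := by
  obtain ⟨m₀, hm₀⟩ := exists_forall_le_prod_norm_fourierChar_sub_one hb hσ
  refine ⟨m₀, fun m hm x c q n k hc hx hq hqm hmq hgood hkn ↦ ?_⟩
  rintro ⟨side, i⟩ hp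
  have hi : i < m := by simpa using hp
  have hsame := hm₀ m hm (-(i * b)) (1 / (2 * q)) q i (by positivity) hq hqm hmq hgood
    fun j hj ↦ by
      have hjm := mem_range.mp (mem_of_mem_erase hj)
      have := hgood (j - i) (by have := ne_of_mem_erase hj; lia) (by grind)
      rwa [show -(i * b) + j * b = ((j - i : ℤ) : ℝ) * b by push_cast; ring]
  have hcross := hm₀ m hm (-2 * x + (2 * k + i - n + 1) * b) (c / (1 + n ^ 2)) q m (by positivity)
    hq hqm hmq hgood fun j hj ↦ by
      have hjm := mem_range.mp (mem_of_mem_erase hj)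
      have habs : |(n - 1 - 2 * k - i - j : ℤ)| ≤ n := by grind
      have hsq : ((n - 1 - 2 * k - i - j : ℤ) : ℝ) ^ 2 ≤ (n : ℝ) ^ 2 :=
        sq_le_sq.mpr (by rw [Nat.abs_cast]; exact_mod_cast habs)
      refine le_trans (by gcongr) ((hx (n - 1 - 2 * k - i - j)).trans_eq ?_)
      rw [← norm_neg, ← AddCircle.coe_neg]
      congr 2
      push_cast
      ring
  rw [one_div_one_div] at hsame
  rw [one_div_div, erase_eq_of_notMem notMem_range_self] at hcross
  rw [prod_erase_univ_product_bool]
  simp only [norm_fourierChar_interpolationPhase_sub_same,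
    norm_fourierChar_interpolationPhase_sub_not]
  calc Real.exp (-(2 * σ * m)) / ((1 + 2 * q) ^ 2 * (1 + (1 + n ^ 2) / c) ^ 2)
      = Real.exp (-(σ * m)) / (1 + 2 * q) ^ 2 *
          (Real.exp (-(σ * m)) / (1 + (1 + n ^ 2) / c) ^ 2) := by
        rw [div_mul_div_comm, ← Real.exp_add]
        ring_nf
    _ ≤ _ := by gcongr

theorem norm_fourierChar_neg_sub_ofReal (y r : ℝ) : ‖(𝐞 (-y) : ℂ) - r‖ = ‖(𝐞 y : ℂ) - r‖ := by
  rw [AddChar.map_neg_eq_inv, Circle.coe_inv_eq_conj, ← Complex.conj_ofReal r, ← map_sub,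
    Complex.norm_conj, Complex.conj_ofReal]

theorem norm_ofReal_mul_fourierChar_sub {r : ℝ} (hr : 0 < r) (w y : ℝ) :
    ‖(r : ℂ) * 𝐞 w - 𝐞 y‖ = r * ‖(𝐞 (w - y) : ℂ) - (r⁻¹ : ℝ)‖ := by
  have hr' : (r : ℂ) ≠ 0 := by exact_mod_cast hr.ne'
  have hfactor : (r : ℂ) * 𝐞 w - 𝐞 y = 𝐞 y * (r * (𝐞 (w - y) - (r⁻¹ : ℝ))) := by
    rw [← add_sub_cancel y w, coe_fourierChar_add, add_sub_cancel_left]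
    push_cast
    field_simp
  rw [hfactor, norm_mul, norm_mul, Circle.norm_coe, Complex.norm_of_nonneg hr.le, one_mul]

theorem exists_forall_prod_norm_fourierChar_sub_inv_le {b : ℝ} (hb : Irrational b) {r η : ℝ}
    (hr : 1 < r) (hη : 0 < η) : ∃ m₀ : ℕ, ∀ m ≥ m₀, ∀ t : ℝ,
      ∏ i ∈ range m, (r * ‖(𝐞 (t + i * b) : ℂ) - (r⁻¹ : ℝ)‖) ≤ Real.exp (m * (Real.log r + η)) := by
  have hr₀ : 0 < r := one_pos.trans hr
  have hβ : ‖((r⁻¹ : ℝ) : ℂ)‖ < 1 := by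
    rw [Complex.norm_of_nonneg (by positivity)]
    exact inv_lt_one_of_one_lt₀ hr
  obtain ⟨m₀, hm₀⟩ := exists_forall_abs_sum_log_norm_sub_le hb hβ hη
  refine ⟨m₀, fun m hm t ↦ ?_⟩
  have hpos (i : ℕ) := norm_coe_fourierChar_sub_pos hβ (t + i * b)
  rw [← Real.log_le_iff_le_exp (prod_pos fun i _ ↦ mul_pos hr₀ (hpos i)),
    Real.log_prod fun i _ ↦ (mul_pos hr₀ (hpos i)).ne']
  simp only [Real.log_mul hr₀.ne' (hpos _).ne']
  rw [sum_add_distrib, sum_const, card_range, nsmul_eq_mul, mul_add]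
  exact add_le_add_right (le_of_abs_le (hm₀ m hm t)) _

theorem exists_forall_prod_norm_sub_interpolationPhase_le {b : ℝ} (hb : Irrational b) {r η : ℝ}
    (hr : 1 < r) (hη : 0 < η) : ∃ m₀ : ℕ, ∀ m ≥ m₀, ∀ (x : ℝ) (n k : ℕ) (z : ℂ), ‖z‖ = r →
      ∏ p ∈ univ ×ˢ range m, ‖z - 𝐞 (interpolationPhase x b n k p)‖ ≤
        Real.exp (2 * m * (Real.log r + η)) := by
  obtain ⟨m₀, hm₀⟩ := exists_forall_prod_norm_fourierChar_sub_inv_le hb hr hη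
  refine ⟨m₀, fun m hm x n k z hz ↦ ?_⟩
  have hr₀ : 0 < r := one_pos.trans hr
  have hr' : (r : ℂ) ≠ 0 := by exact_mod_cast hr₀.ne'
  obtain ⟨w, hw⟩ := exists_coe_fourierChar_eq (z := z / r) (by
    rw [norm_div, hz, Complex.norm_of_nonneg hr₀.le, div_self hr₀.ne'])
  obtain rfl : z = r * 𝐞 w := by rw [hw, mul_div_cancel₀ _ hr']
  have hdirect (i : ℕ) : ‖(r : ℂ) * 𝐞 w - 𝐞 (interpolationPhase x b n k (true, i))‖ =
      r * ‖(𝐞 ((w - x + k * b) + i * b) : ℂ) - (r⁻¹ : ℝ)‖ := by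
    rw [norm_ofReal_mul_fourierChar_sub hr₀]
    congr 5
    simp only [interpolationPhase]
    push_cast
    ring
  have hreflected (i : ℕ) : ‖(r : ℂ) * 𝐞 w - 𝐞 (interpolationPhase x b n k (false, i))‖ =
      r * ‖(𝐞 ((-w - x + (k - n + 1) * b) + i * b) : ℂ) - (r⁻¹ : ℝ)‖ := by
    rw [norm_ofReal_mul_fourierChar_sub hr₀, ← norm_fourierChar_neg_sub_ofReal]
    congr 5
    simp only [interpolationPhase]
    push_cast
    ring
  rw [prod_product, Fintype.prod_bool]
  simp only [hdirect, hreflected]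
  calc _ ≤ Real.exp (m * (Real.log r + η)) * Real.exp (m * (Real.log r + η)) :=
        mul_le_mul (hm₀ m hm _) (hm₀ m hm _) (prod_nonneg fun _ _ ↦ by positivity) (by positivity)
    _ = Real.exp (2 * m * (Real.log r + η)) := by
        rw [← Real.exp_add]
        ring_nf

end InterpolationPhases

/-! ### Zero Lyapunov exponent -/

section ZeroLyapunov

open Finset

theorem exists_forall_exp_le_prod_erase_norm_interpolationPhase_sub {b x c η : ℝ}
    (hb : Irrational b) (hc : 0 < c) (hx : IsNonresonantPhase b x c) (hη : 0 < η) :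
    ∃ n₀ : ℕ, ∀ n ≥ n₀, ∀ q k m : ℕ, 2 * n ≤ q → q ≤ 2 * n + 5 → IsGoodDenominator b q →
      4 * k ≤ n → 2 * k + m = n → ∀ p ∈ univ ×ˢ range m, Real.exp (-(η * n)) ≤
        ∏ p' ∈ (univ ×ˢ range m).erase p,
          ‖(𝐞 (interpolationPhase x b n k p) : ℂ) - 𝐞 (interpolationPhase x b n k p')‖ := by
  obtain ⟨m₀, hm₀⟩ :=
    exists_forall_le_prod_erase_norm_interpolationPhase_sub hb (σ := η / 4) (by positivity)
  obtain ⟨n₁, hn₁⟩ := exists_forall_mul_succ_pow_le_exp (121 * (1 + 1 / c) ^ 2) 6 (half_pos hη)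
  refine ⟨2 * m₀ + n₁ + 16, fun n hn q k m hnq hqn hgood hkn hkm p hp ↦ ?_⟩
  refine le_trans ?_ (hm₀ m (by lia) x c q n k hc hx (by lia) (by lia) (by lia) hgood (by lia) p hp)
  have hmn : (m : ℝ) ≤ n := by exact_mod_cast (by lia : m ≤ n)
  have hq : 1 + 2 * (q : ℝ) ≤ 11 * (n + 1) := by exact_mod_cast (by lia : 1 + 2 * q ≤ 11 * (n + 1))
  have hres : 1 + (1 + (n : ℝ) ^ 2) / c ≤ (1 + 1 / c) * (n + 1) ^ 2 := by
    have : (0 : ℝ) ≤ n := n.cast_nonneg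
    calc 1 + (1 + (n : ℝ) ^ 2) / c ≤ (n + 1) ^ 2 + (n + 1) ^ 2 / c := by
          gcongr <;> nlinarith
      _ = (1 + 1 / c) * (n + 1) ^ 2 := by ring
  rw [le_div_iff₀ (by positivity)]
  calc Real.exp (-(η * n)) * ((1 + 2 * q) ^ 2 * (1 + (1 + n ^ 2) / c) ^ 2)
      ≤ Real.exp (-(η * n)) * ((11 * (n + 1)) ^ 2 * ((1 + 1 / c) * (n + 1) ^ 2) ^ 2) := by gcongr
    _ = Real.exp (-(η * n)) * (121 * (1 + 1 / c) ^ 2 * (n + 1) ^ 6) := by ring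
    _ ≤ Real.exp (-(η * n)) * Real.exp (η / 2 * n) := by
        gcongr
        exact hn₁ n (by lia)
    _ = Real.exp (-(2 * (η / 4) * n)) := by
        rw [← Real.exp_add]
        ring_nf
    _ ≤ Real.exp (-(2 * (η / 4) * m)) := by gcongr

theorem IsGeneralizedEigenfunction.exists_forall_norm_polyTProd_interpolationPhase_le
    {α lam b x E η : ℝ} {κ : ℕ} {u : ℤ → ℝ} (hα : |α| < 1) (hb : Irrational b)
    (hu : IsGeneralizedEigenfunction (fun n ↦ potV α lam (x + n * b)) E κ u) (hη : 0 < η) :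
    ∃ n₀ : ℕ, ∀ n ≥ n₀, ∀ (δ : ℝ) (k m : ℕ), δ * n ≤ k → 2 * k + m = n →
      ∀ p ∈ univ ×ˢ range m,
      ‖polyTProd α E (α * E + 2 * lam) b n (𝐞 (interpolationPhase x b n k p)) 0 0‖ ≤
        Real.exp (n * (Real.log (potDenMean α) + (1 - δ) * lyap (potV α lam) b E + η)) := by
  obtain ⟨n₁, hn₁⟩ := hu.exists_forall_norm_tProd_apply_le (continuous_potV hα lam)
    (periodic_potV α lam) hb (half_pos hη)
  obtain ⟨n₂, hn₂⟩ := exists_forall_prod_potDen_mem_Icc hα hb (half_pos hη)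
  refine ⟨n₁ + n₂, fun n hn δ k m hk hkm ↦ ?_⟩
  rintro ⟨side, i⟩ hp
  have hi : i + 1 ≤ m := by simpa using hp
  have hi' : (i : ℝ) + 1 ≤ m := by exact_mod_cast hi
  have hkm' : 2 * (k : ℝ) + m = n := by exact_mod_cast hkm
  have hbox := hn₁ n (by lia) (k + i) (by lia) ((1 - δ) * n) (by push_cast; linarith)
    (by push_cast; linarith [(Nat.cast_nonneg i : (0 : ℝ) ≤ i)])
  have hentry : ‖tProd (potV α lam) b n (interpolationPhase x b n k (side, i)) E 0 0‖ ≤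
      Real.exp ((1 - δ) * n * lyap (potV α lam) b E + η / 2 * n) := by
    cases side
    · rwa [interpolationPhase, tProd_reflect_apply_zero_zero (potV_neg α lam)]
    · exact hbox
  rw [norm_polyTProd_coe_fourierChar_apply hα]
  refine (mul_le_mul (hn₂ n (by lia) _).2 hentry (norm_nonneg _) (Real.exp_nonneg _)).trans_eq ?_
  rw [← Real.exp_add]
  ring_nf

theorem IsGeneralizedEigenfunction.exists_forall_sum_norm_nodalWeight_mul_le
    {α lam b x c E η : ℝ} {κ : ℕ} {u : ℤ → ℝ} (hα : |α| < 1) (hb : Irrational b)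
    (hu : IsGeneralizedEigenfunction (fun n ↦ potV α lam (x + n * b)) E κ u)
    (hc : 0 < c) (hx : IsNonresonantPhase b x c) (hη : 0 < η) :
    ∃ n₀ : ℕ, ∀ n ≥ n₀, ∀ q : ℕ, 2 * n ≤ q → q ≤ 2 * n + 5 → IsGoodDenominator b q →
      ∀ (δ : ℝ) (k m : ℕ), δ * n ≤ k → 4 * k ≤ n → 2 * k + m = n →
      ∑ p ∈ univ ×ˢ range m,
          ‖Lagrange.nodalWeight (univ ×ˢ range m)
              (fun p ↦ (𝐞 (interpolationPhase x b n k p) : ℂ)) p‖ *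
            ‖polyTProd α E (α * E + 2 * lam) b n (𝐞 (interpolationPhase x b n k p)) 0 0‖ ≤
        Real.exp (n * (Real.log (potDenMean α) + (1 - δ) * lyap (potV α lam) b E + 3 * η)) := by
  obtain ⟨n₁, hn₁⟩ := exists_forall_exp_le_prod_erase_norm_interpolationPhase_sub hb hc hx hη
  obtain ⟨n₂, hn₂⟩ := hu.exists_forall_norm_polyTProd_interpolationPhase_le hα hb hη
  obtain ⟨n₃, hn₃⟩ := exists_forall_mul_succ_pow_le_exp 2 1 hη
  refine ⟨n₁ + n₂ + n₃, fun n hn q hnq hqn hgood δ k m hδk hkn hkm ↦ ?_⟩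
  have hweight : ∀ p ∈ univ ×ˢ range m, ‖Lagrange.nodalWeight (univ ×ˢ range m)
      (fun p ↦ (𝐞 (interpolationPhase x b n k p) : ℂ)) p‖ ≤ Real.exp (η * n) := fun p hp ↦ by
    rw [norm_nodalWeight, ← neg_neg (η * n), Real.exp_neg]
    exact inv_anti₀ (Real.exp_pos _) (hn₁ n (by lia) q k m hnq hqn hgood hkn hkm p hp)
  set nodes := (univ : Finset Bool) ×ˢ range m with hnodes
  have hcard : (#nodes : ℝ) ≤ Real.exp (η * n) := by
    refine le_trans ?_ (hn₃ n (by lia))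
    have : #nodes = 2 * m := by simp [hnodes]
    rw [pow_one]
    exact_mod_cast (by lia : #nodes ≤ 2 * (n + 1))
  set G := Real.log (potDenMean α) + (1 - δ) * lyap (potV α lam) b E
  calc _ ≤ ∑ _p ∈ nodes, Real.exp (η * n) * Real.exp (n * (G + η)) :=
        sum_le_sum fun p hp ↦ mul_le_mul (hweight p hp) (hn₂ n (by lia) δ k m hδk hkm p hp)
          (norm_nonneg _) (Real.exp_nonneg _)
    _ = #nodes * (Real.exp (η * n) * Real.exp (n * (G + η))) := by rw [sum_const, nsmul_eq_mul]
    _ ≤ Real.exp (η * n) * (Real.exp (η * n) * Real.exp (n * (G + η))) := by gcongr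
    _ = Real.exp (n * (G + 3 * η)) := by
        rw [← Real.exp_add, ← Real.exp_add]
        ring_nf

theorem sq_mul_mul_one_add_le_exp_mul_sq {R κ η : ℝ} (hκ : 0 < κ) (hη : 0 < η)
    (hR : 2 + 2 / η ≤ R) :
    R ^ 2 * κ * (1 + η) ≤ Real.exp (Real.log κ + 2 * η) * (R - 1) ^ 2 := by
  have hη_inv : 0 < 2 / η := by positivity
  have hratio : R ≤ Real.exp (η / 2) * (R - 1) := by
    have : 1 ≤ η / 2 * (R - 1) := by
      rw [← div_le_iff₀' (by positivity), one_div_div]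
      linarith
    nlinarith [Real.add_one_le_exp (η / 2)]
  calc R ^ 2 * κ * (1 + η) ≤ (Real.exp (η / 2) * (R - 1)) ^ 2 * κ * Real.exp η := by
        gcongr
        · linarith
        · linarith [Real.add_one_le_exp η]
    _ = Real.exp (Real.log κ + 2 * η) * (R - 1) ^ 2 := by
        rw [Real.exp_add, Real.exp_log hκ, mul_pow, ← Real.exp_nat_mul,
          show 2 * η = (2 : ℕ) * (η / 2) + η by push_cast; ring, Real.exp_add]
        ring

theorem pow_mul_le_pow_mul_exp {a δ η : ℝ} {d k n : ℕ} (ha : 1 ≤ a) (hδ : d * δ * Real.log a ≤ η)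
    (hk : k ≤ δ * n + 1) : a ^ (d * k) ≤ a ^ d * Real.exp (n * η) := by
  have ha_pos : 0 < a := by linarith
  rw [← Real.exp_log (pow_pos ha_pos (d * k)), ← Real.exp_log (pow_pos ha_pos d), ← Real.exp_add,
    Real.log_pow, Real.log_pow]
  gcongr
  calc ((d * k : ℕ) : ℝ) * Real.log a = d * k * Real.log a := by push_cast; ring
    _ ≤ d * (δ * n + 1) * Real.log a := by
        have := Real.log_nonneg ha
        gcongr
    _ = d * Real.log a + n * (d * δ * Real.log a) := by ring
    _ ≤ d * Real.log a + n * η := by gcongr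

/-- There are `2m = 2n - 4k` nodes for a polynomial of degree about `2n`, so the `n`-step growth
`R ^ (2n)` exceeds `(R - 1) ^ (2m)` only by a factor `R ^ (4k)`, which is harmless for small `δ`. -/
theorem exists_norm_polyTProd_le_mul_pow {α τ E b ε : ℝ} (hα : |α| < 1) (hα0 : α ≠ 0)
    (hτ : |τ| < 2) (hε : 0 < ε) :
    ∃ R ≥ 2, ∃ δ ∈ Set.Ioc (0 : ℝ) (1 / 8), ∃ C > 0, ∀ n k m : ℕ, k ≤ δ * n + 1 →
      2 * k + m = n → ∀ z : ℂ, ‖z‖ = R → ‖polyTProd α E τ b n z 0 0‖ ≤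
        C * Real.exp (n * (Real.log (potDenMean α) + ε)) * (R - 1) ^ (2 * m) := by
  obtain ⟨η, hη, rfl⟩ : ∃ η > 0, ε = 3 * η := ⟨ε / 3, by positivity, by ring⟩
  obtain ⟨R₀, -, C, hC, hgrowth⟩ := exists_norm_polyTProd_le hα hα0 E b hτ hη
  have hκ := potDenMean_pos α
  obtain ⟨R, hR⟩ : ∃ R, R = max R₀ (2 + 2 / η) := ⟨_, rfl⟩
  have hR_ge : 2 + 2 / η ≤ R := hR ▸ le_max_right _ _
  have hη_inv : 0 < 2 / η := by positivity
  have hR_pos : 0 < R - 1 := by linarith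
  have hlog : 0 ≤ Real.log (R - 1) := Real.log_nonneg (by linarith)
  obtain ⟨δ, hδ_def⟩ : ∃ δ, δ = min (1 / 8) (η / (4 * (Real.log (R - 1) + 1))) := ⟨_, rfl⟩
  have hδ_pos : 0 < δ := by rw [hδ_def]; positivity
  have hδ : (4 : ℕ) * δ * Real.log (R - 1) ≤ η := by
    have : δ ≤ η / (4 * (Real.log (R - 1) + 1)) := hδ_def ▸ min_le_right _ _
    rw [le_div_iff₀ (by positivity)] at this
    push_cast
    linarith
  refine ⟨R, by linarith, δ, ⟨hδ_pos, hδ_def ▸ min_le_left _ _⟩, C * (R - 1) ^ 4, by positivity,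
    fun n k m hk hkm z hz ↦ ?_⟩
  calc ‖polyTProd α E τ b n z 0 0‖
      ≤ C * (R ^ 2 * potDenMean α * (1 + η)) ^ n := hz ▸ hgrowth n 0 0 z (hz ▸ hR ▸ le_max_left _ _)
    _ ≤ C * (Real.exp (Real.log (potDenMean α) + 2 * η) * (R - 1) ^ 2) ^ n := by
        have := sq_mul_mul_one_add_le_exp_mul_sq hκ hη hR_ge
        gcongr
    _ = C * Real.exp (n * (Real.log (potDenMean α) + 2 * η)) *
          ((R - 1) ^ (4 * k) * (R - 1) ^ (2 * m)) := by
        rw [mul_pow, ← Real.exp_nat_mul, ← pow_mul, ← pow_add, mul_assoc]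
        congr 3
        lia
    _ ≤ C * Real.exp (n * (Real.log (potDenMean α) + 2 * η)) *
          ((R - 1) ^ 4 * Real.exp (n * η) * (R - 1) ^ (2 * m)) := by
        gcongr
        exact pow_mul_le_pow_mul_exp (by linarith) hδ hk
    _ = C * (R - 1) ^ 4 * Real.exp (n * (Real.log (potDenMean α) + 3 * η)) * (R - 1) ^ (2 * m) := by
        rw [show n * (Real.log (potDenMean α) + 3 * η) =
          n * (Real.log (potDenMean α) + 2 * η) + n * η by ring, Real.exp_add]
        ring

theorem exists_ceil_decomposition {δ : ℝ} {n : ℕ} (hδ : 0 < δ) (hδ_le : δ ≤ 1 / 8) (hn : 16 ≤ n) :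
    ∃ k m : ℕ, δ * n ≤ k ∧ k ≤ δ * n + 1 ∧ 4 * k ≤ n ∧ 2 * k + m = n := by
  have hn' : (16 : ℝ) ≤ n := by exact_mod_cast hn
  have hceil : (⌈δ * n⌉₊ : ℝ) ≤ δ * n + 1 := (Nat.ceil_lt_add_one (by positivity)).le
  have hle : 4 * ⌈δ * n⌉₊ ≤ n := by
    have : 4 * (⌈δ * n⌉₊ : ℝ) ≤ n := by nlinarith
    exact_mod_cast this
  exact ⟨⌈δ * n⌉₊, n - 2 * ⌈δ * n⌉₊, Nat.le_ceil _, hceil, hle, by lia⟩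

theorem IsGeneralizedEigenfunction.exists_forall_norm_polyTProd_le_exp
    {α lam b x c E : ℝ} {κ : ℕ} {u : ℤ → ℝ} (hα : |α| < 1) (hb : Irrational b)
    (hu : IsGeneralizedEigenfunction (fun n ↦ potV α lam (x + n * b)) E κ u)
    (hc : 0 < c) (hx : IsNonresonantPhase b x c) {R δ C G η : ℝ} (hR : 2 ≤ R)
    (hδ : δ ∈ Set.Ioc 0 (1 / 8)) (hC : 0 < C) (hη : 0 < η)
    (hG : (1 - δ) * lyap (potV α lam) b E ≤ G)
    (houter : ∀ n k m : ℕ, k ≤ δ * n + 1 → 2 * k + m = n → ∀ z : ℂ, ‖z‖ = R →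
      ‖polyTProd α E (α * E + 2 * lam) b n z 0 0‖ ≤
        C * Real.exp (n * (Real.log (potDenMean α) + G)) * (R - 1) ^ (2 * m)) :
    ∃ C' > 0, ∃ n₀ : ℕ, ∀ n ≥ n₀, ∀ q : ℕ, 2 * n ≤ q → q ≤ 2 * n + 5 →
      IsGoodDenominator b q → ∀ y : ℝ, ‖polyTProd α E (α * E + 2 * lam) b n (𝐞 y) 0 0‖ ≤
        C' * Real.exp (n * (Real.log (potDenMean α) + G + 7 * η)) := by
  obtain ⟨r, hr, hrR, hlog⟩ : ∃ r, 1 < r ∧ r ≤ R ∧ Real.log r ≤ η := by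
    have hr : 1 < min R (Real.exp η) := lt_min (by linarith) (Real.one_lt_exp_iff.2 hη)
    exact ⟨_, hr, min_le_left _ _,
      (Real.log_le_log (by linarith) (min_le_right _ _)).trans_eq (Real.log_exp η)⟩
  obtain ⟨n₁, hsep⟩ := exists_forall_exp_le_prod_erase_norm_interpolationPhase_sub hb hc hx hη
  obtain ⟨n₂, hsum⟩ := hu.exists_forall_sum_norm_nodalWeight_mul_le hα hb hc hx hη
  obtain ⟨m₀, hinner⟩ := exists_forall_prod_norm_sub_interpolationPhase_le hb hr hη
  have hR_pos : 0 < R - 1 := by linarith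
  have : 0 < r - 1 := by linarith
  refine ⟨C + 1 / (R - 1) + 1 / (r - 1), by positivity, n₁ + n₂ + 2 * m₀ + 16,
    fun n hn q hnq hqn hgood y ↦ ?_⟩
  obtain ⟨k, m, hδk, hkδ, h4k, hkm⟩ := exists_ceil_decomposition hδ.1 hδ.2 (by lia : 16 ≤ n)
  obtain ⟨P, hP⟩ := exists_polynomial_eval_eq_polyTProd α E (α * E + 2 * lam) b n
  have hcard : #((univ : Finset Bool) ×ˢ range m) = 2 * m := by simp
  have hmn : (m : ℝ) ≤ n := by exact_mod_cast (by lia : m ≤ n)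
  set g := Real.log (potDenMean α)
  have hT_le : Real.exp (n * (g + (1 - δ) * lyap (potV α lam) b E + 3 * η)) ≤
      Real.exp (n * (g + G + 3 * η)) := by gcongr
  have hA_le : Real.exp (n * (g + G)) ≤ Real.exp (n * (g + G + 3 * η)) :=
    Real.exp_le_exp.2 (mul_le_mul_of_nonneg_left (by linarith) n.cast_nonneg)
  set M := Real.exp (n * (g + G + 3 * η))
  rw [← hP]
  calc ‖(P 0 0).eval (𝐞 y : ℂ)‖
      ≤ Real.exp (n * (4 * η)) * (C * M + M / (R - 1) + M / (r - 1)) :=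
        norm_eval_le_of_sum_norm_nodalWeight_le
          (injOn_of_forall_prod_erase_norm_sub_pos fun p hp ↦
            (Real.exp_pos _).trans_le (hsep n (by lia) q k m hnq hqn hgood h4k hkm p hp))
          (fun p _ ↦ Circle.norm_coe _) hr hrR
          (by
            simp only [hP]
            exact (hsum n (by lia) q hnq hqn hgood δ k m hδk h4k hkm).trans hT_le)
          (fun z hz ↦ by
            rw [hP, hcard]
            refine (houter n k m hkδ hkm z hz).trans ?_
            gcongr)
          (fun z hz ↦ (hinner m (by lia) x n k z hz).trans <| by
            rw [Real.exp_le_exp]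
            have := Real.log_nonneg hr.le
            calc 2 * m * (Real.log r + η) ≤ 2 * n * (η + η) := by gcongr
              _ = n * (4 * η) := by ring)
          ((Circle.norm_coe _).trans_le hr.le)
    _ = (C + 1 / (R - 1) + 1 / (r - 1)) * Real.exp (n * (g + G + 7 * η)) := by
        rw [show n * (g + G + 7 * η) = n * (4 * η) + n * (g + G + 3 * η) by ring, Real.exp_add]
        ring

theorem IsGeneralizedEigenfunction.exists_forall_norm_tProd_apply_zero_zero_le
    {α lam b x c E : ℝ} {κ : ℕ} {u : ℤ → ℝ} (hα : |α| < 1) (hα0 : α ≠ 0) (hb : Irrational b)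
    (hτ : |α * E + 2 * lam| < 2)
    (hu : IsGeneralizedEigenfunction (fun n ↦ potV α lam (x + n * b)) E κ u)
    (hc : 0 < c) (hx : IsNonresonantPhase b x c) (hL : 0 < lyap (potV α lam) b E) :
    ∃ γ ∈ Set.Ioc 0 (lyap (potV α lam) b E), ∃ C > 0, ∃ n₀ : ℕ, ∀ n ≥ n₀, ∀ q : ℕ, 2 * n ≤ q →
      q ≤ 2 * n + 5 → IsGoodDenominator b q → ∀ y : ℝ, ‖tProd (potV α lam) b n y E 0 0‖ ≤
        C * Real.exp (n * (lyap (potV α lam) b E - γ)) := by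
  set L := lyap (potV α lam) b E
  obtain ⟨R, hR, δ, hδ, C, hC, houter⟩ :=
    exists_norm_polyTProd_le_mul_pow (E := E) (b := b) hα hα0 hτ (ε := L / 4) (by positivity)
  have hδL : δ * L ≤ 1 / 8 * L := by gcongr; exact hδ.2
  obtain ⟨η, hη, hηL⟩ : ∃ η > 0, δ * L = 16 * η :=
    ⟨δ * L / 16, by have := hδ.1; positivity, by ring⟩
  obtain ⟨C', hC', n₁, hn₁⟩ := hu.exists_forall_norm_polyTProd_le_exp (G := (1 - δ) * L) hα hb hc
    hx hR hδ hC hη le_rfl fun n k m hk hkm z hz ↦ (houter n k m hk hkm z hz).trans <| by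
      have : 0 < R - 1 := by linarith
      gcongr
      linarith
  obtain ⟨n₂, hn₂⟩ := exists_forall_prod_potDen_mem_Icc hα hb hη
  refine ⟨8 * η, ⟨by positivity, by linarith⟩, C', hC', n₁ + n₂, fun n hn q hnq hqn hgood y ↦ ?_⟩
  have hden := (hn₂ n (by lia) y).1
  refine le_of_mul_le_mul_left ?_ ((Real.exp_pos _).trans_le hden)
  calc _ = ‖polyTProd α E (α * E + 2 * lam) b n (𝐞 y) 0 0‖ :=
        (norm_polyTProd_coe_fourierChar_apply hα E lam b y n 0 0).symm
    _ ≤ C' * Real.exp (n * (Real.log (potDenMean α) + (1 - δ) * L + 7 * η)) :=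
        hn₁ n (by lia) q hnq hqn hgood y
    _ = Real.exp (n * (Real.log (potDenMean α) - η)) * (C' * Real.exp (n * (L - 8 * η))) := by
        rw [mul_left_comm, ← Real.exp_add, ← mul_add]
        congr 3
        linear_combination -hηL
    _ ≤ _ := by gcongr

theorem tProd_succ_apply_one (V : ℝ → ℝ) (b : ℝ) (n : ℕ) (x : ℝ) (z : ℂ) (j : Fin 2) :
    tProd V b (n + 1) x z 1 j = tProd V b n x z 0 j := by
  rw [tProd_succ]
  simp [tMat, Matrix.mul_apply, Fin.sum_univ_two]

theorem tProd_succ_apply_zero_one (V : ℝ → ℝ) (b : ℝ) (n : ℕ) (x : ℝ) (z : ℂ) :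
    tProd V b (n + 1) x z 0 1 = -tProd V b n (x + b) z 0 0 := by
  rw [tProd_succ']
  simp [tMat, Matrix.mul_apply, Fin.sum_univ_two]

theorem opNorm2_tProd_add_two_le (V : ℝ → ℝ) (b : ℝ) (n : ℕ) (x : ℝ) (z : ℂ) :
    opNorm2 (tProd V b (n + 2) x z) ≤
      ‖tProd V b (n + 2) x z 0 0‖ + ‖tProd V b (n + 1) (x + b) z 0 0‖ +
        (‖tProd V b (n + 1) x z 0 0‖ + ‖tProd V b n (x + b) z 0 0‖) := by
  refine (opNorm2_le_sum_norm _).trans_eq ?_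
  rw [Fin.sum_univ_two, Fin.sum_univ_two, Fin.sum_univ_two, tProd_succ_apply_one,
    tProd_succ_apply_one, tProd_succ_apply_zero_one, tProd_succ_apply_zero_one, norm_neg, norm_neg]

theorem IsGeneralizedEigenfunction.lyap_potV_eq_zero
    {α lam b x c E : ℝ} {κ : ℕ} {u : ℤ → ℝ} (hα : |α| < 1) (hα0 : α ≠ 0) (hb : Irrational b)
    (hτ : |α * E + 2 * lam| < 2)
    (hu : IsGeneralizedEigenfunction (fun n ↦ potV α lam (x + n * b)) E κ u)
    (hc : 0 < c) (hx : IsNonresonantPhase b x c) : lyap (potV α lam) b E = 0 := by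
  by_contra hne
  set L := lyap (potV α lam) b E
  have hL : 0 < L := (lyap_nonneg _ _ _).lt_of_ne' hne
  obtain ⟨γ, ⟨hγ, hγL⟩, C, hC, n₁, hbound⟩ :=
    hu.exists_forall_norm_tProd_apply_zero_zero_le hα hα0 hb hτ hc hx hL
  obtain ⟨n₂, hn₂⟩ := exists_nat_gt (4 * C / γ)
  obtain ⟨q, hq, hgood⟩ := exists_isGoodDenominator hb (2 * (n₁ + n₂) + 10)
  obtain ⟨N, hNq, hqN⟩ : ∃ N, 2 * (N + 2) ≤ q ∧ q ≤ 2 * (N + 2) + 1 :=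
    ⟨q / 2 - 2, by lia, by lia⟩
  have hentry (n : ℕ) (hn : N ≤ n) (hn' : n ≤ N + 2) (y : ℝ) :
      ‖tProd (potV α lam) b n y E 0 0‖ ≤ C * Real.exp ((N + 2 : ℕ) * (L - γ)) := by
    refine (hbound n (by lia) q (by lia) (by lia) hgood y).trans ?_
    gcongr
  obtain ⟨y, hy⟩ :=
    exists_exp_mul_lyap_le_opNorm2_tProd b (N + 2) (E : ℂ) (continuous_potV hα lam)
  have hexp : Real.exp ((N + 2 : ℕ) * γ) ≤ 4 * C := by
    refine le_of_mul_le_mul_right ?_ (Real.exp_pos ((N + 2 : ℕ) * (L - γ)))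
    calc _ = Real.exp ((N + 2 : ℕ) * L) := by rw [← Real.exp_add]; ring_nf
      _ ≤ _ := hy.trans (opNorm2_tProd_add_two_le _ _ _ _ _)
      _ ≤ 4 * C * Real.exp ((N + 2 : ℕ) * (L - γ)) := by
          linarith [hentry (N + 2) (by lia) le_rfl y, hentry (N + 1) (by lia) (by lia) (y + b),
            hentry (N + 1) (by lia) (by lia) y, hentry N le_rfl (by lia) (y + b)]
  rw [div_lt_iff₀ hγ] at hn₂
  have : n₂ * γ ≤ (N + 2 : ℕ) * γ := by
    gcongr
    lia
  linarith [Real.add_one_le_exp ((N + 2 : ℕ) * γ)]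

end ZeroLyapunov

/-! ### Coexistence -/

section Coexistence

variable {α lam b θ : ℝ} {H : lp (fun _ : ℤ ↦ ℂ) 2 →L[ℂ] lp (fun _ : ℤ ↦ ℂ) 2}

theorem exists_abs_eq_one_mul_eq_abs (a : ℝ) : ∃ s : ℝ, |s| = 1 ∧ s * a = |a| := by
  rcases abs_choice a with h | h
  · exact ⟨1, abs_one, by rw [one_mul, h]⟩
  · exact ⟨-1, by rw [abs_neg, abs_one], by rw [neg_one_mul, h]⟩

theorem exists_potDen_eq_one_add {a : ℝ} (ha : |a| = |α|) : ∃ x, potDen α x = 1 + a := by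
  rcases abs_eq_abs.1 ha with rfl | rfl
  · refine ⟨1 / 2, ?_⟩
    rw [potDen, mul_right_comm, mul_one_div_cancel two_ne_zero, one_mul, Real.cos_pi]
    ring
  · exact ⟨0, by simp [potDen, sub_eq_add_neg]⟩

theorem isBounded_range_potV (hα : |α| < 1) (lam b x : ℝ) :
    Bornology.IsBounded (Set.range fun n : ℤ ↦ potV α lam (x + n * b)) := by
  obtain ⟨C, hC⟩ := exists_forall_abs_le_of_periodic (continuous_potV hα lam)
    (periodic_potV α lam)
  exact isBounded_iff_forall_norm_le.2 ⟨C, Set.forall_mem_range.2 fun n ↦ hC _⟩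

theorem exists_mem_spectrum_lyap_pos (hα : |α| < 1) (hα0 : α ≠ 0) (hb : Irrational b)
    (hlam : 1 - |α| < |lam|) (hH : IsSchrodingerOp (potV α lam) b θ H) :
    ∃ E : ℝ, (E : ℂ) ∈ spectrum ℂ H ∧ 0 < lyap (potV α lam) b E := by
  obtain ⟨s, hs, hs_lam⟩ := exists_abs_eq_one_mul_eq_abs lam
  obtain ⟨x, hx⟩ := exists_potDen_eq_one_add (α := α) (a := -|α|) (by rw [abs_neg, abs_abs])
  have hgap : 2 - 2 * |lam| < s * α * potV α lam x := by
    have hval : s * (α * potV α lam x + 2 * lam) = 2 * |lam| / (1 - |α|) := by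
      rw [mul_potV_add hα, hx, ← hs_lam, ← sub_eq_add_neg]
      ring
    have : 2 < 2 * |lam| / (1 - |α|) := by
      rw [lt_div_iff₀ (by linarith)]
      linarith
    linarith
  obtain ⟨e₀, he₀, he₀'⟩ := exists_between hgap
  obtain ⟨E, -, hE, κ, u, hu⟩ := exists_generalizedEigenfunction
    (isBounded_range_potV hα lam b x) (p := s * α) (e₀ := e₀) (by simpa using he₀')
  refine ⟨E, hu.mem_spectrum (continuous_potV hα lam) (periodic_potV α lam) hb hH,
    lyap_potV_pos hα hα0 hb ?_⟩
  calc 2 < s * (α * E + 2 * lam) := by linarith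
    _ ≤ |s * (α * E + 2 * lam)| := le_abs_self _
    _ = |α * E + 2 * lam| := by rw [abs_mul, hs, one_mul]

theorem exists_mem_spectrum_lyap_eq_zero (hα : |α| < 1) (hα0 : α ≠ 0) (hb : Irrational b)
    (hlam : |lam| < 1 + |α|) (hH : IsSchrodingerOp (potV α lam) b θ H) :
    ∃ E : ℝ, (E : ℂ) ∈ spectrum ℂ H ∧ lyap (potV α lam) b E = 0 := by
  obtain ⟨s, hs, hs_lam⟩ := exists_abs_eq_one_mul_eq_abs lam
  obtain ⟨x₀, hx₀⟩ := exists_potDen_eq_one_add (abs_abs α)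
  obtain ⟨x, hx, c, hc, hres⟩ := exists_isNonresonantPhase b
    (isOpen_lt continuous_const (continuous_potDen α)) ⟨x₀, hlam.trans_eq hx₀.symm⟩
  have hval (y : ℝ) : s * (α * potV α lam y + 2 * lam) = 2 * |lam| / potDen α y := by
    rw [mul_potV_add hα, ← hs_lam]
    ring
  have hgap : 2 * |lam| - 2 < -(s * α) * potV α lam x := by
    have : 2 * |lam| / potDen α x < 2 := by
      rw [div_lt_iff₀ (potDen_pos hα x)]
      exact mul_lt_mul_of_pos_left hx two_pos
    linarith [hval x]
  obtain ⟨e₀, he₀, he₀'⟩ := exists_between hgap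
  obtain ⟨E, hE_mem, hE, κ, u, hu⟩ := exists_generalizedEigenfunction
    (isBounded_range_potV hα lam b x) (p := -(s * α)) (e₀ := e₀) (by simpa using he₀')
  refine ⟨E, hu.mem_spectrum (continuous_potV hα lam) (periodic_potV α lam) hb hH,
    hu.lyap_potV_eq_zero hα hα0 hb ?_ hc hres⟩
  have hlower : -2 < s * (α * E + 2 * lam) := by
    obtain ⟨ε, hε, hε_lt⟩ : ∃ ε > 2, ε < 2 / |α| :=
      exists_between (by rw [lt_div_iff₀ (abs_pos.2 hα0)]; linarith)
    obtain ⟨-, ⟨n, rfl⟩, hn⟩ := Metric.mem_thickening_iff.1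
      (Metric.cthickening_subset_thickening' (by linarith) hε _ hE_mem)
    set W := potV α lam (x + n * b)
    have hpert : -2 < s * α * (E - W) := by
      refine (neg_lt_neg ?_).trans_le (neg_abs_le _)
      rw [lt_div_iff₀' (abs_pos.2 hα0)] at hε_lt
      calc |s * α * (E - W)| = |α| * dist E W := by rw [abs_mul, abs_mul, hs, one_mul, Real.dist_eq]
        _ ≤ |α| * ε := by gcongr
        _ < 2 := hε_lt
    have hnonneg : 0 ≤ s * (α * W + 2 * lam) :=
      hval (x + n * b) ▸ div_nonneg (by positivity) (potDen_pos hα _).le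
    linarith
  rw [← one_mul |_|, ← hs, ← abs_mul]
  exact abs_lt.2 ⟨hlower, by linarith⟩

end Coexistence

/-- if `1 - |α| < |λ| < 1 + |α|`, then for every `θ` there are energies
`E₁, E₂` in the spectrum of `H_{α,θ,b}` with `L(E₁) > 0` and `L(E₂) = 0`. -/
theorem coexistence_of_zero_and_positive_lyapunov (α lam b θ : ℝ)
    (hα : α ∈ Set.Ioo (-1 : ℝ) 1) (hb : Irrational b)
    (h1 : 1 - |α| < |lam|) (h2 : |lam| < 1 + |α|)
    (H : lp (fun _ : ℤ => ℂ) 2 →L[ℂ] lp (fun _ : ℤ => ℂ) 2)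
    (hH : IsSchrodingerOp (potV α lam) b θ H) :
    ∃ E₁ E₂ : ℝ, (E₁ : ℂ) ∈ spectrum ℂ H ∧ (E₂ : ℂ) ∈ spectrum ℂ H ∧
      0 < lyap (potV α lam) b (E₁ : ℂ) ∧ lyap (potV α lam) b (E₂ : ℂ) = 0 := by
  have hα1 : |α| < 1 := abs_lt.2 hα
  have hα0 : α ≠ 0 := by
    rintro rfl
    rw [abs_zero] at h1 h2
    linarith
  obtain ⟨E₁, hE₁, hpos⟩ := exists_mem_spectrum_lyap_pos hα1 hα0 hb h1 hH
  obtain ⟨E₂, hE₂, hzero⟩ := exists_mem_spectrum_lyap_eq_zero hα1 hα0 hb h2 hH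
  exact ⟨E₁, E₂, hE₁, hE₂, hpos, hzero⟩
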